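/- arXiv:1207.1582 — 4 statements merged into one kernel-verified Lean document; each statement's English description precedes it below -/
import Mathlib

section
/- Let N ≥ 1 be an integer, c > −1, and α a real number with 1 + 2α(1+c)N > 0. Then ∫_{ℝ^N} exp(−α(∑_{i=1}^N λ_i)² − (1/(2(1+c)))∑_{i=1}^N λ_i²) ∏_{1≤i<j≤N} |λ_j − λ_i| dλ_1⋯dλ_N = N! (2π)^{N/2} (∏_{k=1}^N Γ(k/2)/Γ(1/2)) (1+c)^{N(N+1)/4} / √(1 + 2α(1+c)N). -/
open MeasureTheory Finset Real

/-!
By homogeneity and by the substitution `x ↦ x + κ (∑ x) 𝟙`, which does not change the differences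
`x j - x i`, everything reduces to Mehta's integral of `|det V x| ^ (2 γ) * exp (-∑ x i ^ 2 / 2)`.

Let `Z m` be that integral over the chamber `x 0 < ⋯ < x (m - 1)`. A recursion for `Z` comes from
integrating one density `det V x * det V a * ∏ |x i - a j| ^ (γ - 1) * exp (-∑ x i ^ 2 / 2)` over
all interlacing pairs `x 0 < a 0 < x 1 < ⋯ < a (m - 1) < x m` in two orders.

* For fixed `x`, take as coordinates the residues of `t * ∏ (X - a j) / ∏ (X - x i)`, where `t > 0`
  is one additional variable. They fill the open orthant and their sum is `t`, so the integral over
  `a` becomes a product of Gamma integrals (Dixon–Anderson).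
* For fixed `a`, take as coordinates the constant term and the residues of
  `∏ (X - x i) / ∏ (X - a j)`, the entries of an arrow matrix with eigenvalues `x i`. The sum
  `∑ x i ^ 2` is the squared Frobenius norm of this matrix, so the integral over `x` becomes a
  Gaussian integral times Gamma integrals.

Both Jacobians are quotients of Vandermonde determinants, and comparing the results gives
`Γ(γ) ^ (m + 1) * Z (m + 1) = √(2 π) * Γ((m + 1) γ) * Γ(γ) ^ m * Z m`.
-/

namespace MehtaIntegral

open Polynomial Lagrange Matrix

/-! ### Residues at the nodes -/

theorem det_vandermonde_pos {n : ℕ} {x : Fin n → ℝ} (hx : StrictMono x) :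
    0 < (vandermonde x).det := by
  rw [det_vandermonde]
  exact prod_pos fun _ _ => prod_pos fun _ hj => sub_pos.2 (hx (mem_Ioi.1 hj))

theorem abs_prod_nodalWeight {n : ℕ} (x : Fin n → ℝ) :
    |∏ i, nodalWeight univ x i| = ((vandermonde x).det ^ 2)⁻¹ := by
  have split_erase (i : Fin n) : ∏ k ∈ univ.erase i, |x i - x k| =
      (∏ k ∈ Ioi i, |x k - x i|) * ∏ k ∈ Iio i, |x i - x k| := by
    rw [show univ.erase i = Ioi i ∪ Iio i by ext k; simp [lt_or_lt_iff_ne, eq_comm],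
      prod_union (disjoint_left.2 fun k hk hk' => lt_asymm (mem_Ioi.1 hk) (mem_Iio.1 hk'))]
    simp_rw [abs_sub_comm (x i)]
  have swap : ∏ i, ∏ k ∈ Iio i, |x i - x k| = ∏ i, ∏ k ∈ Ioi i, |x k - x i| :=
    prod_comm' (by simp)
  simp_rw [nodalWeight, prod_inv_distrib, abs_inv, abs_prod, split_erase, prod_mul_distrib, swap]
  rw [← sq_abs, det_vandermonde, sq]
  simp_rw [abs_prod]

theorem sign_eval_nodal {ι : Type*} {s : Finset ι} {v : ι → ℝ} {z : ℝ} (hz : ∀ i ∈ s, v i ≠ z) :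
    SignType.sign ((nodal s v).eval z) = (-1) ^ #{i ∈ s | z < v i} := by
  rw [eval_nodal, show SignType.sign (∏ i ∈ s, (z - v i)) = ∏ i ∈ s, SignType.sign (z - v i) from
    map_prod signHom _ s, ← prod_const, prod_filter]
  refine prod_congr rfl fun i hi => ?_
  split_ifs with h
  · exact sign_neg (sub_neg.2 h)
  · exact sign_pos (sub_pos.2 (lt_of_le_of_ne (not_lt.1 h) (hz i hi)))

theorem neg_one_pow_mul_eq_one_iff {k : ℕ} {s : SignType} : (-1) ^ k * s = 1 ↔ s = (-1) ^ k := by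
  rcases neg_one_pow_eq_or SignType k with h | h <;> rw [h] <;> revert s <;> decide

theorem sign_nodalWeight {n : ℕ} {x : Fin n → ℝ} (hx : StrictMono x) (i : Fin n) :
    SignType.sign (nodalWeight univ x i) = (-1) ^ #(Ioi i) := by
  have hcard : #{k ∈ univ.erase i | x i < x k} = #(Ioi i) := by
    congr 1
    ext k
    simpa [hx.lt_iff_lt] using fun h : i < k => h.ne'
  have hne : ∀ k ∈ univ.erase i, x k ≠ x i := fun k hk => hx.injective.ne (ne_of_mem_erase hk)
  have hsign := congrArg SignType.sign <|
    inv_mul_cancel₀ (a := (nodal (univ.erase i) x).eval (x i))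
      (eval_nodal_not_at_node fun k hk => (hne k hk).symm)
  rw [← nodalWeight_eq_eval_nodal_erase_inv, sign_mul, sign_eval_nodal hne, hcard,
    _root_.sign_one] at hsign
  exact neg_one_pow_mul_eq_one_iff.1 ((mul_comm _ _).trans hsign)

/-- The residue at `x i` of the rational function `p / ∏ j, (X - x j)`. -/
noncomputable def residue {n : ℕ} (x : Fin n → ℝ) (i : Fin n) : ℝ[X] →ₗ[ℝ] ℝ :=
  nodalWeight univ x i • leval (x i)

/-- Linear coordinates on the polynomials `p` of degree at most `m`: the leading coefficient,
followed by the residues of `p / ∏ j, (X - a j)` at the `m` points `a i`. -/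
noncomputable def residueCons {m : ℕ} (a : Fin m → ℝ) : Fin (m + 1) → ℝ[X] →ₗ[ℝ] ℝ :=
  Fin.cons (lcoeff ℝ m) (residue a)

theorem residue_apply {n : ℕ} (x : Fin n → ℝ) (i : Fin n) (p : ℝ[X]) :
    residue x i p = nodalWeight univ x i * p.eval (x i) := rfl

@[simp]
theorem residueCons_zero {m : ℕ} (a : Fin m → ℝ) (p : ℝ[X]) : residueCons a 0 p = p.coeff m := rfl

@[simp]
theorem residueCons_succ {m : ℕ} (a : Fin m → ℝ) (i : Fin m) :
    residueCons a i.succ = residue a i := rfl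

@[simp]
theorem residue_nodal_self {n : ℕ} (x : Fin n → ℝ) (i : Fin n) :
    residue x i (nodal univ x) = 0 := by
  rw [residue_apply, eval_nodal_at_node (mem_univ i), mul_zero]

theorem residue_nodal_erase {n : ℕ} {x : Fin n → ℝ} (hx : Function.Injective x) (i j : Fin n) :
    residue x i (nodal (univ.erase j) x) = (1 : Matrix (Fin n) (Fin n) ℝ) i j := by
  rw [residue_apply]
  rcases eq_or_ne i j with rfl | hij
  · rw [one_apply_eq, nodalWeight_eq_eval_nodal_erase_inv, inv_mul_cancel₀]
    exact eval_nodal_not_at_node fun k hk => hx.ne (ne_of_mem_erase hk).symm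
  · rw [one_apply_ne hij, eval_nodal_at_node (mem_erase.2 ⟨hij, mem_univ i⟩), mul_zero]

theorem coeff_X_mul_eq_sum_residue {n : ℕ} {x : Fin n → ℝ} (hx : Function.Injective x) {p : ℝ[X]}
    (hp : p.degree < n) : (X * p).coeff n = ∑ i, residue x i p := by
  cases n with
  | zero => simp
  | succ m =>
    have h := coeff_eq_sum hx.injOn (s := univ) (by simpa using hp)
    simpa [residue_apply, nodalWeight, prod_inv_distrib, div_eq_inv_mul] using h

theorem residue_ext {n : ℕ} {x : Fin n → ℝ} (hx : Function.Injective x) {p q : ℝ[X]}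
    (hp : p.degree < n) (hq : q.degree < n) (h : ∀ i, residue x i p = residue x i q) : p = q := by
  refine eq_of_degrees_lt_of_eval_index_eq univ hx.injOn (by simpa) (by simpa) fun i _ => ?_
  exact mul_left_cancel₀ (nodalWeight_ne_zero hx.injOn (mem_univ i)) (h i)

theorem degree_lt_of_coeff_eq_zero {R : Type*} [Semiring R] {m : ℕ} {p : R[X]}
    (hp : p.degree < ↑(m + 1)) (h : p.coeff m = 0) : p.degree < m :=
  (degree_lt_iff_coeff_zero _ _).2 fun k hk => by
    rcases hk.eq_or_lt with rfl | hk
    exacts [h, coeff_eq_zero_of_degree_lt (hp.trans_le (Nat.cast_le.2 hk))]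

theorem residueCons_ext {m : ℕ} {a : Fin m → ℝ} (ha : Function.Injective a) {p q : ℝ[X]}
    (hp : p.degree < ↑(m + 1)) (hq : q.degree < ↑(m + 1))
    (h : ∀ i, residueCons a i p = residueCons a i q) : p = q := by
  have hdeg : (p - q).degree < m :=
    degree_lt_of_coeff_eq_zero ((degree_sub_le p q).trans_lt (max_lt hp hq))
      (by simpa [sub_eq_zero] using h 0)
  refine sub_eq_zero.1 (residue_ext ha hdeg (by simp) fun i => ?_)
  simpa [sub_eq_zero] using h i.succ

theorem exists_residue_eq {n : ℕ} {x : Fin n → ℝ} (hx : Function.Injective x) (w : Fin n → ℝ) :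
    ∃ p : ℝ[X], p.degree < n ∧ ∀ i, residue x i p = w i := by
  refine ⟨interpolate univ x fun i => w i / nodalWeight univ x i, ?_, fun i => ?_⟩
  · simpa using degree_interpolate_lt (fun i => w i / nodalWeight univ x i) hx.injOn (s := univ)
  · rw [residue_apply, eval_interpolate_at_node _ hx.injOn (mem_univ i),
      mul_div_cancel₀ _ (nodalWeight_ne_zero hx.injOn (mem_univ i))]

theorem degree_nodal_univ_lt {m : ℕ} (a : Fin m → ℝ) : (nodal univ a).degree < ↑(m + 1) := by
  rw [degree_nodal, card_univ, Fintype.card_fin]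
  exact_mod_cast m.lt_succ_self

theorem degree_nodal_erase_lt {n : ℕ} (x : Fin n → ℝ) (j : Fin n) :
    (nodal (univ.erase j) x).degree < n := by
  rw [degree_nodal]
  exact_mod_cast (card_lt_card (erase_ssubset (mem_univ j))).trans_eq (by simp)

theorem coeff_nodal_univ {m : ℕ} (a : Fin m → ℝ) : (nodal univ a).coeff m = 1 := by
  simpa using (nodal_monic (s := univ) (v := a)).coeff_natDegree

theorem exists_residueCons_eq {m : ℕ} {a : Fin m → ℝ} (ha : Function.Injective a)
    (w : Fin (m + 1) → ℝ) :
    ∃ p : ℝ[X], p.degree < ↑(m + 1) ∧ ∀ i, residueCons a i p = w i := by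
  obtain ⟨q, hq, hqw⟩ := exists_residue_eq ha (Fin.tail w)
  refine ⟨w 0 • nodal univ a + q, ?_, Fin.cases ?_ fun i => ?_⟩
  · refine (degree_add_le _ _).trans_lt (max_lt ((degree_smul_le _ _).trans_lt ?_) (hq.trans ?_))
    · exact degree_nodal_univ_lt a
    · exact_mod_cast m.lt_succ_self
  · simp [coeff_nodal_univ, coeff_eq_zero_of_degree_lt hq]
  · simp [hqw, Fin.tail]

/-! ### Jacobian determinants -/

theorem det_linearMap_apply {R : Type*} [CommRing R] {n : ℕ} (L : Fin n → R[X] →ₗ[R] R)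
    {p : Fin n → R[X]} (hp : ∀ j, (p j).degree < n) :
    (Matrix.of fun i j => L i (p j)).det = (Matrix.of fun i (k : Fin n) => L i (X ^ (k : ℕ))).det *
      (Matrix.of fun (k : Fin n) j => (p j).coeff k).det := by
  rw [← det_mul]
  congr 1
  ext i j
  have expand : p j = ∑ k : Fin n, (p j).coeff k • X ^ (k : ℕ) := by
    simp_rw [smul_eq_C_mul]
    rw [sum_fin (fun k c => C c * X ^ k) (by simp) (hp j), sum_C_mul_X_pow_eq]
  conv_lhs => rw [of_apply, expand, map_sum]
  simp [mul_apply, mul_comm]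

theorem abs_det_residue {n : ℕ} {x : Fin n → ℝ} (hx : StrictMono x) :
    |(Matrix.of fun i (k : Fin n) => residue x i (X ^ (k : ℕ))).det| = (vandermonde x).det⁻¹ := by
  have hV := det_vandermonde_pos hx
  have factor : (Matrix.of fun i (k : Fin n) => residue x i (X ^ (k : ℕ))) =
      Matrix.of fun i k => nodalWeight univ x i * vandermonde x i k := by
    ext i k
    simp [residue_apply, vandermonde_apply]
  rw [factor, det_mul_column, abs_mul, abs_prod_nodalWeight, abs_of_pos hV]
  field_simp

theorem abs_det_residueCons {m : ℕ} {a : Fin m → ℝ} (ha : StrictMono a) :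
    |(Matrix.of fun i (k : Fin (m + 1)) => residueCons a i (X ^ (k : ℕ))).det| =
      (vandermonde a).det⁻¹ := by
  rw [← abs_det_residue ha, det_succ_row_zero, Fin.sum_univ_castSucc, sum_eq_zero]
  · simp only [Fin.val_last, of_apply, residueCons_zero, coeff_X_pow, ↓reduceIte, mul_one,
      Fin.succAbove_last, zero_add, abs_mul, abs_pow, abs_neg, abs_one, one_pow, one_mul]
    rfl
  · intro k _
    simp [coeff_X_pow, k.isLt.ne']

theorem abs_det_residue_mul {m : ℕ} {x : Fin (m + 1) → ℝ} (hx : StrictMono x) {a : Fin m → ℝ}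
    (ha : StrictMono a) {p : Fin (m + 1) → ℝ[X]} (hp : ∀ j, (p j).degree < ↑(m + 1)) :
    |(Matrix.of fun i j => residue x i (p j)).det| * (vandermonde x).det =
      |(Matrix.of fun i j => residueCons a i (p j)).det| * (vandermonde a).det := by
  have hVx := det_vandermonde_pos hx
  have hVa := det_vandermonde_pos ha
  rw [det_linearMap_apply _ hp, det_linearMap_apply _ hp, abs_mul, abs_mul, abs_det_residue hx,
    abs_det_residueCons ha]
  field_simp

theorem abs_det_residueCons_nodal_erase {m : ℕ} {x : Fin (m + 1) → ℝ} (hx : StrictMono x)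
    {a : Fin m → ℝ} (ha : StrictMono a) :
    |(Matrix.of fun i j => residueCons a i (nodal (univ.erase j) x)).det| =
      (vandermonde x).det / (vandermonde a).det := by
  have h :=
    abs_det_residue_mul hx ha (p := fun j => nodal (univ.erase j) x) (degree_nodal_erase_lt x)
  have hone : (Matrix.of fun i j => residue x i (nodal (univ.erase j) x)) = 1 := by
    ext i j
    exact residue_nodal_erase hx.injective i j
  rw [hone, det_one, abs_one, one_mul] at h
  exact eq_div_of_mul_eq (det_vandermonde_pos ha).ne' h.symm

theorem abs_det_residue_nodal_cons {m : ℕ} {x : Fin (m + 1) → ℝ} (hx : StrictMono x)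
    {a : Fin m → ℝ} (ha : StrictMono a) {t : ℝ} (ht : 0 < t) :
    |(Matrix.of fun i j => residue x i ((Fin.cons (nodal univ a)
        fun j => -t • nodal (univ.erase j) a : Fin (m + 1) → ℝ[X]) j)).det| =
      t ^ m * (vandermonde a).det / (vandermonde x).det := by
  set p : Fin (m + 1) → ℝ[X] :=
    Fin.cons (nodal univ a) fun j => -t • nodal (univ.erase j) a with hp
  have herase (j : Fin m) : (-t • nodal (univ.erase j) a).degree < m :=
    (degree_smul_le _ _).trans_lt (degree_nodal_erase_lt a j)
  have hdeg : ∀ j, (p j).degree < ↑(m + 1) := Fin.cases (degree_nodal_univ_lt a) fun j =>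
    (herase j).trans (by exact_mod_cast m.lt_succ_self)
  have hdiag : (Matrix.of fun i j => residueCons a i (p j)) =
      diagonal (Fin.cons 1 fun _ => -t) := by
    ext i j
    refine Fin.cases ?_ (fun i => ?_) i <;> refine Fin.cases ?_ (fun j => ?_) j
    · simp [hp, coeff_nodal_univ]
    · rw [diagonal_apply_ne _ (Fin.succ_ne_zero j).symm]
      exact coeff_eq_zero_of_degree_lt (herase j)
    · simp [hp]
    · simp [hp, residue_nodal_erase ha.injective, one_apply, diagonal_apply, neg_ite]
  have h := abs_det_residue_mul hx ha hdeg
  rw [hdiag, det_diagonal, Fin.prod_univ_succ] at h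
  simp only [Fin.cons_zero, Fin.cons_succ, one_mul, prod_const, card_univ, Fintype.card_fin,
    abs_pow, abs_neg, abs_of_pos ht] at h
  rw [eq_div_iff (det_vandermonde_pos hx).ne', ← h]

theorem residue_pos_iff {n : ℕ} {x : Fin n → ℝ} (hx : StrictMono x) {i : Fin n} {p : ℝ[X]} :
    0 < residue x i p ↔ SignType.sign (p.eval (x i)) = (-1) ^ #(Ioi i) := by
  rw [← sign_eq_one_iff, residue_apply, sign_mul, sign_nodalWeight hx, neg_one_pow_mul_eq_one_iff]

theorem residue_neg_iff {n : ℕ} {x : Fin n → ℝ} (hx : StrictMono x) {i : Fin n} {p : ℝ[X]} :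
    residue x i p < 0 ↔ SignType.sign (p.eval (x i)) = (-1) ^ (#(Ioi i) + 1) := by
  rw [← neg_pos, ← map_neg, residue_pos_iff hx, eval_neg, Left.sign_neg, pow_succ, mul_neg, mul_one]
  exact neg_eq_iff_eq_neg

/-! ### Interlacing -/

/-- `x` and `a` strictly interlace: `x 0 < a 0 < x 1 < ⋯ < a (m - 1) < x m`. -/
def Interlace {m : ℕ} (x : Fin (m + 1) → ℝ) (a : Fin m → ℝ) : Prop :=
  ∀ i, x i.castSucc < a i ∧ a i < x i.succ

namespace Interlace

variable {m : ℕ} {x : Fin (m + 1) → ℝ} {a : Fin m → ℝ}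

theorem strictMono_left (h : Interlace x a) : StrictMono x :=
  Fin.strictMono_iff_lt_succ.2 fun i => (h i).1.trans (h i).2

theorem left_lt_right_iff (h : Interlace x a) {i : Fin (m + 1)} {j : Fin m} :
    x i < a j ↔ i < j.succ := by
  rcases le_or_gt i j.castSucc with hij | hij
  · exact iff_of_true ((h.strictMono_left.monotone hij).trans_lt (h j).1)
      (hij.trans_lt j.castSucc_lt_succ)
  · have hji := Fin.castSucc_lt_iff_succ_le.1 hij
    exact iff_of_false ((h j).2.trans_le (h.strictMono_left.monotone hji)).not_gt hji.not_gt

theorem right_lt_left_iff (h : Interlace x a) {i : Fin (m + 1)} {j : Fin m} :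
    a j < x i ↔ j.castSucc < i := by
  rcases le_or_gt i j.castSucc with hij | hij
  · exact iff_of_false ((h.strictMono_left.monotone hij).trans_lt (h j).1).not_gt hij.not_gt
  · exact iff_of_true ((h j).2.trans_le
      (h.strictMono_left.monotone (Fin.castSucc_lt_iff_succ_le.1 hij))) hij

theorem ne (h : Interlace x a) (i : Fin (m + 1)) (j : Fin m) : x i ≠ a j := by
  rcases le_or_gt i j.castSucc with hij | hij
  · exact (h.left_lt_right_iff.2 (Fin.le_castSucc_iff.1 hij)).ne
  · exact (h.right_lt_left_iff.2 hij).ne'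

theorem strictMono_right (h : Interlace x a) : StrictMono a := fun i j hij =>
  (h i).2.trans_le <| (h.strictMono_left.monotone (Fin.succ_le_castSucc_iff.2 hij)).trans (h j).1.le

theorem residue_left_pos (h : Interlace x a) (i : Fin (m + 1)) :
    0 < residue x i (nodal univ a) := by
  have hcard : #{j | x i < a j} = #(Ioi i) := by
    simp_rw [h.left_lt_right_iff, ← Finset.filter_lt_eq_Ioi, Fin.card_filter_univ_succ]
    simp
  rw [residue_pos_iff h.strictMono_left, sign_eval_nodal fun j _ => (h.ne i j).symm, hcard]

theorem residue_right_neg (h : Interlace x a) (i : Fin m) : residue a i (nodal univ x) < 0 := by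
  have hcard : #{j | a i < x j} = #(Ioi i) + 1 := by
    simp_rw [h.right_lt_left_iff, Finset.filter_lt_eq_Ioi, Fin.card_Ioi, Fin.val_castSucc]
    omega
  rw [residue_neg_iff h.strictMono_right, sign_eval_nodal fun j _ => h.ne j i, hcard]

end Interlace

theorem exists_interlace_isRoot {m : ℕ} {x : Fin (m + 1) → ℝ} (hx : StrictMono x) {p : ℝ[X]}
    (hp : ∀ i, SignType.sign (p.eval (x i)) = (-1) ^ #(Ioi i)) :
    ∃ a, Interlace x a ∧ ∀ j, p.IsRoot (a j) := by
  suffices ∀ j : Fin m, ∃ z, (x j.castSucc < z ∧ z < x j.succ) ∧ p.IsRoot z by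
    choose a hxa ha using this
    exact ⟨a, hxa, ha⟩
  intro j
  have hle := (hx j.castSucc_lt_succ).le
  have hcard : #(Ioi j.castSucc) = #(Ioi j.succ) + 1 := by
    simp only [Fin.card_Ioi, Fin.val_castSucc, Fin.val_succ]
    omega
  have hprod : p.eval (x j.castSucc) * p.eval (x j.succ) < 0 := by
    rw [← sign_eq_neg_one_iff, sign_mul, hp, hp, hcard, pow_succ, mul_right_comm, ← mul_pow]
    simp
  rcases mul_neg_iff.1 hprod with ⟨h1, h2⟩ | ⟨h1, h2⟩
  · exact intermediate_value_Ioo' hle p.continuousOn ⟨h2, h1⟩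
  · exact intermediate_value_Ioo hle p.continuousOn ⟨h1, h2⟩

theorem eq_smul_nodal_of_isRoot {m : ℕ} {a : Fin m → ℝ} (ha : Function.Injective a) {p : ℝ[X]}
    (hp : p.degree < ↑(m + 1)) (hroot : ∀ i, p.IsRoot (a i)) :
    p = p.coeff m • nodal univ a :=
  residueCons_ext ha hp ((degree_smul_le _ _).trans_lt (degree_nodal_univ_lt a)) <| Fin.cases
    (by simp [coeff_nodal_univ]) fun i => by
      simp [residue_apply _ _ p, (hroot i).eq_zero]

theorem injOn_nodal {n : ℕ} :
    Set.InjOn (nodal univ : (Fin n → ℝ) → ℝ[X]) {x | StrictMono x} := by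
  intro x hx y hy h
  have hroots (z : Fin n → ℝ) : Set.range z = {t | (nodal univ z).IsRoot t} := by
    ext t
    simp [eval_nodal, prod_eq_zero_iff, sub_eq_zero, @eq_comm _ t]
  exact (hx.range_inj hy).1 (by rw [hroots, hroots, h])

theorem eventually_eval_pos_of_monic {p : ℝ[X]} (hp : p.Monic) (hdeg : p.natDegree ≠ 0) :
    ∀ᶠ M in Filter.atTop, 0 < p.eval M :=
  (p.tendsto_atTop_of_leadingCoeff_nonneg (natDegree_pos_iff_degree_pos.1 hdeg.bot_lt)
    (by simp [hp.leadingCoeff])).eventually_gt_atTop 0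

theorem eventually_sign_eval_neg_of_monic {p : ℝ[X]} (hp : p.Monic) (hdeg : p.natDegree ≠ 0) :
    ∀ᶠ M in Filter.atTop, SignType.sign (p.eval (-M)) = (-1) ^ p.natDegree := by
  have hscalar : ((-1) ^ p.natDegree * p.comp (-X) : ℝ[X]) =
      C ((-1) ^ p.natDegree) * p.comp (-X) := by simp
  have hq := hp.neg_one_pow_natDegree_mul_comp_neg_X
  rw [hscalar] at hq
  have hqdeg : (C ((-1) ^ p.natDegree) * p.comp (-X)).natDegree ≠ 0 := by
    rwa [natDegree_C_mul (pow_ne_zero _ (by norm_num)), natDegree_comp, natDegree_neg, natDegree_X,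
      mul_one]
  filter_upwards [eventually_eval_pos_of_monic hq hqdeg] with M hM
  rw [← neg_one_pow_mul_eq_one_iff]
  simpa [eval_comp, sign_mul, sign_pow, Left.sign_neg] using sign_pos hM

theorem strictMono_cons_neg_snoc {m : ℕ} {a : Fin m → ℝ} (ha : StrictMono a) {M : ℝ} (hM : 0 < M)
    (haM : ∀ i, |a i| < M) :
    StrictMono (Fin.cons (-M) (Fin.snoc a M : Fin (m + 1) → ℝ) : Fin (m + 1 + 1) → ℝ) := by
  have hsnoc := (Fin.strictMono_insertNth_iff (Fin.last m) M a).2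
    ⟨ha, fun i _ => (le_abs_self _).trans_lt (haM i), fun i hi => absurd hi (by simp)⟩
  rw [Fin.insertNth_last'] at hsnoc
  refine Fin.strictMono_cons.2 ⟨Fin.lastCases ?_ fun i => ?_, hsnoc⟩
  · rw [Fin.snoc_last]
    linarith
  · rw [Fin.snoc_castSucc]
    exact neg_lt.1 ((neg_le_abs _).trans_lt (haM i))

theorem exists_interlace_eq_nodal {m : ℕ} {a : Fin m → ℝ} (ha : StrictMono a) {p : ℝ[X]}
    (hp : p.Monic) (hdeg : p.natDegree = m + 1) (hneg : ∀ i, residue a i p < 0) :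
    ∃ x, Interlace x a ∧ p = nodal univ x := by
  have hdeg0 : p.natDegree ≠ 0 := by omega
  obtain ⟨M, ⟨⟨hM, hM'⟩, hM0⟩, haM⟩ := ((((eventually_eval_pos_of_monic hp hdeg0).and
    (eventually_sign_eval_neg_of_monic hp hdeg0)).and (Filter.eventually_gt_atTop 0)).and
    (Filter.eventually_all.2 fun i => Filter.eventually_gt_atTop |a i|)).exists
  set y : Fin (m + 1 + 1) → ℝ := Fin.cons (-M) (Fin.snoc a M : Fin (m + 1) → ℝ) with hy
  have hy_last : y (Fin.last (m + 1)) = M := by simp [hy, ← Fin.succ_last]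
  have hy_node (i : Fin m) : y i.castSucc.succ = a i := by simp [hy]
  have hymono : StrictMono y := strictMono_cons_neg_snoc ha hM0 haM
  obtain ⟨x, hx, hroot⟩ := exists_interlace_isRoot hymono (p := p) <|
    Fin.cases (by simpa [hy, hdeg] using hM') <| Fin.lastCases
      (by simpa [hy_last] using sign_pos hM) fun i => by
        rw [hy_node, (residue_neg_iff ha).1 (hneg i)]
        congr 1
        simp only [Fin.card_Ioi, Fin.val_succ, Fin.val_castSucc]
        omega
  refine ⟨x, fun i => ?_, ?_⟩
  · simpa [hy] using And.intro (hx i.castSucc).2 (hx i.succ).1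
  · have hcoeff : p.coeff (m + 1) = 1 := hdeg ▸ hp.coeff_natDegree
    have hlt : p.degree < ↑(m + 1 + 1) := by
      rw [degree_eq_natDegree hp.ne_zero, hdeg]
      exact_mod_cast Nat.lt_succ_self _
    have h := eq_smul_nodal_of_isRoot hx.strictMono_right.injective hlt hroot
    rwa [hcoeff, one_smul] at h

/-! ### The two changes of variables -/

/-- The Dixon–Anderson change of variables, sending a scale `y 0` and nodes `Fin.tail y` to the
residues at the `x i` of the rational function with numerator
`y 0 • ∏ j, (X - Fin.tail y j)` and denominator `∏ i, (X - x i)`. -/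
noncomputable def dixonAndersonMap {m : ℕ} (x y : Fin (m + 1) → ℝ) (i : Fin (m + 1)) : ℝ :=
  residue x i (y 0 • nodal univ (Fin.tail y))

/-- For `A = ∏ i, (X - a i)` and `P = ∏ j, (X - x j)`, the coordinates of `X * A - P` are the
constant term and the negated residues in `P / A = X - w 0 - ∑ i, w i.succ / (X - a i)`. When
`x` interlaces `a`, this is the characteristic equation of the arrow matrix with diagonal
`(w 0, a)` and border entries `√(w i.succ)`, whose eigenvalues are the `x j`. -/
noncomputable def arrowMap {m : ℕ} (a : Fin m → ℝ) (x : Fin (m + 1) → ℝ) (i : Fin (m + 1)) : ℝ :=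
  residueCons a i (X * nodal univ a - nodal univ x)

theorem hasFDerivAt_linearMap_nodal {ι : Type*} [Finite ι] [DecidableEq ι] (s : Finset ι)
    (L : ℝ[X] →ₗ[ℝ] ℝ) (x : ι → ℝ) :
    HasFDerivAt (fun y : ι → ℝ => L (nodal s y))
      (-∑ j ∈ s, L (nodal (s.erase j) x) •
        ContinuousLinearMap.proj (R := ℝ) (φ := fun _ : ι => ℝ) j) x := by
  cases nonempty_fintype ι
  induction s using Finset.induction_on generalizing L with
  | empty => simpa using hasFDerivAt_const (L 1) x
  | insert b s hb ih =>
    have expand (t : Finset ι) (ht : b ∉ t) (y : ι → ℝ) :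
        L (nodal (insert b t) y) =
          (L ∘ₗ LinearMap.mulLeft ℝ X) (nodal t y) - y b * L (nodal t y) := by
      rw [nodal_insert_eq_nodal ht, sub_mul, ← smul_eq_C_mul, map_sub, map_smul]
      rfl
    simp_rw [expand s hb]
    have hproj : HasFDerivAt (fun y : ι → ℝ => y b)
        (ContinuousLinearMap.proj (R := ℝ) (φ := fun _ : ι => ℝ) b) x :=
      hasFDerivAt_apply b x
    convert! (ih (L ∘ₗ LinearMap.mulLeft ℝ X)).sub (hproj.mul (ih L)) using 1
    have herase (j : ι) (hj : j ∈ s) : L (nodal ((insert b s).erase j) x) =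
        (L ∘ₗ LinearMap.mulLeft ℝ X) (nodal (s.erase j) x) - x b * L (nodal (s.erase j) x) := by
      rw [erase_insert_of_ne (ne_of_mem_of_not_mem hj hb).symm,
        expand _ fun h => hb (mem_of_mem_erase h)]
    rw [sum_insert hb, erase_insert hb, sum_congr rfl fun j hj => congrArg (· • _) (herase j hj)]
    ext v
    simp only [_root_.add_apply, _root_.sub_apply, _root_.neg_apply, _root_.sum_apply,
      _root_.smul_apply, ContinuousLinearMap.proj_apply, smul_eq_mul, neg_add_rev,
      smul_neg, neg_sub, sub_mul, mul_assoc, sum_sub_distrib, mul_sum]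
    ring

theorem hasFDerivAt_toLin' {ι κ : Type*} [Fintype ι] [Finite κ] [DecidableEq ι]
    {f : (ι → ℝ) → κ → ℝ} {x : ι → ℝ} {M : Matrix κ ι ℝ}
    (h : ∀ i, HasFDerivAt (fun y => f y i)
      (∑ j, M i j • ContinuousLinearMap.proj (R := ℝ) (φ := fun _ : ι => ℝ) j) x) :
    HasFDerivAt f (Matrix.toLin' M).toContinuousLinearMap x := by
  cases nonempty_fintype κ
  rw [hasFDerivAt_pi']
  intro i
  convert! h i using 1
  ext v
  simp [Matrix.mulVec, dotProduct]

theorem det_toContinuousLinearMap_toLin' {ι : Type*} [Fintype ι] [DecidableEq ι]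
    (M : Matrix ι ι ℝ) : (Matrix.toLin' M).toContinuousLinearMap.det = M.det := by
  rw [ContinuousLinearMap.det, LinearMap.coe_toContinuousLinearMap, LinearMap.det_toLin']

theorem hasFDerivAt_arrowMap {m : ℕ} (a : Fin m → ℝ) (x : Fin (m + 1) → ℝ) :
    HasFDerivAt (arrowMap a) (Matrix.toLin' (Matrix.of fun i j =>
      residueCons a i (nodal (univ.erase j) x))).toContinuousLinearMap x := by
  refine hasFDerivAt_toLin' fun i => ?_
  simpa [arrowMap] using (hasFDerivAt_linearMap_nodal univ (residueCons a i) x).const_sub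
    (residueCons a i (X * nodal univ a))

theorem hasFDerivAt_dixonAndersonMap {m : ℕ} (x y : Fin (m + 1) → ℝ) :
    HasFDerivAt (dixonAndersonMap x) (Matrix.toLin' (Matrix.of fun i j =>
      residue x i ((Fin.cons (nodal univ (Fin.tail y)) fun j =>
        -y 0 • nodal (univ.erase j) (Fin.tail y) :
          Fin (m + 1) → ℝ[X]) j))).toContinuousLinearMap y := by
  refine hasFDerivAt_toLin' fun i => ?_
  have hscale : HasFDerivAt (fun y : Fin (m + 1) → ℝ => y 0)
      (ContinuousLinearMap.proj (R := ℝ) (φ := fun _ : Fin (m + 1) => ℝ) 0) y :=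
    hasFDerivAt_apply 0 y
  have htail : HasFDerivAt (fun (y : Fin (m + 1) → ℝ) (j : Fin m) => y j.succ)
      (ContinuousLinearMap.pi fun j : Fin m =>
        ContinuousLinearMap.proj (R := ℝ) (φ := fun _ : Fin (m + 1) => ℝ) j.succ) y :=
    hasFDerivAt_pi.2 fun j => hasFDerivAt_apply (Fin.succ j) y
  have hmul := hscale.mul <|
    (hasFDerivAt_linearMap_nodal univ (residue x i) (Fin.tail y)).comp y htail
  simp only [dixonAndersonMap, map_smul, smul_eq_mul]
  convert! hmul using 1
  ext v
  simp [Fin.sum_univ_succ, mul_sum, mul_comm, mul_left_comm, add_comm]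

theorem bijOn_dixonAndersonMap {m : ℕ} {x : Fin (m + 1) → ℝ} (hx : StrictMono x) :
    Set.BijOn (dixonAndersonMap x) {y | 0 < y 0 ∧ Interlace x (Fin.tail y)}
      {w | ∀ i, 0 < w i} := by
  refine ⟨fun y hy i => ?_, fun y hy z hz h => ?_, fun w hw => ?_⟩
  · simpa [dixonAndersonMap] using mul_pos hy.1 (hy.2.residue_left_pos i)
  · have hdeg (u : Fin (m + 1) → ℝ) : (u 0 • nodal univ (Fin.tail u)).degree < ↑(m + 1) :=
      (degree_smul_le _ _).trans_lt (degree_nodal_univ_lt _)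
    have heq := residue_ext hx.injective (hdeg y) (hdeg z) (congrFun h)
    have h0 : y 0 = z 0 := by simpa [coeff_nodal_univ] using congrArg (coeff · m) heq
    rw [h0] at heq
    have htail := injOn_nodal hy.2.strictMono_right hz.2.strictMono_right
      (smul_right_injective _ hz.1.ne' heq)
    rw [← Fin.cons_self_tail y, ← Fin.cons_self_tail z, h0, htail]
  · obtain ⟨p, hp, hpw⟩ := exists_residue_eq hx.injective w
    obtain ⟨a, hxa, ha⟩ := exists_interlace_isRoot hx fun i =>
      (residue_pos_iff hx).1 ((hw i).trans_eq (hpw i).symm)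
    refine ⟨Fin.cons (p.coeff m) a, ⟨?_, by simpa using hxa⟩, funext fun i => ?_⟩
    · rw [Fin.cons_zero, ← coeff_X_mul, coeff_X_mul_eq_sum_residue hx.injective hp]
      exact sum_pos (fun i _ => hpw i ▸ hw i) univ_nonempty
    · rw [dixonAndersonMap, Fin.cons_zero, Fin.tail_cons,
        ← eq_smul_nodal_of_isRoot hxa.strictMono_right.injective hp ha, hpw]

theorem natDegree_X_mul_nodal {m : ℕ} (a : Fin m → ℝ) :
    (X * nodal univ a).natDegree = m + 1 := by
  rw [natDegree_X_mul nodal_monic.ne_zero, natDegree_nodal, card_univ, Fintype.card_fin]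

theorem degree_X_mul_nodal {m : ℕ} (a : Fin m → ℝ) :
    (X * nodal univ a).degree = ↑(m + 1) := by
  rw [degree_eq_natDegree (monic_X.mul nodal_monic).ne_zero, natDegree_X_mul_nodal]

theorem degree_X_mul_nodal_sub_nodal_lt {m : ℕ} (a : Fin m → ℝ) (x : Fin (m + 1) → ℝ) :
    (X * nodal univ a - nodal univ x).degree < ↑(m + 1) := by
  rw [← degree_X_mul_nodal a]
  refine degree_sub_lt_left ?_ (monic_X.mul nodal_monic).ne_zero ?_
  · rw [degree_X_mul_nodal, degree_nodal, card_univ, Fintype.card_fin]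
  · rw [(monic_X.mul nodal_monic).leadingCoeff, nodal_monic.leadingCoeff]

theorem arrowMap_succ {m : ℕ} (a : Fin m → ℝ) (x : Fin (m + 1) → ℝ) (i : Fin m) :
    arrowMap a x i.succ = -residue a i (nodal univ x) := by
  have hA : residue a i (X * nodal univ a) = 0 := by
    simp [residue_apply, eval_nodal_at_node (mem_univ i)]
  rw [arrowMap, residueCons_succ, map_sub, hA, zero_sub]

theorem bijOn_arrowMap {m : ℕ} {a : Fin m → ℝ} (ha : StrictMono a) :
    Set.BijOn (arrowMap a) {x | Interlace x a} {w | ∀ i : Fin m, 0 < w i.succ} := by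
  refine ⟨fun x hx i => ?_, fun x hx y hy h => ?_, fun w hw => ?_⟩
  · rw [arrowMap_succ]
    exact neg_pos.2 (hx.residue_right_neg i)
  · have heq := residueCons_ext ha.injective (degree_X_mul_nodal_sub_nodal_lt a x)
      (degree_X_mul_nodal_sub_nodal_lt a y) (congrFun h)
    exact injOn_nodal hx.strictMono_left hy.strictMono_left (sub_right_injective heq)
  · obtain ⟨q, hq, hqw⟩ := exists_residueCons_eq ha.injective w
    have hmonic : (X * nodal univ a).Monic := monic_X.mul nodal_monic
    have hlt : q.degree < (X * nodal univ a).degree := by rwa [degree_X_mul_nodal]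
    obtain ⟨x, hxa, hx⟩ := exists_interlace_eq_nodal ha (hmonic.sub_of_left hlt)
      (by rw [natDegree_eq_of_degree_eq (degree_sub_eq_left_of_degree_lt hlt),
        natDegree_X_mul_nodal]) fun i => by
        simpa [residue_apply _ _ (X * _), eval_nodal_at_node] using
          (hw i).trans_eq (hqw i.succ).symm
    refine ⟨x, hxa, funext fun i => ?_⟩
    rw [arrowMap, ← hx, sub_sub_cancel, hqw]

/-! ### Power sums in the new variables -/

theorem sum_dixonAndersonMap {m : ℕ} {x : Fin (m + 1) → ℝ} (hx : Function.Injective x)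
    (y : Fin (m + 1) → ℝ) : ∑ i, dixonAndersonMap x y i = y 0 := by
  have hdeg : (y 0 • nodal univ (Fin.tail y)).degree < ↑(m + 1) :=
    (degree_smul_le _ _).trans_lt (degree_nodal_univ_lt _)
  simp only [dixonAndersonMap]
  rw [← coeff_X_mul_eq_sum_residue hx hdeg, coeff_X_mul, coeff_smul, coeff_nodal_univ, smul_eq_mul,
    mul_one]

-- The factor `X ^ 2` shifts the indices so that no subtraction from `#s` is needed.
theorem coeff_X_sq_mul_nodal {ι : Type*} (s : Finset ι) (x : ι → ℝ) :
    (X ^ 2 * nodal s x).coeff #s = ((∑ i ∈ s, x i) ^ 2 - ∑ i ∈ s, x i ^ 2) / 2 ∧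
      (X ^ 2 * nodal s x).coeff (#s + 1) = -∑ i ∈ s, x i ∧
      (X ^ 2 * nodal s x).coeff (#s + 2) = 1 := by
  classical
  induction s using Finset.induction_on with
  | empty => simp [coeff_X_pow]
  | insert b s hb ih =>
    obtain ⟨h0, h1, h2⟩ := ih
    have h3 : (X ^ 2 * nodal s x).coeff (#s + 3) = 0 := by
      rw [show #s + 3 = (#s + 1) + 2 by ring, coeff_X_pow_mul]
      exact coeff_eq_zero_of_natDegree_lt (by simp)
    have hstep (k : ℕ) : (X ^ 2 * nodal (insert b s) x).coeff (k + 1) =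
        (X ^ 2 * nodal s x).coeff k - x b * (X ^ 2 * nodal s x).coeff (k + 1) := by
      rw [nodal_insert_eq_nodal hb, mul_left_comm, sub_mul, coeff_sub, coeff_X_mul, coeff_C_mul]
    rw [card_insert_of_notMem hb, hstep, hstep, hstep, h0, h1, h2, h3, sum_insert hb, sum_insert hb]
    exact ⟨by ring, by ring, by ring⟩

theorem arrowMap_zero {m : ℕ} (a : Fin m → ℝ) (x : Fin (m + 1) → ℝ) :
    arrowMap a x 0 = ∑ j, x j - ∑ i, a i := by
  obtain ⟨-, a1, -⟩ := coeff_X_sq_mul_nodal univ a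
  obtain ⟨-, x1, -⟩ := coeff_X_sq_mul_nodal univ x
  rw [card_univ, Fintype.card_fin] at a1 x1
  rw [arrowMap, residueCons_zero, ← coeff_X_pow_mul _ 2, mul_sub, coeff_sub, mul_left_comm,
    coeff_X_mul, a1, x1]
  ring

theorem sum_sq_eq_arrowMap {m : ℕ} {a : Fin m → ℝ} (ha : Function.Injective a)
    (x : Fin (m + 1) → ℝ) :
    ∑ j, x j ^ 2 = ∑ i, a i ^ 2 + arrowMap a x 0 ^ 2 + 2 * ∑ i : Fin m, arrowMap a x i.succ := by
  obtain ⟨a0, a1, -⟩ := coeff_X_sq_mul_nodal univ a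
  obtain ⟨x0, -, -⟩ := coeff_X_sq_mul_nodal univ x
  rw [card_univ, Fintype.card_fin] at a0 a1 x0
  set r := X * nodal univ a - nodal univ x - arrowMap a x 0 • nodal univ a with hr
  have hdeg : r.degree < m := by
    refine degree_lt_of_coeff_eq_zero ((degree_sub_le _ _).trans_lt (max_lt
      (degree_X_mul_nodal_sub_nodal_lt a x)
      ((degree_smul_le _ _).trans_lt (degree_nodal_univ_lt a)))) ?_
    rw [hr, coeff_sub, coeff_smul, coeff_nodal_univ, smul_eq_mul, mul_one]
    exact sub_self _
  have hres (i : Fin m) : residue a i r = arrowMap a x i.succ := by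
    simp [hr, arrowMap]
  have hsum := coeff_X_mul_eq_sum_residue ha hdeg
  have expand : X * (X * r) =
      X * (X ^ 2 * nodal univ a) - X ^ 2 * nodal univ x -
        arrowMap a x 0 • (X ^ 2 * nodal univ a) := by
    rw [hr, smul_eq_C_mul, smul_eq_C_mul]
    ring
  simp_rw [hres] at hsum
  rw [← coeff_X_mul, expand, coeff_sub, coeff_sub, coeff_smul, coeff_X_mul, a0, a1, x0,
    smul_eq_mul] at hsum
  rw [← hsum, arrowMap_zero]
  ring

/-! ### Integrals over interlacing configurations -/

theorem setLIntegral_fin_succ_mul {E : Type*} [MeasureSpace E] [SigmaFinite (volume : Measure E)]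
    {m : ℕ} (s : Set E) (t : Set (Fin m → E)) {f : E → ENNReal} {g : (Fin m → E) → ENNReal}
    (hf : AEMeasurable f (volume.restrict s)) (hg : AEMeasurable g (volume.restrict t)) :
    ∫⁻ y in {y : Fin (m + 1) → E | y 0 ∈ s ∧ Fin.tail y ∈ t}, f (y 0) * g (Fin.tail y) =
      (∫⁻ z in s, f z) * ∫⁻ a in t, g a := by
  rw [← lintegral_prod_mul hf hg, Measure.prod_restrict]
  exact (volume_preserving_piFinSuccAbove (fun _ => E) 0).setLIntegral_comp_preimage_emb
    (MeasurableEquiv.measurableEmbedding _) (fun p => f p.1 * g p.2) (s ×ˢ t)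

theorem setLIntegral_univ_pi_prod {E : Type*} [MeasureSpace E]
    [SigmaFinite (volume : Measure E)] {n : ℕ} (s : Fin n → Set E) {f : Fin n → E → ENNReal}
    (hf : ∀ i, Measurable (f i)) :
    ∫⁻ w in Set.univ.pi s, ∏ i, f i (w i) = ∏ i, ∫⁻ t in s i, f i t := by
  induction n with
  | zero => simp [volume_pi, lintegral_unique]
  | succ m ih =>
    have hset : Set.univ.pi s =
        {y : Fin (m + 1) → E | y 0 ∈ s 0 ∧ Fin.tail y ∈ Set.univ.pi fun i => s i.succ} := by
      ext y
      simp [Fin.forall_fin_succ, Fin.tail]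
    simp_rw [Fin.prod_univ_succ, hset]
    rw [← ih (fun i => s i.succ) fun i => hf i.succ]
    exact setLIntegral_fin_succ_mul (s 0) (Set.univ.pi fun i => s i.succ)
      (g := fun w => ∏ i, f (Fin.succ i) (w i)) (hf 0).aemeasurable
      (Measurable.aemeasurable (by fun_prop))

theorem setLIntegral_Ioi_rpow_mul_exp_neg {s : ℝ} (hs : 0 < s) :
    ∫⁻ t in Set.Ioi (0 : ℝ), ENNReal.ofReal (t ^ (s - 1) * exp (-t)) =
      ENNReal.ofReal (Gamma s) := by
  simp_rw [mul_comm _ (exp _)]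
  rw [Gamma_eq_integral hs, ofReal_integral_eq_lintegral_ofReal (GammaIntegral_convergent hs)]
  filter_upwards [ae_restrict_mem measurableSet_Ioi] with t ht
  exact mul_nonneg (exp_pos _).le (rpow_nonneg (Set.mem_Ioi.1 ht).le _)

theorem lintegral_exp_neg_sq_div_two :
    ∫⁻ t : ℝ, ENNReal.ofReal (exp (-t ^ 2 / 2)) = ENNReal.ofReal √(2 * π) := by
  have hform (t : ℝ) : exp (-t ^ 2 / 2) = exp (-(1 / 2) * t ^ 2) := congrArg exp (by ring)
  simp_rw [hform]
  rw [← ofReal_integral_eq_lintegral_ofReal (integrable_exp_neg_mul_sq (by norm_num))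
    (Filter.Eventually.of_forall fun _ => (exp_pos _).le), integral_gaussian, div_div_eq_mul_div,
    div_one, mul_comm]

theorem isOpen_interlace {m : ℕ} :
    IsOpen {p : (Fin (m + 1) → ℝ) × (Fin m → ℝ) | Interlace p.1 p.2} := by
  simp only [Interlace, Set.ofPred_forall]
  refine isOpen_iInter_of_finite fun i => IsOpen.and (isOpen_lt ?_ ?_) (isOpen_lt ?_ ?_) <;>
    fun_prop

theorem measurableSet_interlace_left {m : ℕ} (a : Fin m → ℝ) :
    MeasurableSet {x | Interlace x a} :=
  (isOpen_interlace.preimage (Continuous.prodMk_left a)).measurableSet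

theorem measurableSet_interlace_right {m : ℕ} (x : Fin (m + 1) → ℝ) :
    MeasurableSet {a | Interlace x a} :=
  (isOpen_interlace.preimage (Continuous.prodMk_right x)).measurableSet

theorem measurableSet_pos_interlace_tail {m : ℕ} (x : Fin (m + 1) → ℝ) :
    MeasurableSet {y : Fin (m + 1) → ℝ | 0 < y 0 ∧ Interlace x (Fin.tail y)} :=
  (measurableSet_lt measurable_const (measurable_pi_apply 0)).inter
    ((measurableSet_interlace_right x).preimage
      (measurable_pi_iff.2 fun i => measurable_pi_apply (Fin.succ i)))

theorem setLIntegral_dixonAndersonMap {m : ℕ} {x : Fin (m + 1) → ℝ} (hx : StrictMono x)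
    (F : (Fin (m + 1) → ℝ) → ENNReal) :
    ∫⁻ w in {w | ∀ i, 0 < w i}, F w = ∫⁻ y in {y | 0 < y 0 ∧ Interlace x (Fin.tail y)},
      ENNReal.ofReal (y 0 ^ m * (vandermonde (Fin.tail y)).det / (vandermonde x).det) *
        F (dixonAndersonMap x y) := by
  have hS := measurableSet_pos_interlace_tail x
  rw [← (bijOn_dixonAndersonMap hx).image_eq, lintegral_image_eq_lintegral_abs_det_fderiv_mul volume
    hS (fun y _ => (hasFDerivAt_dixonAndersonMap x y).hasFDerivWithinAt)
    (bijOn_dixonAndersonMap hx).injOn]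
  refine setLIntegral_congr_fun hS fun y hy => ?_
  rw [det_toContinuousLinearMap_toLin', abs_det_residue_nodal_cons hx hy.2.strictMono_right hy.1]

theorem setLIntegral_arrowMap {m : ℕ} {a : Fin m → ℝ} (ha : StrictMono a)
    (F : (Fin (m + 1) → ℝ) → ENNReal) :
    ∫⁻ w in {w | ∀ i : Fin m, 0 < w i.succ}, F w = ∫⁻ x in {x | Interlace x a},
      ENNReal.ofReal ((vandermonde x).det / (vandermonde a).det) * F (arrowMap a x) := by
  rw [← (bijOn_arrowMap ha).image_eq, lintegral_image_eq_lintegral_abs_det_fderiv_mul volume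
    (measurableSet_interlace_left a) (fun x _ => (hasFDerivAt_arrowMap a x).hasFDerivWithinAt)
    (bijOn_arrowMap ha).injOn]
  refine setLIntegral_congr_fun (measurableSet_interlace_left a) fun x hx => ?_
  rw [det_toContinuousLinearMap_toLin', abs_det_residueCons_nodal_erase hx.strictMono_left ha]

theorem setLIntegral_prod_rpow_mul_exp_neg {n : ℕ} {s : Fin n → ℝ} (hs : ∀ i, 0 < s i) :
    ∫⁻ w in {w : Fin n → ℝ | ∀ i, 0 < w i},
      ENNReal.ofReal (∏ i, (w i ^ (s i - 1) * exp (-w i))) = ENNReal.ofReal (∏ i, Gamma (s i)) := by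
  have hset : {w : Fin n → ℝ | ∀ i, 0 < w i} = Set.univ.pi fun _ => Set.Ioi 0 := by
    ext w
    simp
  have hmeas : MeasurableSet (Set.univ.pi fun _ : Fin n => Set.Ioi (0 : ℝ)) :=
    MeasurableSet.univ_pi fun _ => measurableSet_Ioi
  rw [ENNReal.ofReal_prod_of_nonneg fun i _ => (Gamma_pos_of_pos (hs i)).le]
  simp_rw [← setLIntegral_Ioi_rpow_mul_exp_neg (hs _)]
  rw [hset, ← setLIntegral_univ_pi_prod _ fun i => by fun_prop]
  refine setLIntegral_congr_fun hmeas fun w hw => ENNReal.ofReal_prod_of_nonneg fun i _ => ?_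
  have := Set.mem_Ioi.1 (hw i trivial)
  positivity

@[fun_prop]
theorem measurable_det_vandermonde {n : ℕ} :
    Measurable fun x : Fin n → ℝ => (vandermonde x).det := by
  simp_rw [det_vandermonde]
  fun_prop

theorem setLIntegral_interlace_left {m : ℕ} {a : Fin m → ℝ} (ha : StrictMono a) {s : Fin m → ℝ}
    (hs : ∀ i, 0 < s i) :
    ∫⁻ x in {x | Interlace x a}, ENNReal.ofReal ((vandermonde x).det *
        (∏ i, arrowMap a x (Fin.succ i) ^ (s i - 1)) * exp (-(∑ j, x j ^ 2) / 2)) =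
      ENNReal.ofReal (√(2 * π) * (∏ i, Gamma (s i)) *
        ((vandermonde a).det * exp (-(∑ i, a i ^ 2) / 2))) := by
  have hVa := det_vandermonde_pos ha
  have split := setLIntegral_fin_succ_mul Set.univ {w : Fin m → ℝ | ∀ i, 0 < w i}
    (f := fun t => ENNReal.ofReal (exp (-t ^ 2 / 2)))
    (g := fun w => ENNReal.ofReal (∏ i, (w i ^ (s i - 1) * exp (-w i))))
    (by fun_prop) (by fun_prop)
  rw [setLIntegral_univ, lintegral_exp_neg_sq_div_two, setLIntegral_prod_rpow_mul_exp_neg hs,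
    ← ENNReal.ofReal_mul (sqrt_nonneg _)] at split
  rw [mul_comm, ENNReal.ofReal_mul (by positivity), ← split]
  simp only [Set.mem_univ, true_and, Fin.tail, Set.mem_ofPred_eq]
  rw [setLIntegral_arrowMap ha, ← lintegral_const_mul' _ _ ENNReal.ofReal_ne_top]
  refine setLIntegral_congr_fun (measurableSet_interlace_left a) fun x hx => ?_
  have hVx := det_vandermonde_pos hx.strictMono_left
  rw [← ENNReal.ofReal_mul (exp_pos _).le, ← ENNReal.ofReal_mul (by positivity),
    ← ENNReal.ofReal_mul (by positivity), prod_mul_distrib, ← exp_sum, sum_neg_distrib,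
    sum_sq_eq_arrowMap ha.injective, show ∀ p q r : ℝ, -(p + q + 2 * r) / 2 =
      -p / 2 + -q / 2 + -r from fun _ _ _ => by ring, exp_add, exp_add]
  congr 1
  field_simp

theorem prod_dixonAndersonMap_rpow {m : ℕ} {x y : Fin (m + 1) → ℝ} (hy0 : 0 < y 0)
    (hy : Interlace x (Fin.tail y)) (s : Fin (m + 1) → ℝ) :
    y 0 ^ m * ∏ i, dixonAndersonMap x y i ^ (s i - 1) =
      y 0 ^ (∑ i, s i - 1) * ∏ i, residue x i (nodal univ (Fin.tail y)) ^ (s i - 1) := by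
  simp_rw [dixonAndersonMap, map_smul, smul_eq_mul,
    mul_rpow hy0.le (hy.residue_left_pos _).le, prod_mul_distrib, ← rpow_sum_of_pos hy0]
  rw [← mul_assoc, ← rpow_natCast, ← rpow_add hy0]
  congr 2
  simp only [sum_sub_distrib, sum_const, card_univ, Fintype.card_fin, nsmul_eq_mul, Nat.cast_succ,
    mul_one]
  ring

/-- The **Dixon–Anderson integral**. -/
theorem setLIntegral_interlace_right {m : ℕ} {x : Fin (m + 1) → ℝ} (hx : StrictMono x)
    {s : Fin (m + 1) → ℝ} (hs : ∀ i, 0 < s i) :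
    ENNReal.ofReal (Gamma (∑ i, s i)) * ∫⁻ a in {a | Interlace x a},
        ENNReal.ofReal ((vandermonde a).det * ∏ i, residue x i (nodal univ a) ^ (s i - 1)) =
      ENNReal.ofReal ((vandermonde x).det * ∏ i, Gamma (s i)) := by
  have hVx := det_vandermonde_pos hx
  have hsum : 0 < ∑ i, s i := sum_pos (fun i _ => hs i) univ_nonempty
  have hmeas : Measurable fun a : Fin m → ℝ =>
      ENNReal.ofReal ((vandermonde a).det * ∏ i, residue x i (nodal univ a) ^ (s i - 1)) := by
    simp_rw [residue_apply, eval_nodal]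
    fun_prop
  rw [← setLIntegral_Ioi_rpow_mul_exp_neg hsum, ← setLIntegral_fin_succ_mul _ _ (by fun_prop)
    hmeas.aemeasurable, ENNReal.ofReal_mul hVx.le, ← setLIntegral_prod_rpow_mul_exp_neg hs,
    setLIntegral_dixonAndersonMap hx, ← lintegral_const_mul' _ _ ENNReal.ofReal_ne_top]
  refine setLIntegral_congr_fun (measurableSet_pos_interlace_tail x) fun y hy => ?_
  obtain ⟨hy0, hy⟩ := hy
  have hVy := det_vandermonde_pos hy.strictMono_right
  rw [← ENNReal.ofReal_mul (mul_nonneg (rpow_nonneg hy0.le _) (exp_pos _).le),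
    ← ENNReal.ofReal_mul (div_nonneg (mul_nonneg (pow_nonneg hy0.le m) hVy.le) hVx.le),
    ← ENNReal.ofReal_mul hVx.le, prod_mul_distrib, ← exp_sum, sum_neg_distrib,
    sum_dixonAndersonMap hx.injective]
  congr 1
  have h := prod_dixonAndersonMap_rpow hy0 hy s
  field_simp
  linear_combination (-1 : ℝ) * h

/-! ### Integrating out one layer of an interlacing pair -/

/-- The unnormalized density of the Gaussian `β`-ensemble with `β = 2 * γ`. -/
noncomputable def ensembleWeight {n : ℕ} (γ : ℝ) (x : Fin n → ℝ) : ℝ :=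
  |(vandermonde x).det| ^ (2 * γ) * exp (-(∑ i, x i ^ 2) / 2)

/-- A joint density for interlacing pairs both of whose marginals are proportional to
`ensembleWeight γ`; for `γ = 1 / 2` and `γ = 1` it describes the eigenvalues of a Gaussian matrix
and of its principal minor. -/
noncomputable def interlaceWeight {m : ℕ} (γ : ℝ) (x : Fin (m + 1) → ℝ) (a : Fin m → ℝ) : ℝ :=
  (vandermonde x).det * (vandermonde a).det * (∏ i, ∏ j, |x i - a j|) ^ (γ - 1) *
    exp (-(∑ i, x i ^ 2) / 2)

theorem abs_prod_residue_nodal {m n : ℕ} (x : Fin n → ℝ) (a : Fin m → ℝ) :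
    |∏ i, residue x i (nodal univ a)| =
      ((vandermonde x).det ^ 2)⁻¹ * ∏ i, ∏ j, |x i - a j| := by
  simp_rw [residue_apply, prod_mul_distrib, eval_nodal, abs_mul, abs_prod_nodalWeight, abs_prod]

theorem Interlace.prod_residue_left {m : ℕ} {x : Fin (m + 1) → ℝ} {a : Fin m → ℝ}
    (h : Interlace x a) : ∏ i, residue x i (nodal univ a) =
      ((vandermonde x).det ^ 2)⁻¹ * ∏ i, ∏ j, |x i - a j| := by
  rw [← abs_prod_residue_nodal, abs_of_pos (prod_pos fun i _ => h.residue_left_pos i)]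

theorem Interlace.arrowMap_succ_pos {m : ℕ} {x : Fin (m + 1) → ℝ} {a : Fin m → ℝ}
    (h : Interlace x a) (i : Fin m) : 0 < arrowMap a x i.succ := by
  rw [arrowMap_succ]
  exact neg_pos.2 (h.residue_right_neg i)

theorem Interlace.prod_arrowMap_succ {m : ℕ} {x : Fin (m + 1) → ℝ} {a : Fin m → ℝ}
    (h : Interlace x a) : ∏ i : Fin m, arrowMap a x i.succ =
      ((vandermonde a).det ^ 2)⁻¹ * ∏ i, ∏ j, |x i - a j| := by
  rw [← abs_of_pos (prod_pos fun i _ => h.arrowMap_succ_pos i), prod_comm]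
  simp_rw [arrowMap_succ, abs_sub_comm (x _)]
  rw [← abs_prod_residue_nodal, abs_prod, abs_prod]
  simp_rw [abs_neg]

theorem mul_inv_sq_mul_rpow {v c : ℝ} (hv : 0 < v) (hc : 0 ≤ c) (γ : ℝ) :
    v ^ (2 * γ) * ((v ^ 2)⁻¹ * c) ^ (γ - 1) = v ^ 2 * c ^ (γ - 1) := by
  rw [mul_rpow (by positivity) hc, inv_rpow (by positivity), ← rpow_natCast, ← rpow_mul hv.le,
    ← rpow_neg hv.le, ← mul_assoc, ← rpow_add hv]
  congr 2
  push_cast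
  ring

theorem setLIntegral_interlaceWeight_left {m : ℕ} {a : Fin m → ℝ} (ha : StrictMono a) {γ : ℝ}
    (hγ : 0 < γ) :
    ∫⁻ x in {x | Interlace x a}, ENNReal.ofReal (interlaceWeight γ x a) =
      ENNReal.ofReal (√(2 * π) * Gamma γ ^ m) * ENNReal.ofReal (ensembleWeight γ a) := by
  have hVa := det_vandermonde_pos ha
  have h := setLIntegral_interlace_left ha (s := fun _ => γ) fun _ => hγ
  have hG := Gamma_pos_of_pos hγ
  have hw : ensembleWeight γ a = (vandermonde a).det ^ (2 * γ) * (vandermonde a).det⁻¹ *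
      ((vandermonde a).det * exp (-(∑ i, a i ^ 2) / 2)) := by
    rw [ensembleWeight, abs_of_pos hVa]
    field_simp
  rw [hw, ← ENNReal.ofReal_mul (by positivity), mul_left_comm, ENNReal.ofReal_mul (by positivity)]
  rw [prod_const, card_univ, Fintype.card_fin] at h
  rw [← h, ← lintegral_const_mul' _ _ ENNReal.ofReal_ne_top]
  refine setLIntegral_congr_fun (measurableSet_interlace_left a) fun x hx => ?_
  rw [← ENNReal.ofReal_mul (by positivity), finsetProd_rpow _ _
    fun i _ => (hx.arrowMap_succ_pos i).le, hx.prod_arrowMap_succ, interlaceWeight]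
  congr 1
  have key := mul_inv_sq_mul_rpow hVa (c := ∏ i, ∏ j, |x i - a j|) (by positivity) γ
  field_simp at key ⊢
  linear_combination (-(vandermonde x).det) * key

theorem setLIntegral_interlaceWeight_right {m : ℕ} {x : Fin (m + 1) → ℝ} (hx : StrictMono x)
    {γ : ℝ} (hγ : 0 < γ) :
    ENNReal.ofReal (Gamma ((m + 1) * γ)) *
        ∫⁻ a in {a | Interlace x a}, ENNReal.ofReal (interlaceWeight γ x a) =
      ENNReal.ofReal (Gamma γ ^ (m + 1)) * ENNReal.ofReal (ensembleWeight γ x) := by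
  have hVx := det_vandermonde_pos hx
  have h := setLIntegral_interlace_right hx (s := fun _ => γ) fun _ => hγ
  have hG := Gamma_pos_of_pos hγ
  have hw : ensembleWeight γ x = (vandermonde x).det ^ (2 * γ) * (vandermonde x).det⁻¹ *
      exp (-(∑ i, x i ^ 2) / 2) * (vandermonde x).det := by
    rw [ensembleWeight, abs_of_pos hVx]
    field_simp
  rw [hw, ← ENNReal.ofReal_mul (by positivity), mul_left_comm, ENNReal.ofReal_mul (by positivity)]
  rw [prod_const, sum_const, card_univ, Fintype.card_fin, nsmul_eq_mul, Nat.cast_succ] at h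
  rw [mul_comm (Gamma γ ^ _), ← h, mul_left_comm]
  congr 1
  rw [← lintegral_const_mul' _ _ ENNReal.ofReal_ne_top]
  refine setLIntegral_congr_fun (measurableSet_interlace_right x) fun a ha => ?_
  rw [← ENNReal.ofReal_mul (by positivity), finsetProd_rpow _ _
    fun i _ => (ha.residue_left_pos i).le, ha.prod_residue_left, interlaceWeight]
  congr 1
  have key := mul_inv_sq_mul_rpow hVx (c := ∏ i, ∏ j, |x i - a j|) (by positivity) γ
  field_simp at key ⊢
  linear_combination (-(vandermonde a).det) * key

theorem measurableSet_strictMono {n : ℕ} : MeasurableSet {x : Fin n → ℝ | StrictMono x} := by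
  simp only [StrictMono, Set.ofPred_forall]
  exact MeasurableSet.iInter fun i => MeasurableSet.iInter fun j => MeasurableSet.iInter fun _ =>
    measurableSet_lt (measurable_pi_apply i) (measurable_pi_apply j)

theorem lintegral_setLIntegral_swap {α β : Type*} [MeasurableSpace α] [MeasurableSpace β]
    {μ : Measure α} {ν : Measure β} [SFinite μ] [SFinite ν] {S : Set (α × β)}
    (hS : MeasurableSet S) {F : α → β → ENNReal} (hF : Measurable (Function.uncurry F)) :
    ∫⁻ x, ∫⁻ a in {a | (x, a) ∈ S}, F x a ∂ν ∂μ =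
      ∫⁻ a, ∫⁻ x in {x | (x, a) ∈ S}, F x a ∂μ ∂ν := by
  have hswap := lintegral_lintegral_swap (μ := μ) (ν := ν)
    (f := fun x a => S.indicator (Function.uncurry F) (x, a)) (hF.indicator hS).aemeasurable
  convert! hswap using 2
  · funext x
    exact (lintegral_indicator (measurable_prodMk_left hS) (F x)).symm
  · funext a
    exact (lintegral_indicator (measurable_prodMk_right hS) fun x => F x a).symm

theorem setLIntegral_interlace_swap {m : ℕ} {F : (Fin (m + 1) → ℝ) → (Fin m → ℝ) → ENNReal}
    (hF : Measurable (Function.uncurry F)) :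
    ∫⁻ x in {x | StrictMono x}, ∫⁻ a in {a | Interlace x a}, F x a =
      ∫⁻ a in {a | StrictMono a}, ∫⁻ x in {x | Interlace x a}, F x a := by
  rw [setLIntegral_eq_of_support_subset, setLIntegral_eq_of_support_subset]
  · exact lintegral_setLIntegral_swap isOpen_interlace.measurableSet hF
  · refine Function.support_subset_iff'.2 fun a ha => ?_
    have hempty : {x | Interlace x a} = ∅ :=
      Set.eq_empty_of_forall_notMem fun x hx => ha hx.strictMono_right
    rw [hempty, setLIntegral_empty]
  · refine Function.support_subset_iff'.2 fun x hx => ?_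
    have hempty : {a | Interlace x a} = ∅ :=
      Set.eq_empty_of_forall_notMem fun a ha => hx ha.strictMono_left
    rw [hempty, setLIntegral_empty]

/-- The total weight of the Gaussian `β`-ensemble, `β = 2 * γ`, on the chamber of increasing
configurations. -/
noncomputable def chamberIntegral (γ : ℝ) (n : ℕ) : ENNReal :=
  ∫⁻ x in {x : Fin n → ℝ | StrictMono x}, ENNReal.ofReal (ensembleWeight γ x)

theorem chamberIntegral_zero (γ : ℝ) : chamberIntegral γ 0 = 1 := by
  have hset : {x : Fin 0 → ℝ | StrictMono x} = Set.univ :=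
    Set.eq_univ_of_forall fun x => Subsingleton.strictMono x
  simp [chamberIntegral, hset, ensembleWeight, volume_pi, lintegral_unique]

theorem chamberIntegral_succ {γ : ℝ} (hγ : 0 < γ) (m : ℕ) :
    ENNReal.ofReal (Gamma γ ^ (m + 1)) * chamberIntegral γ (m + 1) =
      ENNReal.ofReal (Gamma ((m + 1) * γ)) *
        (ENNReal.ofReal (√(2 * π) * Gamma γ ^ m) * chamberIntegral γ m) := by
  have hF : Measurable (Function.uncurry fun (x : Fin (m + 1) → ℝ) (a : Fin m → ℝ) =>
      ENNReal.ofReal (interlaceWeight γ x a)) := by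
    simp_rw [Function.uncurry_def, interlaceWeight, det_vandermonde]
    fun_prop
  simp_rw [chamberIntegral, ← lintegral_const_mul' _ _ ENNReal.ofReal_ne_top]
  rw [← setLIntegral_congr_fun measurableSet_strictMono fun x hx =>
    setLIntegral_interlaceWeight_right hx hγ, lintegral_const_mul' _ _ ENNReal.ofReal_ne_top,
    setLIntegral_interlace_swap hF, lintegral_const_mul' _ _ ENNReal.ofReal_ne_top]
  congr 1
  exact setLIntegral_congr_fun measurableSet_strictMono fun a ha =>
    setLIntegral_interlaceWeight_left ha hγ

theorem chamberIntegral_eq {γ : ℝ} (hγ : 0 < γ) (n : ℕ) :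
    chamberIntegral γ n =
      ENNReal.ofReal (√(2 * π) ^ n * ∏ k ∈ Icc 1 n, (Gamma (k * γ) / Gamma γ)) := by
  have hG := Gamma_pos_of_pos hγ
  induction n with
  | zero => simp [chamberIntegral_zero]
  | succ m ih =>
    have hne : ENNReal.ofReal (Gamma γ ^ (m + 1)) ≠ 0 := by
      simpa using pow_pos hG (m + 1)
    have hGm : 0 < Gamma ((m + 1) * γ) := Gamma_pos_of_pos (by positivity)
    refine (ENNReal.mul_right_inj hne ENNReal.ofReal_ne_top).1 ?_
    rw [chamberIntegral_succ hγ, ih, ← ENNReal.ofReal_mul (by positivity),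
      ← ENNReal.ofReal_mul hGm.le, ← ENNReal.ofReal_mul (by positivity),
      prod_Icc_succ_top (by omega)]
    congr 1
    have hG' := hG.ne'
    push_cast
    rw [pow_succ, pow_succ]
    field_simp

/-! ### Symmetrization and linear substitutions -/

theorem lintegral_comp_equiv {ι E : Type*} [Fintype ι] [MeasureSpace E]
    [SigmaFinite (volume : Measure E)] (σ : ι ≃ ι) (f : (ι → E) → ENNReal) :
    ∫⁻ x : ι → E, f (x ∘ σ) = ∫⁻ x, f x :=
  (volume_preserving_arrowCongr' σ.symm (MeasurableEquiv.refl E)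
    (MeasurePreserving.id volume)).lintegral_comp_emb (MeasurableEquiv.measurableEmbedding _) f

theorem eq_sum_perm_indicator_strictMono {E M : Type*} [LinearOrder E] [AddCommMonoid M] {n : ℕ}
    {f : (Fin n → E) → M} (hsymm : ∀ (σ : Equiv.Perm (Fin n)) x, f (x ∘ σ) = f x)
    (hzero : ∀ x, ¬Function.Injective x → f x = 0) (x : Fin n → E) :
    f x = ∑ σ : Equiv.Perm (Fin n), {y | StrictMono y}.indicator f (x ∘ σ) := by
  by_cases hx : Function.Injective x
  · rw [sum_eq_single (Tuple.sort x), Set.indicator_of_mem, hsymm]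
    · exact (Tuple.monotone_sort x).strictMono_of_injective (hx.comp (Tuple.sort x).injective)
    · refine fun σ _ hσ => Set.indicator_of_notMem (fun h => hσ ?_) _
      have hsort := Tuple.unique_monotone (StrictMono.monotone h) (Tuple.monotone_sort x)
      exact Equiv.ext fun i => hx (congrFun hsort i)
    · simp
  · rw [hzero x hx, eq_comm]
    refine sum_eq_zero fun σ _ => Set.indicator_of_notMem (fun h => hx ?_) _
    exact σ.injective_comp x |>.1 (StrictMono.injective h)

theorem lintegral_eq_factorial_mul {n : ℕ} {f : (Fin n → ℝ) → ENNReal} (hf : Measurable f)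
    (hsymm : ∀ (σ : Equiv.Perm (Fin n)) x, f (x ∘ σ) = f x)
    (hzero : ∀ x, ¬Function.Injective x → f x = 0) :
    ∫⁻ x, f x = n.factorial * ∫⁻ x in {x | StrictMono x}, f x := by
  have hg : Measurable ({x : Fin n → ℝ | StrictMono x}.indicator f) :=
    hf.indicator measurableSet_strictMono
  rw [lintegral_congr (eq_sum_perm_indicator_strictMono hsymm hzero),
    lintegral_finsetSum _ fun σ _ => by fun_prop]
  simp_rw [lintegral_comp_equiv]
  rw [sum_const, card_univ, Fintype.card_perm, Fintype.card_fin, nsmul_eq_mul,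
    lintegral_indicator measurableSet_strictMono]

theorem abs_det_vandermonde_comp_perm {n : ℕ} (x : Fin n → ℝ) (σ : Equiv.Perm (Fin n)) :
    |(vandermonde (x ∘ σ)).det| = |(vandermonde x).det| := by
  rw [show vandermonde (x ∘ σ) = (vandermonde x).submatrix σ id from rfl, det_permute, abs_mul]
  rcases Int.units_eq_one_or (Equiv.Perm.sign σ) with h | h <;> simp [h]

theorem ensembleWeight_nonneg {n : ℕ} (γ : ℝ) (x : Fin n → ℝ) : 0 ≤ ensembleWeight γ x := by
  unfold ensembleWeight
  positivity

@[fun_prop]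
theorem measurable_ensembleWeight {n : ℕ} (γ : ℝ) :
    Measurable (ensembleWeight γ : (Fin n → ℝ) → ℝ) := by
  unfold ensembleWeight
  fun_prop

/-- **Mehta's integral.** -/
theorem integral_ensembleWeight {γ : ℝ} (hγ : 0 < γ) (n : ℕ) :
    ∫ x : Fin n → ℝ, ensembleWeight γ x =
      n.factorial * (√(2 * π) ^ n * ∏ k ∈ Icc 1 n, (Gamma (k * γ) / Gamma γ)) := by
  have hprod : 0 ≤ ∏ k ∈ Icc 1 n, (Gamma (k * γ) / Gamma γ) := prod_nonneg fun k _ =>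
    div_nonneg (Gamma_nonneg_of_nonneg (by positivity)) (Gamma_pos_of_pos hγ).le
  rw [integral_eq_lintegral_of_nonneg_ae (.of_forall (ensembleWeight_nonneg γ)) (by fun_prop),
    lintegral_eq_factorial_mul (by fun_prop) (fun σ x => ?_) (fun x hx => ?_),
    ← chamberIntegral, chamberIntegral_eq hγ, ENNReal.toReal_mul, ENNReal.toReal_natCast,
    ENNReal.toReal_ofReal (mul_nonneg (by positivity) hprod)]
  · rw [ensembleWeight, abs_det_vandermonde_comp_perm, ensembleWeight]
    simp_rw [Function.comp_apply]
    rw [Equiv.sum_comp σ fun i => x i ^ 2]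
  · have hV : (vandermonde x).det = 0 := by
      rwa [← not_ne_iff, det_vandermonde_ne_zero_iff]
    rw [ensembleWeight, hV, abs_zero, zero_rpow (by positivity), zero_mul, ENNReal.ofReal_zero]

theorem integral_comp_mulVec {ι F : Type*} [Fintype ι] [DecidableEq ι] [NormedAddCommGroup F]
    [NormedSpace ℝ F] {M : Matrix ι ι ℝ} (hM : M.det ≠ 0) (f : (ι → ℝ) → F) :
    ∫ x, f (M *ᵥ x) = |M.det|⁻¹ • ∫ x, f x := by
  have hemb : MeasurableEmbedding (Matrix.toLin' M) :=
    (Matrix.toLin' M).continuous_of_finiteDimensional.measurableEmbedding <|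
      Matrix.mulVec_injective_iff_isUnit.2 ((Matrix.isUnit_iff_isUnit_det M).2 hM.isUnit)
  simp_rw [← Matrix.toLin'_apply]
  rw [← hemb.integral_map, Real.map_matrix_volume_pi_eq_smul_volume_pi hM, integral_smul_measure,
    ENNReal.toReal_ofReal (abs_nonneg _), abs_inv]

theorem det_one_add_of_const {R ι : Type*} [CommRing R] [Fintype ι] [DecidableEq ι] (κ : R) :
    (1 + Matrix.of fun _ _ : ι => κ).det = 1 + κ * Fintype.card ι := by
  have hrank : (Matrix.of fun _ _ : ι => κ) =
      Matrix.replicateCol Unit (fun _ : ι => κ) *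
        Matrix.replicateRow Unit fun _ : ι => (1 : R) := by
    ext i j
    simp [Matrix.mul_apply]
  rw [hrank, Matrix.det_one_add_replicateCol_mul_replicateRow]
  simp [dotProduct, mul_comm]

theorem integral_mul_exp_neg_add_sq_sum {ι : Type*} [Fintype ι] {g : (ι → ℝ) → ℝ}
    (hg : ∀ x t, g (fun i => x i + t) = g x) {b : ℝ} (hb : 0 < 1 + b * Fintype.card ι) :
    ∫ x : ι → ℝ, g x * exp (-(∑ i, x i ^ 2 + b * (∑ i, x i) ^ 2) / 2) =
      (√(1 + b * Fintype.card ι))⁻¹ * ∫ x : ι → ℝ, g x * exp (-(∑ i, x i ^ 2) / 2) := by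
  classical
  set r := √(1 + b * Fintype.card ι)
  have hr0 : 0 < r := sqrt_pos.2 hb
  have hr2 : r ^ 2 = 1 + b * Fintype.card ι := sq_sqrt hb.le
  set κ := b / (r + 1) with hκ
  have hκr : 1 + κ * Fintype.card ι = r := by
    rw [hκ]
    field_simp
    linear_combination -hr2
  have hκb : 2 * κ + κ ^ 2 * Fintype.card ι = b := by
    have h : κ * (r + 1) = b := div_mul_cancel₀ b (by positivity)
    linear_combination h + κ * hκr
  have hdet : (1 + Matrix.of fun _ _ : ι => κ).det = r := by rw [det_one_add_of_const, hκr]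
  have hmul (x : ι → ℝ) (i : ι) :
      ((1 + Matrix.of fun _ _ : ι => κ) *ᵥ x) i = x i + κ * ∑ j, x j := by
    rw [Matrix.add_mulVec, Matrix.one_mulVec, Pi.add_apply, mul_sum]
    rfl
  have hsq (x : ι → ℝ) : ∑ i, ((1 + Matrix.of fun _ _ : ι => κ) *ᵥ x) i ^ 2 =
      ∑ i, x i ^ 2 + b * (∑ i, x i) ^ 2 := by
    simp_rw [hmul, add_sq, sum_add_distrib, ← sum_mul, ← mul_sum, sum_const, card_univ,
      nsmul_eq_mul]
    linear_combination (∑ i, x i) ^ 2 * hκb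
  have h := integral_comp_mulVec (by rw [hdet]; exact hr0.ne')
    fun x : ι → ℝ => g x * exp (-(∑ i, x i ^ 2) / 2)
  simp_rw [hsq, funext (hmul _), hg] at h
  rw [h, hdet, abs_of_pos hr0, smul_eq_mul]

theorem det_vandermonde_smul {R : Type*} [CommRing R] {n : ℕ} (s : R) (x : Fin n → R) :
    (vandermonde (s • x)).det = s ^ n.choose 2 * (vandermonde x).det := by
  have hmat : vandermonde (s • x) =
      Matrix.of fun i (j : Fin n) => s ^ (j : ℕ) * vandermonde x i j := by
    ext i j
    simp [vandermonde_apply, mul_pow]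
  rw [hmat, det_mul_row, prod_pow_eq_pow_sum, Fin.sum_univ_eq_sum_range fun k => k, sum_range_id,
    Nat.choose_two_right]

theorem abs_det_vandermonde_rpow {n : ℕ} (x : Fin n → ℝ) (p : ℝ) :
    |(vandermonde x).det| ^ p = ∏ i, ∏ j ∈ univ.filter fun j => i < j, |x j - x i| ^ p := by
  simp_rw [Finset.filter_lt_eq_Ioi, det_vandermonde, abs_prod]
  rw [← finsetProd_rpow _ _ fun i _ => prod_nonneg fun j _ => abs_nonneg _]
  exact prod_congr rfl fun i _ => (finsetProd_rpow _ _ (fun j _ => abs_nonneg _) p).symm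

theorem sqrt_pow_mul_abs_pow_choose_two_rpow {t : ℝ} (ht : 0 < t) (γ : ℝ) (n : ℕ) :
    √t ^ n * |√t ^ n.choose 2| ^ (2 * γ) = t ^ ((n : ℝ) / 2 + γ * (n * (n - 1)) / 2) := by
  rw [abs_of_pos (pow_pos (sqrt_pos.2 ht) _), sqrt_eq_rpow, ← rpow_natCast, ← rpow_natCast,
    ← rpow_mul ht.le, ← rpow_mul ht.le, ← rpow_mul ht.le, ← rpow_add ht, Nat.cast_choose_two]
  congr 1
  ring

theorem integral_eq_sqrt_pow_mul {n : ℕ} {t : ℝ} (ht : 0 < t) (f : (Fin n → ℝ) → ℝ) :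
    ∫ x, f x = √t ^ n * ∫ x, f (√t • x) := by
  have hs : 0 < √t := sqrt_pos.2 ht
  rw [Measure.integral_comp_smul_of_nonneg volume f _ (hR := hs.le), Module.finrank_fin_fun,
    smul_eq_mul, mul_inv_cancel_left₀ (pow_pos hs n).ne']

theorem exponent_sqrt_smul {ι : Type*} [Fintype ι] {t : ℝ} (ht : 0 < t) (α : ℝ) (x : ι → ℝ) :
    -α * (∑ i, (√t • x) i) ^ 2 - 1 / (2 * t) * ∑ i, (√t • x) i ^ 2 =
      -(∑ i, x i ^ 2 + 2 * α * t * (∑ i, x i) ^ 2) / 2 := by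
  simp_rw [Pi.smul_apply, smul_eq_mul, mul_pow, ← mul_sum, mul_pow, sq_sqrt ht.le]
  field_simp
  ring

end MehtaIntegral

open MehtaIntegral

theorem stmt_7_general (N : ℕ) {γ : ℝ} (hγ : 0 < γ) {c : ℝ} (hc : -1 < c) {α : ℝ}
    (hα : 0 < 1 + 2 * α * (1 + c) * N) :
    (∫ lam : Fin N → ℝ,
        Real.exp (-α * (∑ i, lam i) ^ 2 - (1 / (2 * (1 + c))) * ∑ i, lam i ^ 2)
          * ∏ i, ∏ j ∈ Finset.univ.filter fun j => i < j, |lam j - lam i| ^ (2 * γ))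
      = (N.factorial : ℝ) * (2 * π) ^ ((N : ℝ) / 2)
          * (∏ k ∈ Finset.Icc 1 N, Real.Gamma (k * γ) / Real.Gamma γ)
          * (1 + c) ^ ((N : ℝ) / 2 + γ * (N * (N - 1)) / 2)
          / Real.sqrt (1 + 2 * α * (1 + c) * N) := by
  have hc' : 0 < 1 + c := by linarith
  have hshift := integral_mul_exp_neg_add_sq_sum (ι := Fin N)
    (g := fun x => |(Matrix.vandermonde x).det| ^ (2 * γ)) (b := 2 * α * (1 + c))
    (fun x t => by rw [Matrix.det_vandermonde_add]) (by simpa using hα)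
  have hmehta : ∫ x : Fin N → ℝ, |(Matrix.vandermonde x).det| ^ (2 * γ) *
      exp (-(∑ i, x i ^ 2) / 2) = _ := integral_ensembleWeight hγ N
  simp_rw [← abs_det_vandermonde_rpow]
  rw [integral_eq_sqrt_pow_mul hc']
  simp_rw [exponent_sqrt_smul hc', det_vandermonde_smul, abs_mul,
    mul_rpow (abs_nonneg _) (abs_nonneg _), mul_left_comm (exp _)]
  rw [integral_const_mul, ← mul_assoc, sqrt_pow_mul_abs_pow_choose_two_rpow hc',
    rpow_div_two_eq_sqrt _ two_pi_pos.le, rpow_natCast]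
  simp_rw [mul_comm (exp _)]
  rw [hshift, hmehta, Fintype.card_fin]
  ring

/-- Selberg-type Gaussian integral with a Vandermonde factor and a rank-one
perturbation of the quadratic form. -/
theorem stmt_7 (N : ℕ) (hN : 1 ≤ N) (c : ℝ) (hc : -1 < c) (α : ℝ)
    (hα : 0 < 1 + 2 * α * (1 + c) * N) :
    (∫ lam : Fin N → ℝ,
        Real.exp (-α * (∑ i, lam i) ^ 2 - (1 / (2 * (1 + c))) * ∑ i, lam i ^ 2)
          * ∏ i, ∏ j ∈ Finset.univ.filter fun j => i < j, |lam j - lam i|)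
      = (N.factorial : ℝ) * (2 * π) ^ ((N : ℝ) / 2)
          * (∏ k ∈ Finset.Icc 1 N, Real.Gamma ((k : ℝ) / 2) / Real.Gamma (1 / 2))
          * (1 + c) ^ ((N * (N + 1) : ℝ) / 4)
          / Real.sqrt (1 + 2 * α * (1 + c) * N) := by
  have hexp : (N * (N + 1) : ℝ) / 4 = (N : ℝ) / 2 + 1 / 2 * (N * (N - 1)) / 2 := by ring
  simpa [hexp, div_eq_mul_inv] using stmt_7_general N one_half_pos hc hα
end

section
/- Let N ≥ 2 be an integer, c > −1, and α a real number with 1 + 2α(1+c)N > 0. Then ∫_{ℝ^N} exp(−α(∑_{i=1}^N λ_i)² − (1/(2(1+c)))∑_{i=1}^N λ_i²) ∏_{2≤i<j≤N} |λ_j − λ_i| dλ_1⋯dλ_N = √(1+c) · (N−1)! (2π)^{N/2} (∏_{k=1}^{N−1} Γ(k/2)/Γ(1/2)) (1+c)^{N(N−1)/4} / √(1 + 2α(1+c)N). -/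
open MeasureTheory Finset Real

/-!
Everything reduces to Mehta's integral `∫ exp (-|x|² / 2) ∏_{i < j} |xⱼ - xᵢ| ^ β`. The factor
`∏_{2 ≤ i < j} |xⱼ - xᵢ|` is invariant under translations along `(1, …, 1)`, so a shear in that
direction absorbs the term `α (∑ xᵢ)²` at the cost of its determinant `√(1 + 2 α (1 + c) N)`.
Homogeneity then scales the variance `1 + c` to `1`, and the first variable splits off.

For a natural number `β`, Mehta's integral is a limit of Laguerre integrals
`∫_{x > 0} ∏ xᵢ ^ m exp (-xᵢ) ∏_{i < j} |xⱼ - xᵢ| ^ β`: recentred at `m` and rescaled by `√m`, the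
density `t ^ m exp (-t)` becomes Gaussian as `m → ∞`. The Laguerre integrals are evaluated by
Aomoto's method. Integrating by parts in one variable and symmetrising raises the exponents from
`m` to `m + 1` one at a time. In exponent `0` only the boundary face contributes, and it is the
integral with one variable fewer and exponent `β`, which starts the same recursion again.
-/

section AbsVandermonde

/-- The absolute value of the Vandermonde determinant, `∏_{i < j} |xⱼ - xᵢ|`. -/
noncomputable def absVandermonde {n : ℕ} (x : Fin n → ℝ) : ℝ :=
  ∏ i, ∏ j ∈ Ioi i, |x j - x i|

variable {n : ℕ}

lemma absVandermonde_nonneg (x : Fin n → ℝ) : 0 ≤ absVandermonde x :=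
  prod_nonneg fun _ _ ↦ prod_nonneg fun _ _ ↦ abs_nonneg _

@[fun_prop]
lemma continuous_absVandermonde : Continuous (absVandermonde (n := n)) := by
  unfold absVandermonde
  fun_prop

lemma absVandermonde_eq_abs_det (x : Fin n → ℝ) :
    absVandermonde x = |(Matrix.vandermonde x).det| := by
  simp_rw [Matrix.det_vandermonde, abs_prod, absVandermonde]

lemma absVandermonde_comp_perm (σ : Equiv.Perm (Fin n)) (x : Fin n → ℝ) :
    absVandermonde (x ∘ σ) = absVandermonde x := by
  have h : Matrix.vandermonde (x ∘ σ) = (Matrix.vandermonde x).submatrix σ id := rfl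
  rw [absVandermonde_eq_abs_det, absVandermonde_eq_abs_det, h, Matrix.det_permute, abs_mul]
  simp [← Int.cast_abs]

lemma absVandermonde_eq_zero {x : Fin n → ℝ} {i j : Fin n} (hij : i ≠ j) (h : x i = x j) :
    absVandermonde x = 0 := by
  rw [absVandermonde_eq_abs_det, abs_eq_zero, Matrix.det_vandermonde_eq_zero_iff]
  exact ⟨i, j, h, hij⟩

lemma absVandermonde_cons (t : ℝ) (y : Fin n → ℝ) :
    absVandermonde (Fin.cons t y : Fin (n + 1) → ℝ) = (∏ j, |t - y j|) * absVandermonde y := by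
  simp [absVandermonde, Fin.prod_univ_succ, abs_sub_comm t]

lemma absVandermonde_insertNth (i : Fin (n + 1)) (t : ℝ) (y : Fin n → ℝ) :
    absVandermonde (i.insertNth t y : Fin (n + 1) → ℝ) =
      (∏ j, |t - y j|) * absVandermonde y := by
  rw [← absVandermonde_cons, ← absVandermonde_comp_perm i.cycleRange.symm]
  congr 1
  ext k
  cases k using Fin.cases <;> simp

lemma absVandermonde_add_const (x : Fin n → ℝ) (r : ℝ) :
    absVandermonde (fun i ↦ x i + r) = absVandermonde x := by
  simp [absVandermonde]

lemma absVandermonde_smul (r : ℝ) (x : Fin n → ℝ) :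
    absVandermonde (r • x) = |r| ^ n.choose 2 * absVandermonde x := by
  induction n with
  | zero => simp [absVandermonde]
  | succ n ih =>
    cases x using Fin.consCases with
    | cons t y =>
      have hcons : r • (Fin.cons t y : Fin (n + 1) → ℝ) = Fin.cons (r * t) (r • y) := by
        ext k
        cases k using Fin.cases <;> simp
      simp only [hcons, absVandermonde_cons, ih, Pi.smul_apply, smul_eq_mul, ← mul_sub, abs_mul,
        prod_mul_distrib, prod_const, card_univ, Fintype.card_fin, Nat.choose_succ_succ' n 1,
        Nat.choose_one_right, pow_add]
      ring

lemma abs_sub_le_one_add_mul_one_add (a b : ℝ) : |a - b| ≤ (1 + |a|) * (1 + |b|) := by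
  nlinarith [abs_sub a b, mul_nonneg (abs_nonneg a) (abs_nonneg b)]

lemma prod_abs_sub_le {ι : Type*} [Fintype ι] (x : ι → ℝ) (S : Finset (ι × ι)) :
    ∏ q ∈ S, |x q.2 - x q.1| ≤ ∏ i, (1 + |x i|) ^ (2 * Fintype.card ι) := by
  have one_le (i : ι) : 1 ≤ 1 + |x i| := le_add_of_nonneg_right (abs_nonneg _)
  calc ∏ q ∈ S, |x q.2 - x q.1|
      ≤ ∏ q ∈ S, (1 + |x q.2|) * (1 + |x q.1|) :=
        prod_le_prod (fun _ _ ↦ abs_nonneg _) fun _ _ ↦ abs_sub_le_one_add_mul_one_add _ _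
    _ ≤ ∏ q : ι × ι, (1 + |x q.2|) * (1 + |x q.1|) :=
        prod_le_prod_of_subset_of_one_le (subset_univ S) (fun _ _ ↦ by positivity)
          fun q _ _ ↦ one_le_mul_of_one_le_of_one_le (one_le q.2) (one_le q.1)
    _ = ∏ i, (1 + |x i|) ^ (2 * Fintype.card ι) := by
        simp only [Fintype.prod_prod_type, prod_mul_distrib, prod_const, card_univ, two_mul,
          pow_add, ← prod_pow]

lemma absVandermonde_eq_prod_pairs (x : Fin n → ℝ) :
    absVandermonde x = ∏ q : Fin n × Fin n with q.1 < q.2, |x q.2 - x q.1| := by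
  simp only [absVandermonde, prod_filter, Fintype.prod_prod_type]
  exact prod_congr rfl fun i _ ↦ by rw [← prod_filter, filter_lt_eq_Ioi]

lemma absVandermonde_le (x : Fin n → ℝ) : absVandermonde x ≤ ∏ i, (1 + |x i|) ^ (2 * n) := by
  simpa only [absVandermonde_eq_prod_pairs, Fintype.card_fin] using prod_abs_sub_le x _

lemma absVandermonde_le_abs_sub_mul {i j : Fin n} (hij : i ≠ j) (x : Fin n → ℝ) :
    absVandermonde x ≤ |x i - x j| * ∏ k, (1 + |x k|) ^ (2 * n) := by
  wlog h : i < j generalizing i j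
  · rw [abs_sub_comm]
    exact this hij.symm (hij.lt_or_gt.resolve_left h)
  rw [absVandermonde_eq_prod_pairs, ← mul_prod_erase _ _ (mem_filter.2 ⟨mem_univ (i, j), h⟩),
    abs_sub_comm]
  gcongr
  simpa only [Fintype.card_fin] using prod_abs_sub_le x _

lemma absVandermonde_pow_le (β : ℕ) (x : Fin n → ℝ) :
    absVandermonde x ^ β ≤ ∏ k, (1 + |x k|) ^ (2 * n * β) := by
  simpa only [prod_pow, ← pow_mul] using
    pow_le_pow_left₀ (absVandermonde_nonneg x) (absVandermonde_le x) β

lemma abs_absVandermonde_pow_div_le (β : ℕ) {i j : Fin n} (hij : i ≠ j) (x : Fin n → ℝ) :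
    |β * absVandermonde x ^ β / (x i - x j)| ≤ β * ∏ k, (1 + |x k|) ^ (2 * n * β) := by
  cases β with
  | zero => simp
  | succ β =>
    have hnonneg := absVandermonde_nonneg x
    rw [abs_div, abs_of_nonneg (by positivity), mul_div_assoc]
    gcongr
    refine div_le_of_le_mul₀ (abs_nonneg _) (by positivity) ?_
    calc absVandermonde x ^ (β + 1)
        = absVandermonde x ^ β * absVandermonde x := pow_succ _ _
      _ ≤ (∏ k, (1 + |x k|) ^ (2 * n * β)) * (|x i - x j| * ∏ k, (1 + |x k|) ^ (2 * n)) :=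
        mul_le_mul (absVandermonde_pow_le β x) (absVandermonde_le_abs_sub_mul hij x) hnonneg
          (by positivity)
      _ = (∏ k, (1 + |x k|) ^ (2 * n * (β + 1))) * |x i - x j| := by
        simp only [mul_add_one, pow_add, prod_mul_distrib]
        ring

end AbsVandermonde

section ExpDecay

lemma one_add_abs_pow_mul_exp_le (K : ℕ) {b : ℝ} (hb : 0 < b) (t : ℝ) :
    (1 + |t|) ^ K * exp (-(b * |t|)) ≤
      (K + 2).factorial / b ^ (K + 2) * exp b * (1 + |t|) ^ (-2 : ℝ) := by
  have hpow : (b * (1 + |t|)) ^ (K + 2) / (K + 2).factorial ≤ exp (b + b * |t|) := by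
    simpa only [mul_add, mul_one] using pow_div_factorial_le_exp _ (by positivity) (K + 2)
  rw [div_le_iff₀ (by positivity), exp_add, mul_pow, pow_add (1 + |t|)] at hpow
  rw [exp_neg, ← div_eq_mul_inv, div_le_iff₀ (exp_pos _), rpow_neg (by positivity), rpow_two]
  field_simp
  rw [mul_comm |t| b]
  linear_combination hpow

lemma integrable_one_add_abs_pow_mul_exp (K : ℕ) {b : ℝ} (hb : 0 < b) :
    Integrable fun t : ℝ ↦ (1 + |t|) ^ K * exp (-(b * |t|)) := by
  have hdom : Integrable fun t : ℝ ↦ (1 + |t|) ^ (-2 : ℝ) :=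
    integrable_one_add_norm (E := ℝ) (by simp)
  refine (hdom.const_mul ((K + 2).factorial / b ^ (K + 2) * exp b)).mono' (by fun_prop)
    (ae_of_all _ fun t ↦ ?_)
  rw [norm_of_nonneg (by positivity)]
  exact one_add_abs_pow_mul_exp_le K hb t

lemma integrable_prod_one_add_abs_pow_mul_exp {ι : Type*} [Fintype ι] (K : ι → ℕ) {b : ℝ}
    (hb : 0 < b) :
    Integrable fun x : ι → ℝ ↦ ∏ i, (1 + |x i|) ^ K i * exp (-(b * |x i|)) :=
  Integrable.fintype_prod (f := fun i (t : ℝ) ↦ (1 + |t|) ^ K i * exp (-(b * |t|)))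
    fun i ↦ integrable_one_add_abs_pow_mul_exp (K i) hb

end ExpDecay

section ProductMeasure

variable {α E : Type*} [MeasurableSpace α] {μ : Measure α} [SigmaFinite μ]
  [NormedAddCommGroup E]

lemma integral_pi_comp_perm [NormedSpace ℝ E] {ι : Type*} [Fintype ι] (σ : Equiv.Perm ι)
    (f : (ι → α) → E) :
    ∫ x, f (x ∘ σ) ∂Measure.pi (fun _ ↦ μ) = ∫ x, f x ∂Measure.pi (fun _ ↦ μ) :=
  (measurePreserving_arrowCongr' (fun _ ↦ μ) (fun _ ↦ μ) σ.symm (MeasurableEquiv.refl α)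
    fun _ ↦ MeasurePreserving.id μ).integral_comp' f

variable {n : ℕ} (i : Fin (n + 1)) {f : (Fin (n + 1) → α) → E}

lemma integrable_prod_insertNth (hf : Integrable f (Measure.pi fun _ ↦ μ)) :
    Integrable (fun q : α × (Fin n → α) ↦ f (i.insertNth q.1 q.2))
      (μ.prod (Measure.pi fun _ ↦ μ)) :=
  ((measurePreserving_piFinSuccAbove (fun _ : Fin (n + 1) ↦ μ) i).symm.integrable_comp_emb
    (MeasurableEquiv.measurableEmbedding _)).2 hf

lemma ae_integrable_insertNth (hf : Integrable f (Measure.pi fun _ ↦ μ)) :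
    ∀ᵐ y ∂Measure.pi fun _ : Fin n ↦ μ, Integrable (fun t ↦ f (i.insertNth t y)) μ :=
  (integrable_prod_insertNth i hf).prod_left_ae

lemma integral_pi_eq_integral_integral_insertNth [NormedSpace ℝ E]
    (hf : Integrable f (Measure.pi fun _ ↦ μ)) :
    ∫ x, f x ∂Measure.pi (fun _ ↦ μ) =
      ∫ y, ∫ t, f (i.insertNth t y) ∂μ ∂Measure.pi fun _ : Fin n ↦ μ := by
  rw [← integral_prod_symm _ (integrable_prod_insertNth i hf)]
  exact ((measurePreserving_piFinSuccAbove (fun _ : Fin (n + 1) ↦ μ) i).symm.integral_comp' f).symm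

end ProductMeasure

section FundamentalTheorem

open Filter Topology

lemma integral_Ioi_of_hasDerivAt_off_finite {E : Type*} [NormedAddCommGroup E]
    [NormedSpace ℝ E] [CompleteSpace E] {f f' : ℝ → E} {a : ℝ} {S : Set ℝ} (hS : S.Finite)
    (hcont : ContinuousOn f (Set.Ici a)) (hderiv : ∀ t ∈ Set.Ioi a \ S, HasDerivAt f (f' t) t)
    (hf : IntegrableOn f (Set.Ioi a)) (hf' : IntegrableOn f' (Set.Ioi a)) :
    ∫ t in Set.Ioi a, f' t = -f a := by
  obtain ⟨b, hb⟩ := hS.bddAbove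
  have hzero : Tendsto f atTop (𝓝 0) := by
    have hsub : Set.Ioi (max a b) ⊆ Set.Ioi a := Set.Ioi_subset_Ioi (le_max_left a b)
    refine tendsto_zero_of_hasDerivAt_of_integrableOn_Ioi (a := max a b)
      (fun t ht ↦ hderiv t ⟨hsub ht, fun ht' ↦ ?_⟩) (hf'.mono_set hsub) (hf.mono_set hsub)
    exact (hb ht').not_gt ((le_max_right a b).trans_lt ht)
  have hFTC : ∀ᶠ R in atTop, f R - f a = ∫ t in a..R, f' t := by
    filter_upwards [eventually_ge_atTop a] with R hR
    refine (integral_eq_of_hasDerivAt_off_countable_of_le f f' hR hS.countable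
      (hcont.mono Set.Icc_subset_Ici_self) (fun t ht ↦ hderiv t ⟨ht.1.1, ht.2⟩) ?_).symm
    exact (intervalIntegrable_iff_integrableOn_Ioc_of_le hR).2
      (hf'.mono_set Set.Ioc_subset_Ioi_self)
  rw [← zero_sub (f a)]
  exact tendsto_nhds_unique (intervalIntegral_tendsto_integral_Ioi a hf' tendsto_id)
    ((hzero.sub_const (f a)).congr' hFTC)

end FundamentalTheorem

section Laguerre

variable {n : ℕ}

/-- Lebesgue measure on the open positive orthant. -/
noncomputable abbrev orthantMeasure (n : ℕ) : Measure (Fin n → ℝ) :=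
  Measure.pi fun _ ↦ volume.restrict (Set.Ioi 0)

/-- The Laguerre weight, with an exponent for each coordinate. -/
noncomputable def laguerreWeight (p : Fin n → ℕ) (x : Fin n → ℝ) : ℝ :=
  ∏ k, x k ^ p k * exp (-x k)

/-- The partition function of the Laguerre `β`-ensemble with an exponent for each coordinate. -/
noncomputable def laguerreIntegral (β : ℕ) (p : Fin n → ℕ) : ℝ :=
  ∫ x, laguerreWeight p x * absVandermonde x ^ β ∂orthantMeasure n

/-- The term that the factor `|xᵢ - xⱼ| ^ β` of the Vandermonde contributes when the integrand of
`laguerreIntegral β p` is differentiated in `xᵢ`. At `xᵢ = xⱼ` the quotient takes the value `0`. -/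
noncomputable def laguerreDivIntegral (β : ℕ) (p : Fin n → ℕ) (i j : Fin n) : ℝ :=
  ∫ x, laguerreWeight p x * (β * absVandermonde x ^ β / (x i - x j)) ∂orthantMeasure n

lemma orthantMeasure_eq_restrict :
    orthantMeasure n = volume.restrict (Set.univ.pi fun _ ↦ Set.Ioi 0) := by
  rw [orthantMeasure, ← Measure.restrict_pi_pi]
  rfl

lemma ae_orthantMeasure_pos : ∀ᵐ x ∂orthantMeasure n, ∀ i, 0 < x i := by
  rw [orthantMeasure_eq_restrict]
  filter_upwards [ae_restrict_mem (MeasurableSet.univ_pi fun _ ↦ measurableSet_Ioi)] with x hx i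
    using hx i trivial

@[fun_prop]
lemma continuous_laguerreWeight (p : Fin n → ℕ) : Continuous (laguerreWeight p) := by
  unfold laguerreWeight
  fun_prop

lemma abs_laguerreWeight_le (p : Fin n → ℕ) {x : Fin n → ℝ} (hx : ∀ i, 0 < x i) :
    |laguerreWeight p x| ≤ ∏ i, (1 + |x i|) ^ p i * exp (-(1 * |x i|)) := by
  rw [laguerreWeight, abs_prod]
  refine prod_le_prod (fun _ _ ↦ abs_nonneg _) fun i _ ↦ ?_
  rw [abs_mul, abs_pow, abs_exp, one_mul, abs_of_pos (hx i)]
  gcongr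
  · exact (hx i).le
  · linarith

lemma integrable_laguerreWeight_mul (p : Fin n → ℕ) {g : (Fin n → ℝ) → ℝ} (hg : Measurable g)
    {C : ℝ} {K : ℕ} (hle : ∀ x, |g x| ≤ C * ∏ i, (1 + |x i|) ^ K) :
    Integrable (fun x ↦ laguerreWeight p x * g x) (orthantMeasure n) := by
  have hdom : Integrable (fun x : Fin n → ℝ ↦
      C * ∏ i, (1 + |x i|) ^ (p i + K) * exp (-(1 * |x i|))) (orthantMeasure n) := by
    rw [orthantMeasure_eq_restrict]
    exact ((integrable_prod_one_add_abs_pow_mul_exp (fun i ↦ p i + K) one_pos).const_mul C).restrict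
  refine hdom.mono' (by fun_prop) ?_
  filter_upwards [ae_orthantMeasure_pos] with x hx
  calc ‖laguerreWeight p x * g x‖ = |laguerreWeight p x| * |g x| := by
        rw [norm_mul, norm_eq_abs, norm_eq_abs]
    _ ≤ (∏ i, (1 + |x i|) ^ p i * exp (-(1 * |x i|))) * (C * ∏ i, (1 + |x i|) ^ K) := by
        gcongr
        · exact abs_laguerreWeight_le p hx
        · exact hle x
    _ = C * ∏ i, (1 + |x i|) ^ (p i + K) * exp (-(1 * |x i|)) := by
        simp only [prod_mul_distrib, pow_add]
        ring

lemma integrable_laguerreWeight_mul_absVandermonde_pow (β : ℕ) (p : Fin n → ℕ) :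
    Integrable (fun x ↦ laguerreWeight p x * absVandermonde x ^ β) (orthantMeasure n) :=
  integrable_laguerreWeight_mul p (by fun_prop) fun x ↦ by
    rw [abs_of_nonneg (pow_nonneg (absVandermonde_nonneg x) β), one_mul]
    exact absVandermonde_pow_le β x

lemma integrable_laguerreWeight_mul_absVandermonde_pow_div (β : ℕ) (p : Fin n → ℕ) {i j : Fin n}
    (hij : i ≠ j) :
    Integrable (fun x ↦ laguerreWeight p x * (β * absVandermonde x ^ β / (x i - x j)))
      (orthantMeasure n) :=
  integrable_laguerreWeight_mul p (by fun_prop) (abs_absVandermonde_pow_div_le β hij)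

end Laguerre

section IntegrationByParts

variable {n : ℕ} (β : ℕ) (i : Fin (n + 1))

lemma laguerreWeight_insertNth (p : Fin (n + 1) → ℕ) (t : ℝ) (y : Fin n → ℝ) :
    laguerreWeight p (i.insertNth t y) =
      t ^ p i * exp (-t) * laguerreWeight (i.removeNth p) y := by
  simp [laguerreWeight, i.prod_univ_succAbove, Fin.removeNth]

lemma laguerreWeight_add_const (p : Fin n → ℕ) (x : Fin n → ℝ) :
    laguerreWeight (fun j ↦ p j + β) x = (∏ j, x j) ^ β * laguerreWeight p x := by
  simp only [laguerreWeight, ← prod_mul_distrib, ← prod_pow]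
  exact prod_congr rfl fun j _ ↦ by ring

lemma hasDerivAt_laguerreWeight_insertNth (p : Fin (n + 1) → ℕ) (t : ℝ) (y : Fin n → ℝ) :
    HasDerivAt (fun t ↦ laguerreWeight p (i.insertNth t y))
      (p i * laguerreWeight (p - Pi.single i 1) (i.insertNth t y) -
        laguerreWeight p (i.insertNth t y)) t := by
  have hremove : i.removeNth (p - Pi.single i 1) = i.removeNth p := by
    ext j
    simp [Fin.removeNth]
  simp only [laguerreWeight_insertNth, hremove, Pi.sub_apply, Pi.single_eq_same]
  refine (((hasDerivAt_pow (p i) t).mul (hasDerivAt_neg t).exp).mul_const _).congr_deriv ?_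
  ring

lemma hasDerivAt_abs_sub {t a : ℝ} (h : t ≠ a) :
    HasDerivAt (fun t ↦ |t - a|) (|t - a| / (t - a)) t := by
  have hne : t - a ≠ 0 := sub_ne_zero.2 h
  refine ((hasDerivAt_abs hne).comp_sub_const t a).congr_deriv ?_
  rw [eq_div_iff hne, ← sign_mul_self]

lemma hasDerivAt_prod_abs_sub {ι : Type*} [Fintype ι] {t : ℝ} {y : ι → ℝ}
    (ht : t ∉ Set.range y) :
    HasDerivAt (fun t ↦ ∏ j, |t - y j|) (∑ j, (∏ k, |t - y k|) / (t - y j)) t := by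
  classical
  have hderiv := HasDerivAt.fun_finsetProd (u := univ) (f := fun j t ↦ |t - y j|) (x := t)
    fun j _ ↦ hasDerivAt_abs_sub fun h ↦ ht ⟨j, h.symm⟩
  refine hderiv.congr_deriv (sum_congr rfl fun j hj ↦ ?_)
  rw [smul_eq_mul, ← mul_div_assoc, prod_erase_mul univ _ hj]

lemma hasDerivAt_absVandermonde_pow_insertNth {t : ℝ} {y : Fin n → ℝ} (ht : t ∉ Set.range y) :
    HasDerivAt (fun t ↦ absVandermonde (i.insertNth t y : Fin (n + 1) → ℝ) ^ β)
      (∑ j, β * absVandermonde (i.insertNth t y : Fin (n + 1) → ℝ) ^ β / (t - y j)) t := by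
  simp only [absVandermonde_insertNth]
  refine (((hasDerivAt_prod_abs_sub ht).mul_const _).pow β).congr_deriv ?_
  rw [sum_mul, mul_sum]
  refine sum_congr rfl fun j _ ↦ ?_
  cases β with
  | zero => simp
  | succ β =>
    rw [Nat.add_sub_cancel]
    ring

/-- The derivative in the `i`-th coordinate of the integrand of `laguerreIntegral β p`, valid off
the hyperplanes `xᵢ = xⱼ`. -/
noncomputable def laguerreDeriv (p : Fin (n + 1) → ℕ) (x : Fin (n + 1) → ℝ) : ℝ :=
  p i * (laguerreWeight (p - Pi.single i 1) x * absVandermonde x ^ β) -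
    laguerreWeight p x * absVandermonde x ^ β +
    ∑ j, laguerreWeight p x * (β * absVandermonde x ^ β / (x i - x (i.succAbove j)))

lemma hasDerivAt_laguerre_insertNth (p : Fin (n + 1) → ℕ) {t : ℝ} {y : Fin n → ℝ}
    (ht : t ∉ Set.range y) :
    HasDerivAt (fun t ↦ laguerreWeight p (i.insertNth t y) *
      absVandermonde (i.insertNth t y : Fin (n + 1) → ℝ) ^ β)
      (laguerreDeriv β i p (i.insertNth t y)) t := by
  refine ((hasDerivAt_laguerreWeight_insertNth i p t y).mul
    (hasDerivAt_absVandermonde_pow_insertNth β i ht)).congr_deriv ?_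
  simp only [laguerreDeriv, Fin.insertNth_apply_same, Fin.insertNth_apply_succAbove, mul_sum]
  ring

lemma integrable_laguerreDeriv (p : Fin (n + 1) → ℕ) :
    Integrable (laguerreDeriv β i p) (orthantMeasure (n + 1)) :=
  (((integrable_laguerreWeight_mul_absVandermonde_pow β _).const_mul _).sub
    (integrable_laguerreWeight_mul_absVandermonde_pow β p)).add
    (integrable_finsetSum _ fun j _ ↦
      integrable_laguerreWeight_mul_absVandermonde_pow_div β p (i.succAbove_ne j).symm)

lemma integral_laguerreDeriv (p : Fin (n + 1) → ℕ) :
    ∫ x, laguerreDeriv β i p x ∂orthantMeasure (n + 1) =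
      p i * laguerreIntegral β (p - Pi.single i 1) - laguerreIntegral β p +
        ∑ j, laguerreDivIntegral β p i (i.succAbove j) := by
  have hE := integrable_laguerreWeight_mul_absVandermonde_pow (n := n + 1) β
  have hD (j : Fin n) :=
    integrable_laguerreWeight_mul_absVandermonde_pow_div β p (i.succAbove_ne j).symm
  simp only [laguerreDeriv]
  rw [integral_add (by exact ((hE _).const_mul _).sub (hE p))
      (integrable_finsetSum _ fun j _ ↦ hD j),
    integral_sub ((hE _).const_mul _) (hE p), integral_const_mul,
    integral_finsetSum _ fun j _ ↦ hD j]
  rfl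

/-- On the face `xᵢ = 0` the factors `|xᵢ - xⱼ| ^ β` become `xⱼ ^ β` and raise the remaining
exponents. The truncated `p i - 1` occurs only with the coefficient `p i`. -/
lemma laguerreIntegral_integration_by_parts (p : Fin (n + 1) → ℕ) :
    p i * laguerreIntegral β (p - Pi.single i 1) - laguerreIntegral β p +
        ∑ j, laguerreDivIntegral β p i (i.succAbove j) =
      -(0 ^ p i * laguerreIntegral β fun j ↦ i.removeNth p j + β) := by
  have hE := integrable_laguerreWeight_mul_absVandermonde_pow β p
  have hDeriv := integrable_laguerreDeriv β i p
  rw [← integral_laguerreDeriv, integral_pi_eq_integral_integral_insertNth i hDeriv,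
    laguerreIntegral, ← integral_const_mul, ← integral_neg]
  refine integral_congr_ae ?_
  filter_upwards [ae_integrable_insertNth i hE, ae_integrable_insertNth i hDeriv,
    ae_orthantMeasure_pos] with y hy hy' hpos
  rw [integral_Ioi_of_hasDerivAt_off_finite (Set.finite_range y) (by fun_prop)
    (fun t ht ↦ hasDerivAt_laguerre_insertNth β i p ht.2) hy hy']
  simp only [laguerreWeight_insertNth, absVandermonde_insertNth, laguerreWeight_add_const,
    zero_sub, abs_neg, abs_of_pos (hpos _), neg_zero, exp_zero]
  ring

end IntegrationByParts

section Symmetry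

variable {n : ℕ} (β : ℕ) {p : Fin n → ℕ} {i j : Fin n}

lemma laguerreWeight_comp_perm (σ : Equiv.Perm (Fin n)) (p : Fin n → ℕ) (x : Fin n → ℝ) :
    laguerreWeight (p ∘ σ) (x ∘ σ) = laguerreWeight p x :=
  Equiv.prod_comp σ fun k ↦ x k ^ p k * exp (-x k)

lemma laguerreWeight_add_single (p : Fin n → ℕ) (i : Fin n) (x : Fin n → ℝ) :
    laguerreWeight (p + Pi.single i 1) x = x i * laguerreWeight p x := by
  simp only [laguerreWeight, Pi.add_apply, pow_add, prod_mul_distrib, Pi.single_apply,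
    pow_ite, pow_one, pow_zero, prod_ite_eq', mem_univ, if_true]
  ring

lemma laguerreDivIntegral_comp_swap (p : Fin n → ℕ) (i j : Fin n) :
    laguerreDivIntegral β (p ∘ Equiv.swap i j) i j = -laguerreDivIntegral β p i j := by
  rw [laguerreDivIntegral, laguerreDivIntegral, ← integral_neg]
  refine (integral_pi_comp_perm (Equiv.swap i j) _).symm.trans ?_
  congr 1 with x
  rw [laguerreWeight_comp_perm, absVandermonde_comp_perm, Function.comp_apply,
    Function.comp_apply, Equiv.swap_apply_left, Equiv.swap_apply_right, ← neg_sub (x i), div_neg,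
    mul_neg]

lemma comp_swap_eq_self_of_eq (h : p i = p j) : p ∘ Equiv.swap i j = p := by
  simp [Equiv.comp_swap_eq_update, h]

lemma laguerreDivIntegral_eq_zero (h : p i = p j) : laguerreDivIntegral β p i j = 0 := by
  have hneg := laguerreDivIntegral_comp_swap β p i j
  rw [comp_swap_eq_self_of_eq h] at hneg
  exact self_eq_neg.1 hneg

lemma laguerreDivIntegral_add_single_sub (hij : i ≠ j) :
    laguerreDivIntegral β (p + Pi.single i 1) i j - laguerreDivIntegral β (p + Pi.single j 1) i j =
      β * laguerreIntegral β p := by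
  simp only [laguerreDivIntegral, laguerreIntegral]
  rw [← integral_sub (integrable_laguerreWeight_mul_absVandermonde_pow_div β _ hij)
    (integrable_laguerreWeight_mul_absVandermonde_pow_div β _ hij), ← integral_const_mul]
  congr 1 with x
  rw [laguerreWeight_add_single, laguerreWeight_add_single]
  by_cases hx : x i = x j
  · cases β <;> simp [hx, absVandermonde_eq_zero hij hx]
  · have hne : x i - x j ≠ 0 := sub_ne_zero.2 hx
    field_simp

lemma laguerreDivIntegral_add_single (hij : i ≠ j) (h : p i = p j) :
    laguerreDivIntegral β (p + Pi.single i 1) i j = β / 2 * laguerreIntegral β p := by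
  have hswap : (p + Pi.single i 1) ∘ Equiv.swap i j = p + Pi.single j 1 := by
    rw [Pi.add_comp, comp_swap_eq_self_of_eq h, Pi.single_comp_equiv]
    simp
  have hneg := laguerreDivIntegral_comp_swap β (p + Pi.single i 1) i j
  have hsub := laguerreDivIntegral_add_single_sub β (p := p) hij
  rw [hswap] at hneg
  linarith

end Symmetry

section Recursion

variable {n : ℕ} (β : ℕ)

lemma card_filter_succAbove (i : Fin (n + 1)) (P : Fin (n + 1) → Prop) [DecidablePred P] :
    #{j | P (i.succAbove j)} = #{j | j ≠ i ∧ P j} := by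
  simp only [card_filter, i.sum_univ_succAbove]
  simp [Fin.succAbove_ne]

/-- Aomoto's recursion: by the symmetry of the Vandermonde factor, an exponent equal to `p i`
contributes `β / 2` and an exponent equal to `p i + 1` contributes nothing. -/
lemma laguerreIntegral_add_single {p : Fin n → ℕ} {i : Fin n}
    (hp : ∀ j, p j = p i ∨ p j = p i + 1) :
    laguerreIntegral β (p + Pi.single i 1) =
      (p i + 1 + #{j | j ≠ i ∧ p j = p i} * (β / 2)) * laguerreIntegral β p := by
  obtain _ | n := n
  · exact i.elim0
  have hD (j : Fin n) : laguerreDivIntegral β (p + Pi.single i 1) i (i.succAbove j) =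
      if p (i.succAbove j) = p i then β / 2 * laguerreIntegral β p else 0 := by
    split_ifs with hj
    · exact laguerreDivIntegral_add_single β (i.succAbove_ne j).symm hj.symm
    · refine laguerreDivIntegral_eq_zero β ?_
      simp [(hp _).resolve_left hj]
  have hIBP := laguerreIntegral_integration_by_parts β i (p + Pi.single i 1)
  simp only [hD, ← sum_filter, sum_const, nsmul_eq_mul, add_tsub_cancel_right, Pi.add_apply,
    Pi.single_eq_same, ne_eq, Nat.add_eq_zero_iff, one_ne_zero, and_false, not_false_eq_true,
    zero_pow, zero_mul, neg_zero, Nat.cast_add, Nat.cast_one,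
    card_filter_succAbove i (p · = p i)] at hIBP
  linarith

lemma laguerreIntegral_const_succ_eq (m : ℕ) (S : Finset (Fin n)) :
    laguerreIntegral β (fun _ : Fin n ↦ m + 1) =
      (∏ j ∈ range #S, ((m : ℝ) + 1 + j * (β / 2))) *
        laguerreIntegral β (fun k ↦ if k ∈ S then m else m + 1) := by
  induction S using Finset.induction with
  | empty => simp
  | insert a S ha ih =>
    set p : Fin n → ℕ := fun k ↦ if k ∈ insert a S then m else m + 1 with hp
    have hraise : (fun k ↦ if k ∈ S then m else m + 1) = p + Pi.single a 1 := by
      ext k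
      by_cases hk : k = a <;> simp [hp, hk, ha]
    have hlow : ({j | j ≠ a ∧ p j = p a} : Finset (Fin n)) = S := by
      ext k
      by_cases hk : k = a <;> simp [hp, hk, ha]
    have hpa : p a = m := by simp [hp]
    have hdichotomy (j : Fin n) : p j = p a ∨ p j = p a + 1 := by
      rw [hpa]
      exact ite_eq_or_eq _ _ _
    rw [ih, hraise, laguerreIntegral_add_single β hdichotomy, hlow, hpa,
      card_insert_of_notMem ha, prod_range_succ, mul_assoc]

lemma laguerreIntegral_const_succ (m : ℕ) :
    laguerreIntegral β (fun _ : Fin n ↦ m + 1) =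
      (∏ j ∈ range n, ((m : ℝ) + 1 + j * (β / 2))) * laguerreIntegral β (fun _ : Fin n ↦ m) := by
  simpa using laguerreIntegral_const_succ_eq β m (univ : Finset (Fin n))

lemma laguerreIntegral_zero_succ :
    laguerreIntegral β (fun _ : Fin (n + 1) ↦ 0) = laguerreIntegral β (fun _ : Fin n ↦ β) := by
  have hIBP := laguerreIntegral_integration_by_parts β (0 : Fin (n + 1)) (fun _ ↦ 0)
  have hD (j : Fin n) : laguerreDivIntegral β (fun _ ↦ 0) 0 (Fin.succAbove 0 j) = 0 :=
    laguerreDivIntegral_eq_zero β rfl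
  simp only [hD, Nat.cast_zero, zero_mul, zero_sub, sum_const_zero,
    add_zero, pow_zero, one_mul, Fin.removeNth, zero_add] at hIBP
  exact neg_injective hIBP

end Recursion

section Evaluation

variable (β n : ℕ)

lemma Gamma_one_add_mul_half_pos (j : ℕ) : 0 < Gamma (1 + j * (β / 2)) :=
  Gamma_pos_of_pos (by positivity)

lemma laguerreIntegral_const_eq_mul_zero (m : ℕ) :
    laguerreIntegral β (fun _ : Fin n ↦ m) =
      (∏ j ∈ range n, Gamma (m + (1 + j * (β / 2))) / Gamma (1 + j * (β / 2))) *
        laguerreIntegral β (fun _ : Fin n ↦ 0) := by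
  induction m with
  | zero => simp [(Gamma_one_add_mul_half_pos β _).ne']
  | succ m ih =>
    rw [laguerreIntegral_const_succ, ih, ← mul_assoc, ← prod_mul_distrib]
    congr! 2 with j
    have hGamma := Gamma_add_one (s := m + (1 + j * (β / 2 : ℝ))) (by positivity)
    rw [Nat.cast_add_one, add_right_comm (m : ℝ) 1 (1 + _), hGamma]
    ring

lemma prod_range_div_shift_two {g : ℕ → ℝ} (hg : ∀ j, g j ≠ 0) (n : ℕ) :
    ∏ j ∈ range n, g (j + 2) / g j = g n * g (n + 1) / (g 0 * g 1) := by
  induction n with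
  | zero => simp [hg]
  | succ n ih =>
    rw [prod_range_succ, ih]
    have := hg n
    field_simp

lemma laguerreIntegral_zero :
    laguerreIntegral β (fun _ : Fin n ↦ 0) =
      ∏ j ∈ range n, Gamma (1 + j * (β / 2)) *
        (Gamma (1 + (j + 1 : ℕ) * (β / 2)) / Gamma (1 + β / 2)) := by
  induction n with
  | zero => simp [laguerreIntegral, laguerreWeight, absVandermonde, measureReal_def]
  | succ n ih =>
    have htelescope := prod_range_div_shift_two (fun j ↦ (Gamma_one_add_mul_half_pos β j).ne') n
    simp only [Nat.cast_zero, Nat.cast_one, zero_mul, one_mul, add_zero, Gamma_one] at htelescope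
    rw [laguerreIntegral_zero_succ, laguerreIntegral_const_eq_mul_zero, ih, prod_range_succ,
      mul_comm, ← mul_div_assoc, ← htelescope]
    congr 1
    refine prod_congr rfl fun j _ ↦ ?_
    push_cast
    ring_nf

lemma laguerreIntegral_const (m : ℕ) :
    laguerreIntegral β (fun _ : Fin n ↦ m) =
      ∏ j ∈ range n, Gamma (m + (1 + j * (β / 2))) *
        (Gamma (1 + (j + 1 : ℕ) * (β / 2)) / Gamma (1 + β / 2)) := by
  rw [laguerreIntegral_const_eq_mul_zero, laguerreIntegral_zero, ← prod_mul_distrib]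
  refine prod_congr rfl fun j _ ↦ ?_
  rw [← mul_assoc, div_mul_cancel₀ _ (Gamma_one_add_mul_half_pos β j).ne']

end Evaluation

section GaussianLimit

open Filter Topology

/-- The density `t ^ m * exp (-t)` recentred at `m`, rescaled by `√m` and normalised to have the
value `1` at `0`; it tends to `exp (-t ^ 2 / 2)` as `m → ∞`. -/
noncomputable def rescaledGamma (m : ℕ) (t : ℝ) : ℝ :=
  max (1 + t / √m) 0 ^ m * exp (-(√m * t))

lemma rescaledGamma_nonneg (m : ℕ) (t : ℝ) : 0 ≤ rescaledGamma m t :=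
  mul_nonneg (pow_nonneg (le_max_right _ _) m) (exp_nonneg _)

@[fun_prop]
lemma continuous_rescaledGamma (m : ℕ) : Continuous (rescaledGamma m) := by
  unfold rescaledGamma
  fun_prop

lemma max_zero_pow_mul_exp_eq_rescaledGamma (m : ℕ) (t : ℝ) :
    max (√m * t + m) 0 ^ m * exp (-(√m * t + m)) = m ^ m * exp (-m) * rescaledGamma m t := by
  have hfactor : √m * t + m = m * (1 + t / √m) := by
    rw [mul_one_add, mul_div_left_comm, div_sqrt, mul_comm t, add_comm]
  have hmax : max (√m * t + m) 0 = m * max (1 + t / √m) 0 := by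
    rw [hfactor, mul_max_of_nonneg _ _ m.cast_nonneg, mul_zero]
  rw [hmax, rescaledGamma, mul_pow, neg_add, exp_add]
  ring

lemma rescaledGamma_eq_exp {m : ℕ} {t : ℝ} (ht : 0 < 1 + t / √m) :
    rescaledGamma m t = exp (m * (log (1 + t / √m) - t / √m)) := by
  have hcancel : (m : ℝ) * (t / √m) = √m * t := by
    rw [mul_div_left_comm, div_sqrt, mul_comm]
  rw [rescaledGamma, max_eq_left ht.le, mul_sub, sub_eq_add_neg, exp_add, exp_nat_mul, exp_log ht,
    hcancel]

lemma log_one_add_le_of_nonneg {u : ℝ} (hu : 0 ≤ u) :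
    log (1 + u) ≤ u - u ^ 2 / (2 * (1 + u)) := by
  have hsinh := self_le_sinh_iff.2 (log_nonneg (le_add_of_nonneg_right hu))
  rw [sinh_log (by positivity)] at hsinh
  refine hsinh.trans_eq ?_
  field_simp
  ring

lemma log_one_add_le_of_nonpos {u : ℝ} (hu : u ≤ 0) (hu' : -1 < u) :
    log (1 + u) ≤ u - u ^ 2 / 2 := by
  have hnonneg : 0 ≤ -u := neg_nonneg.2 hu
  have habs : |-u| < 1 := by
    rw [abs_of_nonneg hnonneg]
    linarith
  have hpartial :=
    sum_le_hasSum (range 2) (fun _ _ ↦ by positivity) (hasSum_pow_div_log_of_abs_lt_one habs)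
  norm_num [sum_range_succ] at hpartial
  linarith

lemma log_one_add_le {u : ℝ} (hu : -1 < u) : log (1 + u) ≤ u - u ^ 2 / (2 * (1 + |u|)) := by
  rcases le_total 0 u with h | h
  · simpa only [abs_of_nonneg h] using log_one_add_le_of_nonneg h
  · refine (log_one_add_le_of_nonpos h hu).trans ?_
    gcongr
    linarith [abs_nonneg u]

lemma rescaledGamma_le {m : ℕ} (hm : m ≠ 0) (t : ℝ) :
    rescaledGamma m t ≤ exp (1 / 2) * exp (-(1 / 2 * |t|)) := by
  obtain hneg | hpos := le_or_gt (1 + t / √m) 0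
  · rw [rescaledGamma, max_eq_right hneg, zero_pow hm, zero_mul]
    positivity
  have hsqrt : 1 ≤ √(m : ℝ) := one_le_sqrt.2 (mod_cast Nat.one_le_iff_ne_zero.2 hm)
  rw [rescaledGamma_eq_exp hpos, ← exp_add, exp_le_exp]
  calc m * (log (1 + t / √m) - t / √m)
      ≤ m * -((t / √m) ^ 2 / (2 * (1 + |t / √m|))) := by
        gcongr
        linarith [log_one_add_le (neg_lt_iff_pos_add'.2 hpos)]
    _ = -(t ^ 2 / (2 * (1 + |t| / √m))) := by
        rw [abs_div, abs_of_nonneg (sqrt_nonneg _), div_pow, sq_sqrt m.cast_nonneg]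
        field_simp
    _ ≤ -(t ^ 2 / (2 * (1 + |t|))) := by
        gcongr
        exact div_le_self (abs_nonneg t) hsqrt
    _ ≤ 1 / 2 + -(1 / 2 * |t|) := by
        rw [neg_le, le_div_iff₀ (by positivity), ← sq_abs t]
        linarith

lemma abs_log_one_add_sub_le {u : ℝ} (hu : |u| ≤ 1 / 2) :
    |log (1 + u) - u + u ^ 2 / 2| ≤ 2 * |u| ^ 3 := by
  have htaylor := abs_log_sub_add_sum_range_le (x := -u) (by rw [abs_neg]; linarith) 2
  norm_num [sum_range_succ] at htaylor
  calc |log (1 + u) - u + u ^ 2 / 2| = |-u + u ^ 2 / 2 + log (1 + u)| := by ring_nf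
    _ ≤ |u| ^ 3 / (1 - |u|) := htaylor
    _ ≤ 2 * |u| ^ 3 := by
      rw [div_le_iff₀ (by linarith)]
      nlinarith [pow_nonneg (abs_nonneg u) 3]

lemma tendsto_div_sqrt_natCast (a : ℝ) : Tendsto (fun m : ℕ ↦ a / √m) atTop (𝓝 0) :=
  (tendsto_sqrt_atTop.comp tendsto_natCast_atTop_atTop).const_div_atTop a

lemma tendsto_mul_log_one_add_div_sqrt_sub (t : ℝ) :
    Tendsto (fun m : ℕ ↦ m * (log (1 + t / √m) - t / √m)) atTop (𝓝 (-t ^ 2 / 2)) := by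
  rw [tendsto_iff_norm_sub_tendsto_zero]
  refine squeeze_zero' (Eventually.of_forall fun _ ↦ norm_nonneg _) ?_
    (tendsto_div_sqrt_natCast (2 * |t| ^ 3))
  filter_upwards [(tendsto_div_sqrt_natCast t).eventually_mem (Metric.closedBall_mem_nhds 0
    one_half_pos), eventually_ne_atTop 0] with m hsmall hm
  rw [mem_closedBall_zero_iff] at hsmall
  have hcancel : m * (t / √m) ^ 2 = t ^ 2 := by
    rw [div_pow, sq_sqrt m.cast_nonneg, mul_div_cancel₀ _ (Nat.cast_ne_zero.2 hm)]
  calc ‖m * (log (1 + t / √m) - t / √m) - -t ^ 2 / 2‖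
      = |m * (log (1 + t / √m) - t / √m + (t / √m) ^ 2 / 2)| := by
        rw [norm_eq_abs]
        congr 1
        linear_combination -hcancel / 2
    _ = m * |log (1 + t / √m) - t / √m + (t / √m) ^ 2 / 2| := by rw [abs_mul, Nat.abs_cast]
    _ ≤ m * (2 * |t / √m| ^ 3) := by
        gcongr
        exact abs_log_one_add_sub_le hsmall
    _ = 2 * (m * (t / √m) ^ 2) * |t / √m| := by
        rw [← sq_abs (t / √m)]
        ring
    _ = 2 * |t| ^ 3 / √m := by
        rw [hcancel, abs_div, abs_of_nonneg (sqrt_nonneg _), ← sq_abs t]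
        ring

lemma tendsto_rescaledGamma (t : ℝ) :
    Tendsto (rescaledGamma · t) atTop (𝓝 (exp (-t ^ 2 / 2))) := by
  refine ((continuous_exp.tendsto _).comp (tendsto_mul_log_one_add_div_sqrt_sub t)).congr' ?_
  filter_upwards [(tendsto_div_sqrt_natCast t).eventually_const_lt neg_one_lt_zero] with m hm
  exact (rescaledGamma_eq_exp (neg_lt_iff_pos_add'.1 hm)).symm

end GaussianLimit

section GammaAsymptotics

open Filter Topology

lemma Gamma_add_natCast {s : ℝ} (hs : 0 < s) (n : ℕ) :
    Gamma (s + n) = (∏ j ∈ range n, (s + j)) * Gamma s := by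
  induction n with
  | zero => simp
  | succ n ih =>
    rw [Nat.cast_succ, ← add_assoc, Gamma_add_one (by positivity), ih, prod_range_succ]
    ring

lemma Gamma_natCast_add_div_eq {s : ℝ} (hs : 0 < s) {m : ℕ} (hm : m ≠ 0) :
    Gamma (m + s) / (m ^ (s - 1 / 2) * (m ^ m * exp (-m))) =
      √2 * Stirling.stirlingSeq m * (m / (m + s)) * (Gamma s / GammaSeq s m) := by
  have : 0 < ∏ j ∈ range m, (s + j) := prod_pos fun _ _ ↦ by positivity
  have : (m : ℝ) + s ≠ 0 := by positivity
  rw [add_comm, Gamma_add_natCast hs, GammaSeq, Stirling.stirlingSeq, prod_range_succ,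
    rpow_sub (by positivity), ← sqrt_eq_rpow, sqrt_mul zero_le_two, div_pow, ← exp_nat_mul, mul_one,
    exp_neg]
  field_simp
  exact sq_sqrt m.cast_nonneg

lemma tendsto_Gamma_natCast_add_div {s : ℝ} (hs : 0 < s) :
    Tendsto (fun m : ℕ ↦ Gamma (m + s) / (m ^ (s - 1 / 2) * (m ^ m * exp (-m)))) atTop
      (𝓝 √(2 * π)) := by
  have hstirling := Stirling.tendsto_stirlingSeq_sqrt_pi.const_mul √2
  have hGamma := (tendsto_const_nhds (x := Gamma s)).div (GammaSeq_tendsto_Gamma s)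
    (Gamma_pos_of_pos hs).ne'
  have hlim := (hstirling.mul (tendsto_natCast_div_add_atTop s)).mul hGamma
  rw [div_self (Gamma_pos_of_pos hs).ne', mul_one, mul_one, ← sqrt_mul zero_le_two] at hlim
  refine hlim.congr' ?_
  filter_upwards [eventually_ne_atTop 0] with m hm
  exact (Gamma_natCast_add_div_eq hs hm).symm

end GammaAsymptotics

section Mehta

open Filter Topology

lemma integral_eq_pow_card_mul_integral_comp_smul {ι : Type*} [Fintype ι] (f : (ι → ℝ) → ℝ)
    {r : ℝ} (hr : 0 < r) : ∫ x, f x = r ^ Fintype.card ι * ∫ x, f (r • x) := by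
  rw [Measure.integral_comp_smul_of_nonneg volume f r (hR := hr.le),
    Module.finrank_fintype_fun_eq_card, smul_eq_mul, mul_inv_cancel_left₀ (by positivity)]

variable (β n : ℕ)

lemma laguerreIntegral_const_eq_integral_max {m : ℕ} (hm : m ≠ 0) :
    laguerreIntegral β (fun _ : Fin n ↦ m) =
      ∫ x : Fin n → ℝ, (∏ i, max (x i) 0 ^ m * exp (-x i)) * absVandermonde x ^ β := by
  have hzero (x : Fin n → ℝ) (hx : x ∉ Set.univ.pi fun _ ↦ Set.Ioi 0) :
      (∏ i, max (x i) 0 ^ m * exp (-x i)) * absVandermonde x ^ β = 0 := by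
    obtain ⟨i, hi⟩ : ∃ i, x i ≤ 0 := by
      simpa only [Set.mem_univ_pi, Set.mem_Ioi, not_forall, not_lt] using hx
    rw [prod_eq_zero (mem_univ i) (by rw [max_eq_right hi, zero_pow hm, zero_mul]), zero_mul]
  rw [laguerreIntegral, orthantMeasure_eq_restrict,
    ← setIntegral_eq_integral_of_forall_compl_eq_zero hzero]
  refine setIntegral_congr_fun (MeasurableSet.univ_pi fun _ ↦ measurableSet_Ioi) fun x hx ↦ ?_
  have hmax (i : Fin n) : max (x i) 0 = x i := max_eq_left (hx i trivial).le
  simp only [laguerreWeight, hmax]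

lemma laguerreIntegral_const_eq_mul_integral_rescaledGamma {m : ℕ} (hm : m ≠ 0) :
    laguerreIntegral β (fun _ : Fin n ↦ m) =
      √m ^ (n + n.choose 2 * β) * (m ^ m * exp (-m)) ^ n *
        ∫ x : Fin n → ℝ, (∏ i, rescaledGamma m (x i)) * absVandermonde x ^ β := by
  have hm0 : (0 : ℝ) < √m := by positivity
  have hVandermonde (x : Fin n → ℝ) : absVandermonde (√m • x + fun _ ↦ (m : ℝ)) =
      √m ^ n.choose 2 * absVandermonde x := by
    rw [← abs_of_pos hm0, ← absVandermonde_smul, abs_of_pos hm0]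
    exact absVandermonde_add_const (√m • x) m
  rw [laguerreIntegral_const_eq_integral_max β n hm,
    ← integral_add_right_eq_self _ (fun _ ↦ (m : ℝ)),
    integral_eq_pow_card_mul_integral_comp_smul _ hm0, Fintype.card_fin, pow_add, mul_assoc,
    mul_assoc, ← integral_const_mul ((m ^ m * exp (-m) : ℝ) ^ n),
    ← integral_const_mul (√m ^ (n.choose 2 * β))]
  congr! 3
  simp only [hVandermonde, Pi.add_apply, Pi.smul_apply, smul_eq_mul,
    max_zero_pow_mul_exp_eq_rescaledGamma, prod_mul_distrib, prod_const, card_univ,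
    Fintype.card_fin]
  ring

lemma tendsto_integral_prod_rescaledGamma :
    Tendsto (fun m : ℕ ↦ ∫ x : Fin n → ℝ, (∏ i, rescaledGamma m (x i)) * absVandermonde x ^ β)
      atTop (𝓝 (∫ x : Fin n → ℝ, (∏ i, exp (-x i ^ 2 / 2)) * absVandermonde x ^ β)) := by
  refine tendsto_integral_filter_of_dominated_convergence
    (fun x ↦ ∏ i, exp (1 / 2) * ((1 + |x i|) ^ (2 * n * β) * exp (-(1 / 2 * |x i|))))
    (Eventually.of_forall fun m ↦ by fun_prop) ?_ ?_ (ae_of_all _ fun x ↦ ?_)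
  · filter_upwards [eventually_ne_atTop 0] with m hm
    refine ae_of_all _ fun x ↦ ?_
    have hnonneg := prod_nonneg fun i (_ : i ∈ univ) ↦ rescaledGamma_nonneg m (x i)
    rw [norm_of_nonneg (mul_nonneg hnonneg (pow_nonneg (absVandermonde_nonneg x) β))]
    calc (∏ i, rescaledGamma m (x i)) * absVandermonde x ^ β
        ≤ (∏ i, exp (1 / 2) * exp (-(1 / 2 * |x i|))) * ∏ i, (1 + |x i|) ^ (2 * n * β) :=
          mul_le_mul (prod_le_prod (fun i _ ↦ rescaledGamma_nonneg m _) fun i _ ↦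
            rescaledGamma_le hm (x i)) (absVandermonde_pow_le β x)
            (pow_nonneg (absVandermonde_nonneg x) β) (by positivity)
      _ = _ := by
          simp only [prod_mul_distrib]
          ring
  · simp only [prod_mul_distrib (f := fun _ ↦ exp (1 / 2))]
    exact (integrable_prod_one_add_abs_pow_mul_exp _ one_half_pos).const_mul _
  · exact (tendsto_finsetProd _ fun i _ ↦ tendsto_rescaledGamma (x i)).mul_const _

lemma prod_range_pow_one_add_mul (r : ℝ) :
    ∏ j ∈ range n, r ^ (1 + j * β) = r ^ (n + n.choose 2 * β) := by
  rw [prod_pow_eq_pow_sum, sum_add_distrib, ← sum_mul, sum_range_id, Nat.choose_two_right,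
    sum_const, card_range, smul_eq_mul, mul_one]

lemma integral_prod_rescaledGamma_eq {m : ℕ} (hm : m ≠ 0) :
    ∫ x : Fin n → ℝ, (∏ i, rescaledGamma m (x i)) * absVandermonde x ^ β =
      ∏ j ∈ range n, Gamma (m + (1 + j * (β / 2))) /
        (m ^ (1 + j * (β / 2) - 1 / 2 : ℝ) * (m ^ m * exp (-m))) *
        (Gamma (1 + (j + 1 : ℕ) * (β / 2)) / Gamma (1 + β / 2)) := by
  have hm0 : (0 : ℝ) < m := by positivity
  have hpow (j : ℕ) : (m : ℝ) ^ (1 + j * (β / 2) - 1 / 2 : ℝ) = √m ^ (1 + j * β) := by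
    rw [sqrt_eq_rpow, ← rpow_mul_natCast hm0.le]
    congr 1
    push_cast
    ring
  have hconst : √m ^ (n + n.choose 2 * β) * (m ^ m * exp (-m)) ^ n =
      ∏ j ∈ range n, ((m : ℝ) ^ (1 + j * (β / 2) - 1 / 2 : ℝ) * (m ^ m * exp (-m))) := by
    rw [prod_mul_distrib, prod_const, card_range, ← prod_range_pow_one_add_mul]
    simp only [hpow]
  have hLaguerre := laguerreIntegral_const_eq_mul_integral_rescaledGamma β n hm
  rw [laguerreIntegral_const, hconst] at hLaguerre
  have hconst_ne := hconst ▸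
    (by positivity : √m ^ (n + n.choose 2 * β) * (m ^ m * exp (-m)) ^ n ≠ 0)
  rw [← mul_right_inj' hconst_ne, ← hLaguerre, ← prod_mul_distrib]
  refine prod_congr rfl fun j _ ↦ ?_
  field_simp

lemma mehta_integral :
    ∫ x : Fin n → ℝ, (∏ i, exp (-x i ^ 2 / 2)) * absVandermonde x ^ β =
      √(2 * π) ^ n * ∏ j ∈ range n, Gamma (1 + (j + 1 : ℕ) * (β / 2)) / Gamma (1 + β / 2) := by
  refine tendsto_nhds_unique (tendsto_integral_prod_rescaledGamma β n) ?_
  have hlim := tendsto_finsetProd (range n) fun j _ ↦ (tendsto_Gamma_natCast_add_div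
    (s := 1 + j * (β / 2)) (by positivity)).mul_const
    (Gamma (1 + (j + 1 : ℕ) * (β / 2)) / Gamma (1 + β / 2))
  rw [prod_mul_distrib, prod_const, card_range] at hlim
  refine hlim.congr' ?_
  filter_upwards [eventually_ne_atTop 0] with m hm
  exact (integral_prod_rescaledGamma_eq β n hm).symm

end Mehta

section GaussianShear

variable {ι : Type*} [Fintype ι]

lemma integral_comp_linearMap_pi {L : (ι → ℝ) →ₗ[ℝ] ι → ℝ} (hL : LinearMap.det L ≠ 0)
    (f : (ι → ℝ) → ℝ) : ∫ x, f (L x) = |LinearMap.det L|⁻¹ * ∫ x, f x := by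
  have hemb : MeasurableEmbedding L :=
    (L.equivOfDetNeZero hL).toContinuousLinearEquiv.toHomeomorph.measurableEmbedding
  rw [← hemb.integral_map, map_linearMap_volume_pi_eq_smul_volume_pi hL, integral_smul_measure,
    ENNReal.toReal_ofReal (abs_nonneg _), abs_inv, smul_eq_mul]

lemma sum_add_const_sq (x : ι → ℝ) (r : ℝ) :
    ∑ i, (x i + r) ^ 2 = ∑ i, x i ^ 2 + 2 * r * ∑ i, x i + Fintype.card ι * r ^ 2 := by
  simp only [add_sq, sum_add_distrib, sum_const, card_univ, nsmul_eq_mul, ← sum_mul, ← mul_sum]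
  ring

lemma integral_exp_neg_sq_sum_sub_sum_sq_mul [Nonempty ι] {f : (ι → ℝ) → ℝ}
    (hf : ∀ x (r : ℝ), f (fun i ↦ x i + r) = f x) {s α : ℝ} (hs : s ≠ 0)
    (hα : 0 < 1 + 2 * α * s * Fintype.card ι) :
    ∫ x, exp (-α * (∑ i, x i) ^ 2 - 1 / (2 * s) * ∑ i, x i ^ 2) * f x =
      (√(1 + 2 * α * s * Fintype.card ι))⁻¹ * ∫ x, exp (-(1 / (2 * s) * ∑ i, x i ^ 2)) * f x := by
  set q := √(1 + 2 * α * s * Fintype.card ι)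
  have hq_pos : 0 < q := sqrt_pos.2 hα
  have hq_sq : q ^ 2 = 1 + 2 * α * s * Fintype.card ι := sq_sqrt hα.le
  have hcard : (Fintype.card ι : ℝ) ≠ 0 := by positivity
  obtain ⟨a, ha⟩ : ∃ a, 1 + Fintype.card ι * a = q :=
    ⟨(q - 1) / Fintype.card ι, by rw [mul_div_cancel₀ _ hcard]; ring⟩
  have hα_eq : (2 * a + Fintype.card ι * a ^ 2) / (2 * s) = α := by
    rw [div_eq_iff (by positivity), ← mul_right_inj' hcard]
    linear_combination hq_sq + (1 + Fintype.card ι * a + q) * ha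
  have hexponent (x : ι → ℝ) : -(1 / (2 * s) * ∑ i, (x i + a * ∑ j, x j) ^ 2) =
      -α * (∑ i, x i) ^ 2 - 1 / (2 * s) * ∑ i, x i ^ 2 := by
    rw [sum_add_const_sq]
    linear_combination -(∑ i, x i) ^ 2 * hα_eq
  -- The shear `x ↦ x + a (∑ xⱼ) (1, …, 1)` multiplies `∑ xⱼ` by `q` and fixes `f`.
  let L := LinearMap.transvection (a • ∑ i, LinearMap.proj i : Module.Dual ℝ (ι → ℝ)) (fun _ ↦ 1)
  have hdet : LinearMap.det L = q := by
    simp [L, LinearMap.transvection.det, ← ha, mul_comm]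
  have hL (x : ι → ℝ) : L x = fun i ↦ x i + a * ∑ j, x j := by
    ext i
    simp [L, LinearMap.transvection.apply]
  have hchange := integral_comp_linearMap_pi (hdet.trans_ne hq_pos.ne')
    fun x ↦ exp (-(1 / (2 * s) * ∑ i, x i ^ 2)) * f x
  simpa only [hdet, abs_of_pos hq_pos, hL, hexponent, hf] using hchange

end GaussianShear

section Scaling

lemma integral_exp_neg_sum_sq_mul_of_homogeneous {ι : Type*} [Fintype ι] {f : (ι → ℝ) → ℝ}
    {d : ℕ} (hf : ∀ (r : ℝ) x, 0 < r → f (r • x) = r ^ d * f x) {s : ℝ} (hs : 0 < s) :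
    ∫ x, exp (-(1 / (2 * s) * ∑ i, x i ^ 2)) * f x =
      √s ^ (Fintype.card ι + d) * ∫ x, (∏ i, exp (-x i ^ 2 / 2)) * f x := by
  have hsqrt := sqrt_pos.2 hs
  have hexponent (x : ι → ℝ) : -(1 / (2 * s) * ∑ i, (√s • x) i ^ 2) = ∑ i, -x i ^ 2 / 2 := by
    simp only [Pi.smul_apply, smul_eq_mul, mul_pow, sq_sqrt hs.le, ← mul_sum, ← sum_div,
      sum_neg_distrib]
    field_simp
  rw [integral_eq_pow_card_mul_integral_comp_smul _ hsqrt, pow_add, mul_assoc]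
  simp only [hexponent, exp_sum, hf _ _ hsqrt, mul_left_comm _ (√s ^ d), integral_const_mul]

lemma integral_prod_exp_mul_comp_tail {n : ℕ} (f : (Fin n → ℝ) → ℝ) :
    ∫ x : Fin (n + 1) → ℝ, (∏ i, exp (-x i ^ 2 / 2)) * f (Fin.tail x) =
      √(2 * π) * ∫ y, (∏ i, exp (-y i ^ 2 / 2)) * f y := by
  have hgauss : ∫ t : ℝ, exp (-t ^ 2 / 2) = √(2 * π) := by
    convert integral_gaussian (1 / 2) using 3
    · ring_nf
    · ring_nf
  rw [← hgauss, ← integral_prod_mul, ← Measure.volume_eq_prod,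
    ← (volume_preserving_piFinSuccAbove (fun _ ↦ ℝ) 0).integral_comp']
  congr 1 with x
  simp [Fin.prod_univ_succ, mul_assoc, Fin.tail]

end Scaling

lemma prod_filter_pos_abs_sub_eq_absVandermonde_tail {n : ℕ} (x : Fin (n + 1) → ℝ) :
    ∏ i with 0 < i, ∏ j with i < j, |x j - x i| = absVandermonde (Fin.tail x) := by
  simp only [prod_filter, Fin.prod_univ_succ, absVandermonde, Fin.tail, lt_irrefl, if_false,
    Fin.succ_pos, if_true, Fin.not_lt_zero, Fin.succ_lt_succ_iff, one_mul, ← filter_lt_eq_Ioi]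

lemma Gamma_one_add_half_div_eq {r : ℝ} (hr : r ≠ 0) :
    Gamma (1 + r * (1 / 2)) / Gamma (1 + 1 / 2) = r * (Gamma (r / 2) / Gamma (1 / 2)) := by
  have hGamma : Gamma (1 / 2) ≠ 0 := (Gamma_pos_of_pos one_half_pos).ne'
  rw [mul_one_div, add_comm 1, add_comm 1, Gamma_add_one (by positivity),
    Gamma_add_one one_half_pos.ne']
  field_simp

lemma prod_Gamma_one_add_half_div (n : ℕ) :
    ∏ k ∈ range n, Gamma (1 + (k + 1 : ℕ) * (1 / 2)) / Gamma (1 + 1 / 2) =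
      n.factorial * ∏ k ∈ Icc 1 n, Gamma (k / 2) / Gamma (1 / 2) := by
  induction n with
  | zero => simp
  | succ n ih =>
    rw [prod_range_succ, ih, Gamma_one_add_half_div_eq (by positivity),
      prod_Icc_succ_top (Nat.le_add_left 1 n), Nat.factorial_succ, Nat.cast_mul]
    ring

lemma sqrt_pow_eq_rpow_div_two {r : ℝ} (hr : 0 ≤ r) (n : ℕ) : √r ^ n = r ^ (n / 2 : ℝ) := by
  rw [sqrt_eq_rpow, ← rpow_mul_natCast hr, one_div_mul_eq_div]

lemma sqrt_pow_add_choose_two {r : ℝ} (hr : 0 < r) (n : ℕ) :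
    √r ^ (n + 1 + n.choose 2) = √r * r ^ ((n + 1) * n / 4 : ℝ) := by
  rw [sqrt_pow_eq_rpow_div_two hr.le, sqrt_eq_rpow, ← rpow_add hr]
  push_cast [Nat.cast_choose_two]
  ring_nf

theorem stmt_8_general (β n : ℕ) {s α : ℝ} (hs : 0 < s) (hα : 0 < 1 + 2 * α * s * (n + 1 : ℕ)) :
    ∫ x : Fin (n + 1) → ℝ, exp (-α * (∑ i, x i) ^ 2 - 1 / (2 * s) * ∑ i, x i ^ 2) *
        absVandermonde (Fin.tail x) ^ β =
      √s ^ (n + 1 + n.choose 2 * β) * √(2 * π) ^ (n + 1) *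
        (∏ k ∈ range n, Gamma (1 + (k + 1 : ℕ) * (β / 2)) / Gamma (1 + β / 2)) /
        √(1 + 2 * α * s * (n + 1 : ℕ)) := by
  have htranslation (x : Fin (n + 1) → ℝ) (r : ℝ) :
      absVandermonde (Fin.tail fun i ↦ x i + r) ^ β = absVandermonde (Fin.tail x) ^ β :=
    congrArg (· ^ β) (absVandermonde_add_const (Fin.tail x) r)
  have hhomogeneous (r : ℝ) (x : Fin (n + 1) → ℝ) (hr : 0 < r) :
      absVandermonde (Fin.tail (r • x)) ^ β =
        r ^ (n.choose 2 * β) * absVandermonde (Fin.tail x) ^ β := by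
    rw [pow_mul, ← mul_pow, ← abs_of_pos hr, ← absVandermonde_smul, abs_of_pos hr]
    rfl
  have hcard := Fintype.card_fin (n + 1)
  rw [integral_exp_neg_sq_sum_sub_sum_sq_mul htranslation hs.ne' (hcard.symm ▸ hα),
    integral_exp_neg_sum_sq_mul_of_homogeneous hhomogeneous hs,
    integral_prod_exp_mul_comp_tail fun y ↦ absVandermonde y ^ β, mehta_integral, hcard,
    pow_succ √(2 * π)]
  ring

/-- Variant of the Selberg-type Gaussian integral where the Vandermonde factor
omits the first variable (product over `2 ≤ i < j ≤ N` only). -/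
theorem stmt_8 (N : ℕ) (hN : 2 ≤ N) (c : ℝ) (hc : -1 < c) (α : ℝ)
    (hα : 0 < 1 + 2 * α * (1 + c) * N) :
    (∫ lam : Fin N → ℝ,
        Real.exp (-α * (∑ i, lam i) ^ 2 - (1 / (2 * (1 + c))) * ∑ i, lam i ^ 2)
          * ∏ i ∈ Finset.univ.filter fun i : Fin N => (⟨0, by omega⟩ : Fin N) < i,
              ∏ j ∈ Finset.univ.filter fun j => i < j, |lam j - lam i|)
      = Real.sqrt (1 + c) * ((N - 1).factorial : ℝ) * (2 * π) ^ ((N : ℝ) / 2)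
          * (∏ k ∈ Finset.Icc 1 (N - 1), Real.Gamma ((k : ℝ) / 2) / Real.Gamma (1 / 2))
          * (1 + c) ^ ((N * (N - 1) : ℝ) / 4)
          / Real.sqrt (1 + 2 * α * (1 + c) * N) := by
  obtain ⟨n, rfl⟩ : ∃ n, N = n + 1 := ⟨N - 1, by omega⟩
  have hs : 0 < 1 + c := by linarith
  have hgeneral := stmt_8_general 1 n hs hα
  simp only [pow_one, mul_one, Nat.cast_one, prod_Gamma_one_add_half_div,
    sqrt_pow_add_choose_two hs, sqrt_pow_eq_rpow_div_two two_pi_pos.le,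
    ← prod_filter_pos_abs_sub_eq_absVandermonde_tail] at hgeneral
  refine hgeneral.trans ?_
  push_cast [Nat.add_sub_cancel, add_sub_cancel_right]
  ring
end

section
/- Let N ≥ 2 and c > −1, and let dO denote the normalized Haar probability measure on the orthogonal group O_N(ℝ). Then as s → ∞, e^{−cs} ∫_{O_N(ℝ)} (O_{1,1})² e^{s(1+c)(O_{1,1})²} dO is asymptotically equivalent to (Γ(N/2)/Γ(1/2)) · e^{s} / ((1+c)^{(N−1)/2} s^{(N−1)/2}), i.e. the ratio of the two quantities tends to 1. -/
open MeasureTheory Matrix Filter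

instance matrixMeasurableSpace {m n α : Type*} [MeasurableSpace α] :
    MeasurableSpace (Matrix m n α) :=
  (inferInstance : MeasurableSpace (m → n → α))

/-!
The law of a column of a Haar distributed orthogonal matrix is invariant under all linear
isometries and lives on the unit sphere. For orthonormal vectors `u` and `w`, such invariance gives
`∫ ⟪u + t w, x⟫ ^ (2k+2) = (1 + t²) ^ (k+1) ∫ ⟪u, x⟫ ^ (2k+2)`; comparing the coefficients of `t²`
and summing over an orthonormal basis that contains `u` yields
`(N + 2k) ∫ ⟪u, x⟫ ^ (2k+2) = (2k + 1) ∫ ⟪u, x⟫ ^ (2k)`. This is the moment recursion of the Beta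
distribution with parameters `1/2` and `(N-1)/2`. Moments determine a law with bounded support, so
the square of a matrix entry has that Beta distribution. Its density behaves like a constant times
`(1 - x) ^ ((N-3)/2)` near the maximum `x = 1` of the exponent, and Watson's lemma applies there.
-/

open ProbabilityTheory
open scoped Nat Topology

section Moments

theorem hasSum_charFun_of_ae_abs_le {ν : Measure ℝ} [IsFiniteMeasure ν] {R : ℝ}
    (hR : ∀ᵐ x ∂ν, |x| ≤ R) (t : ℝ) :
    HasSum (fun k : ℕ => (t * Complex.I) ^ k / k ! * ((∫ x, x ^ k ∂ν : ℝ) : ℂ))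
      (charFun ν t) := by
  have hterm (k : ℕ) (x : ℝ) :
      (t * Complex.I) ^ k / k ! * ((x ^ k : ℝ) : ℂ) = (t * x * Complex.I) ^ k / k ! := by
    push_cast
    ring
  simp_rw [charFun_apply_real, ← integral_complex_ofReal, ← integral_const_mul, hterm]
  refine hasSum_integral_of_dominated_convergence (fun k _ => (|t| * R) ^ k / k !)
    (fun k => by fun_prop) (fun k => ?_) ?_ (integrable_const _) ?_
  · filter_upwards [hR] with x hx
    simp only [norm_div, norm_pow, norm_mul, Complex.norm_real, Real.norm_eq_abs, Complex.norm_I,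
      mul_one, Complex.norm_natCast]
    gcongr
  · exact .of_forall fun _ => Real.summable_pow_div_factorial _
  · refine .of_forall fun x => ?_
    exact Complex.exp_eq_exp_ℂ ▸ NormedSpace.expSeries_div_hasSum_exp (t * x * Complex.I)

theorem measure_eq_of_forall_integral_pow_eq {ν ν' : Measure ℝ} [IsFiniteMeasure ν]
    [IsFiniteMeasure ν'] {R R' : ℝ} (hR : ∀ᵐ x ∂ν, |x| ≤ R) (hR' : ∀ᵐ x ∂ν', |x| ≤ R')
    (h : ∀ k : ℕ, ∫ x, x ^ k ∂ν = ∫ x, x ^ k ∂ν') : ν = ν' := by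
  refine Measure.ext_of_charFun (funext fun t => ?_)
  have hsum := hasSum_charFun_of_ae_abs_le hR t
  simp_rw [h] at hsum
  exact hsum.unique (hasSum_charFun_of_ae_abs_le hR' t)

end Moments

section LaplaceTransform

/-- Leading order of **Watson's lemma**: the substitution `w = t * y` removes `t` from the weight
and leaves `g (w / t)`, which tends to `L`. -/
theorem tendsto_rpow_smul_integral_exp_neg_mul {F : Type*} [NormedAddCommGroup F]
    [NormedSpace ℝ F] [CompleteSpace F] {b : ℝ} (hb : 0 < b) {g : ℝ → F}
    (hg : StronglyMeasurable g) {C : ℝ} (hC : ∀ y, 0 < y → ‖g y‖ ≤ C) {L : F}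
    (hL : Tendsto g (𝓝[>] 0) (𝓝 L)) :
    Tendsto (fun t : ℝ => t ^ b • ∫ y in Set.Ioi 0, (Real.exp (-(t * y)) * y ^ (b - 1)) • g y)
      atTop (𝓝 (Real.Gamma b • L)) := by
  have hscale (t : ℝ) (ht : 0 < t) :
      t ^ b • ∫ y in Set.Ioi 0, (Real.exp (-(t * y)) * y ^ (b - 1)) • g y =
        ∫ w in Set.Ioi 0, (Real.exp (-w) * w ^ (b - 1)) • g (w / t) := by
    have hsubst := integral_comp_mul_left_Ioi'
      (fun w => (Real.exp (-w) * w ^ (b - 1)) • g (w / t)) 0 ht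
    rw [mul_zero] at hsubst
    rw [← hsubst, ← integral_smul, ← integral_smul]
    refine setIntegral_congr_fun measurableSet_Ioi fun y (hy : 0 < y) => ?_
    simp only [mul_div_cancel_left₀ y ht.ne', smul_smul, Real.mul_rpow ht.le hy.le,
      Real.rpow_sub_one ht.ne']
    congr 1
    field_simp
  rw [Real.Gamma_eq_integral hb, ← integral_smul_const]
  refine Tendsto.congr' ((eventually_gt_atTop 0).mono fun t ht => (hscale t ht).symm) ?_
  refine tendsto_integral_filter_of_dominated_convergence
    (fun w => Real.exp (-w) * w ^ (b - 1) * C) ?_ ?_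
    ((Real.GammaIntegral_convergent hb).mul_const C) ?_
  · refine .of_forall fun t => StronglyMeasurable.aestronglyMeasurable ?_
    have hweight : Measurable fun w : ℝ => Real.exp (-w) * w ^ (b - 1) := by fun_prop
    exact hweight.stronglyMeasurable.smul (hg.comp_measurable (measurable_id.div_const t))
  · filter_upwards [eventually_gt_atTop 0] with t ht
    refine ae_restrict_of_forall_mem measurableSet_Ioi fun w (hw : 0 < w) => ?_
    have hnonneg : 0 ≤ Real.exp (-w) * w ^ (b - 1) := by positivity
    rw [norm_smul, Real.norm_of_nonneg hnonneg]
    exact mul_le_mul_of_nonneg_left (hC _ (div_pos hw ht)) hnonneg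
  · refine ae_restrict_of_forall_mem measurableSet_Ioi fun w (hw : 0 < w) => ?_
    have hdiv : Tendsto (fun t => w / t) atTop (𝓝[>] 0) :=
      tendsto_nhdsWithin_iff.2 ⟨tendsto_const_nhds.div_atTop tendsto_id,
        (eventually_gt_atTop 0).mono fun t ht => div_pos hw ht⟩
    exact (hL.comp hdiv).const_smul _

end LaplaceTransform

section BetaMeasure

theorem measurable_betaPDF (a b : ℝ) : Measurable (betaPDF a b) :=
  (measurable_betaPDFReal a b).ennreal_ofReal

theorem ae_betaMeasure_mem_Ioo (a b : ℝ) : ∀ᵐ x ∂betaMeasure a b, x ∈ Set.Ioo (0 : ℝ) 1 := by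
  rw [betaMeasure, ae_withDensity_iff (measurable_betaPDF a b)]
  refine .of_forall fun x hx => ⟨?_, ?_⟩ <;> contrapose! hx
  · exact betaPDF_eq_zero_of_nonpos hx
  · exact betaPDF_eq_zero_of_one_le hx

variable {a b : ℝ}

theorem integral_betaMeasure (ha : 0 < a) (hb : 0 < b) (g : ℝ → ℝ) :
    ∫ x, g x ∂betaMeasure a b =
      (beta a b)⁻¹ * ∫ x in Set.Ioo 0 1, g x * (x ^ (a - 1) * (1 - x) ^ (b - 1)) := by
  rw [betaMeasure, integral_withDensity_eq_integral_toReal_smul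
    (measurable_betaPDF a b) (.of_forall fun _ => ENNReal.ofReal_lt_top),
    ← integral_const_mul, ← integral_indicator measurableSet_Ioo]
  congr 1 with x
  by_cases hx : x ∈ Set.Ioo (0 : ℝ) 1
  · have hpos := (betaPDFReal_pos hx.1 hx.2 ha hb).le
    rw [Set.indicator_of_mem hx, betaPDF, ENNReal.toReal_ofReal hpos, betaPDFReal,
      if_pos (Set.mem_Ioo.1 hx), smul_eq_mul]
    ring
  · rw [Set.indicator_of_notMem hx, betaPDF, betaPDFReal, if_neg (Set.mem_Ioo.not.1 hx),
      ENNReal.ofReal_zero, ENNReal.toReal_zero, zero_smul]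

theorem setIntegral_rpow_mul_rpow_eq_beta (ha : 0 < a) (hb : 0 < b) :
    ∫ x in Set.Ioo (0 : ℝ) 1, x ^ (a - 1) * (1 - x) ^ (b - 1) = beta a b := by
  have := isProbabilityMeasureBeta ha hb
  have htotal := integral_betaMeasure ha hb fun _ => 1
  simp only [integral_const, probReal_univ, one_mul, smul_eq_mul] at htotal
  rwa [eq_inv_mul_iff_mul_eq₀ (beta_pos ha hb).ne', mul_one, eq_comm] at htotal

theorem integral_pow_betaMeasure (ha : 0 < a) (hb : 0 < b) (k : ℕ) :
    ∫ x, x ^ k ∂betaMeasure a b = beta (a + k) b / beta a b := by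
  rw [integral_betaMeasure ha hb, div_eq_inv_mul,
    ← setIntegral_rpow_mul_rpow_eq_beta (a := a + k) (by positivity) hb]
  congr 1
  refine setIntegral_congr_fun measurableSet_Ioo fun x hx => ?_
  rw [add_sub_right_comm, Real.rpow_add_natCast hx.1.ne']
  ring

theorem beta_add_one_left (ha : 0 < a) (hb : 0 < b) :
    (a + b) * beta (a + 1) b = a * beta a b := by
  have hab : a + b ≠ 0 := by positivity
  rw [beta, beta, add_right_comm, Real.Gamma_add_one ha.ne', Real.Gamma_add_one hab]
  field_simp

theorem integral_pow_succ_betaMeasure (ha : 0 < a) (hb : 0 < b) (k : ℕ) :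
    (a + b + k) * ∫ x, x ^ (k + 1) ∂betaMeasure a b = (a + k) * ∫ x, x ^ k ∂betaMeasure a b := by
  have hrec := beta_add_one_left (a := a + k) (by positivity) hb
  rw [integral_pow_betaMeasure ha hb, integral_pow_betaMeasure ha hb, Nat.cast_add_one,
    ← add_assoc, ← mul_div_assoc, ← mul_div_assoc, ← hrec, add_right_comm]

-- The substitution `y = 1 - x` moves the maximum of the exponential to `0`.
theorem exp_neg_mul_integral_mul_exp_betaMeasure (ha : 0 < a) (hb : 0 < b) (t : ℝ) :
    Real.exp (-t) * ∫ x, x * Real.exp (t * x) ∂betaMeasure a b =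
      (beta a b)⁻¹ * ∫ y in Set.Ioo 0 1, (Real.exp (-(t * y)) * y ^ (b - 1)) * (1 - y) ^ a := by
  let f (x : ℝ) : ℝ := Real.exp (-t) * (x * Real.exp (t * x) * (x ^ (a - 1) * (1 - x) ^ (b - 1)))
  have hreflect : ∫ x in Set.Ioo 0 1, f x = ∫ y in Set.Ioo 0 1, f (1 - y) := by
    have h := intervalIntegral.integral_comp_sub_left (a := 0) (b := 1) f 1
    rw [sub_self, sub_zero, intervalIntegral.integral_of_le zero_le_one,
      intervalIntegral.integral_of_le zero_le_one, integral_Ioc_eq_integral_Ioo,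
      integral_Ioc_eq_integral_Ioo] at h
    exact h.symm
  rw [integral_betaMeasure ha hb, mul_left_comm, ← integral_const_mul, hreflect]
  congr 1
  refine setIntegral_congr_fun measurableSet_Ioo fun y hy => ?_
  have hy' : 1 - y ≠ 0 := (sub_pos.2 hy.2).ne'
  have hexp : Real.exp (-(t * y)) = Real.exp (-t) * Real.exp (t * (1 - y)) := by
    rw [← Real.exp_add]
    ring_nf
  simp only [f, hexp, Real.rpow_sub_one hy', sub_sub_cancel]
  field_simp

theorem tendsto_integral_mul_exp_betaMeasure (ha : 0 < a) (hb : 0 < b) :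
    Tendsto (fun t : ℝ => t ^ b * (Real.exp (-t) * ∫ x, x * Real.exp (t * x) ∂betaMeasure a b))
      atTop (𝓝 (Real.Gamma (a + b) / Real.Gamma a)) := by
  let g (y : ℝ) : ℝ := max (1 - y) 0 ^ a
  have hcont : Continuous g := by
    refine Continuous.rpow_const ?_ fun _ => .inr ha.le
    fun_prop
  have hbound (y : ℝ) (hy : 0 < y) : ‖g y‖ ≤ 1 := by
    rw [Real.norm_of_nonneg (by positivity)]
    exact Real.rpow_le_one (le_max_right _ _) (max_le (by linarith) zero_le_one) ha.le
  have hlim : Tendsto g (𝓝[>] 0) (𝓝 1) := by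
    have hg0 : g 0 = 1 := by simp [g]
    exact hg0 ▸ hcont.continuousAt.tendsto.mono_left nhdsWithin_le_nhds
  have hextend (t : ℝ) :
      ∫ y in Set.Ioo 0 1, (Real.exp (-(t * y)) * y ^ (b - 1)) * (1 - y) ^ a =
        ∫ y in Set.Ioi 0, (Real.exp (-(t * y)) * y ^ (b - 1)) • g y := by
    refine (setIntegral_congr_fun measurableSet_Ioo fun y hy => ?_).trans
      (setIntegral_eq_of_subset_of_forall_sdiff_eq_zero measurableSet_Ioi
        Set.Ioo_subset_Ioi_self fun y hy => ?_).symm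
    · simp only [g, max_eq_left (sub_pos.2 hy.2).le, smul_eq_mul]
    · have hy1 : 1 ≤ y := not_lt.1 fun hlt => hy.2 ⟨hy.1, hlt⟩
      simp only [g, max_eq_right (sub_nonpos.2 hy1), Real.zero_rpow ha.ne', smul_zero]
  have hconst : Real.Gamma (a + b) / Real.Gamma a = (beta a b)⁻¹ * (Real.Gamma b * 1) := by
    have hΓb := (Real.Gamma_pos_of_pos hb).ne'
    rw [beta]
    field_simp
  simp_rw [exp_neg_mul_integral_mul_exp_betaMeasure ha hb, mul_left_comm _ (beta a b)⁻¹,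
    hextend, hconst]
  exact (tendsto_rpow_smul_integral_exp_neg_mul hb hcont.stronglyMeasurable hbound
    hlim).const_mul _

end BetaMeasure

section IsometryInvariant

theorem card_sub_one_div_two_pos {ι : Type*} [Fintype ι] (hι : 2 ≤ Fintype.card ι) :
    0 < ((Fintype.card ι : ℝ) - 1) / 2 :=
  half_pos (sub_pos.2 (Nat.one_lt_cast.2 hι))

variable {E : Type*} [NormedAddCommGroup E] [InnerProductSpace ℝ E] [MeasurableSpace E]
  [BorelSpace E] {ν : Measure E}

/-- A measure on a real inner product space that is preserved by every linear isometry of the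
space, reflections included; for a probability measure on the unit sphere of a finite-dimensional
space this singles out the uniform distribution. -/
def IsIsometryInvariant (ν : Measure E) : Prop :=
  ∀ e : E ≃ₗᵢ[ℝ] E, MeasurePreserving e ν ν

namespace IsIsometryInvariant

theorem integral_comp_inner_eq (hν : IsIsometryInvariant ν) {u v : E} (huv : ‖u‖ = ‖v‖)
    (f : ℝ → ℝ) : ∫ x, f (inner ℝ u x) ∂ν = ∫ x, f (inner ℝ v x) ∂ν := by
  let e : E ≃ₗᵢ[ℝ] E := (ℝ ∙ (u - v))ᗮ.reflection
  have heu : e u = v := Submodule.reflection_sub huv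
  rw [← (show MeasurePreserving e.toMeasurableEquiv ν ν from hν e).integral_comp'
    fun x => f (inner ℝ v x), ← heu]
  simp only [LinearIsometryEquiv.coe_toMeasurableEquiv, LinearIsometryEquiv.inner_map_map]

theorem integral_inner_pow (hν : IsIsometryInvariant ν) {u : E} (hu : ‖u‖ = 1) (v : E) (m : ℕ) :
    ∫ x, inner ℝ v x ^ m ∂ν = ‖v‖ ^ m * ∫ x, inner ℝ u x ^ m ∂ν := by
  have hnorm : ‖v‖ = ‖‖v‖ • u‖ := by rw [norm_smul, norm_norm, hu, mul_one]
  rw [hν.integral_comp_inner_eq hnorm (· ^ m), ← integral_const_mul]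
  simp only [real_inner_smul_left, mul_pow]

end IsIsometryInvariant

theorem measurable_inner_right (u : E) : Measurable fun x : E => inner ℝ u x :=
  (continuous_const.inner continuous_id).measurable

theorem integrable_inner_pow_mul_inner_pow {p q : ℕ}
    (hint : Integrable (fun x => ‖x‖ ^ (p + q)) ν) (u w : E) :
    Integrable (fun x => inner ℝ u x ^ p * inner ℝ w x ^ q) ν := by
  refine (hint.const_mul (‖u‖ ^ p * ‖w‖ ^ q)).mono' ?_ (.of_forall fun x => ?_)
  · exact (((measurable_inner_right u).pow_const p).mul
      ((measurable_inner_right w).pow_const q)).aestronglyMeasurable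
  · calc ‖inner ℝ u x ^ p * inner ℝ w x ^ q‖
        ≤ (‖u‖ * ‖x‖) ^ p * (‖w‖ * ‖x‖) ^ q := by
          rw [norm_mul, norm_pow, norm_pow]
          gcongr <;> exact norm_inner_le_norm _ _
      _ = ‖u‖ ^ p * ‖w‖ ^ q * ‖x‖ ^ (p + q) := by ring

theorem integral_inner_add_smul_pow {m : ℕ} (hint : Integrable (fun x => ‖x‖ ^ m) ν) (u w : E)
    (t : ℝ) :
    ∫ x, inner ℝ (u + t • w) x ^ m ∂ν =
      ∑ l ∈ Finset.range (m + 1),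
        (∫ x, inner ℝ u x ^ (m - l) * inner ℝ w x ^ l ∂ν) * m.choose l * t ^ l := by
  have hexpand (x : E) : inner ℝ (u + t • w) x ^ m =
      ∑ l ∈ Finset.range (m + 1),
        inner ℝ u x ^ (m - l) * inner ℝ w x ^ l * (m.choose l * t ^ l) := by
    rw [inner_add_left, real_inner_smul_left, add_comm, add_pow]
    refine Finset.sum_congr rfl fun l _ => ?_
    ring
  simp_rw [hexpand, mul_assoc _ (m.choose _ : ℝ), ← integral_mul_const]
  refine integral_finsetSum _ fun l hl => Integrable.mul_const ?_ _
  have hl' : m - l + l = m := Nat.sub_add_cancel (Nat.lt_succ_iff.1 (Finset.mem_range.1 hl))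
  exact integrable_inner_pow_mul_inner_pow (hl'.symm ▸ hint) u w

namespace IsIsometryInvariant

theorem sum_integral_inner_pow_mul_inner_pow (hν : IsIsometryInvariant ν) {u w : E}
    (hu : ‖u‖ = 1) (hw : ‖w‖ = 1) (huw : inner ℝ u w = 0) {m : ℕ}
    (hint : Integrable (fun x => ‖x‖ ^ (2 * m)) ν) (t : ℝ) :
    ∑ l ∈ Finset.range (2 * m + 1),
        (∫ x, inner ℝ u x ^ (2 * m - l) * inner ℝ w x ^ l ∂ν) * (2 * m).choose l * t ^ l =
      (1 + t ^ 2) ^ m * ∫ x, inner ℝ u x ^ (2 * m) ∂ν := by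
  have hnorm_sq : ‖u + t • w‖ ^ 2 = 1 + t ^ 2 := by
    rw [norm_add_sq_real, real_inner_smul_right, huw, norm_smul, mul_pow, hu, hw,
      Real.norm_eq_abs, sq_abs]
    ring
  rw [← integral_inner_add_smul_pow hint, hν.integral_inner_pow hu, pow_mul, hnorm_sq]

theorem integral_inner_pow_mul_inner_sq (hν : IsIsometryInvariant ν) {u w : E} (hu : ‖u‖ = 1)
    (hw : ‖w‖ = 1) (huw : inner ℝ u w = 0) {k : ℕ}
    (hint : Integrable (fun x => ‖x‖ ^ (2 * k + 2)) ν) :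
    (2 * k + 1) * ∫ x, inner ℝ u x ^ (2 * k) * inner ℝ w x ^ 2 ∂ν =
      ∫ x, inner ℝ u x ^ (2 * k + 2) ∂ν := by
  rw [← mul_add_one] at hint ⊢
  set M := ∫ x, inner ℝ u x ^ (2 * (k + 1)) ∂ν
  let P : Polynomial ℝ := ∑ l ∈ Finset.range (2 * (k + 1) + 1), Polynomial.C
    ((∫ x, inner ℝ u x ^ (2 * (k + 1) - l) * inner ℝ w x ^ l ∂ν) * (2 * (k + 1)).choose l) *
      Polynomial.X ^ l
  let Q : Polynomial ℝ := Polynomial.expand ℝ 2 ((1 + Polynomial.X) ^ (k + 1)) * Polynomial.C M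
  have hPQ : P = Q := by
    refine Polynomial.funext fun t => ?_
    simp only [P, Q, Polynomial.eval_finsetSum, Polynomial.expand_eval, Polynomial.eval_mul,
      Polynomial.eval_C, Polynomial.eval_pow, Polynomial.eval_X, Polynomial.eval_add,
      Polynomial.eval_one]
    exact hν.sum_integral_inner_pow_mul_inner_pow hu hw huw hint t
  have hPcoeff : P.coeff 2 =
      (∫ x, inner ℝ u x ^ (2 * k) * inner ℝ w x ^ 2 ∂ν) * ((k + 1) * (2 * k + 1)) := by
    simp only [P, Polynomial.finsetSum_coeff, Polynomial.coeff_C_mul_X_pow]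
    rw [Finset.sum_ite_eq, if_pos (Finset.mem_range.2 (by omega)), Nat.cast_choose_two,
      mul_add_one, Nat.add_sub_cancel]
    push_cast
    ring
  have hQcoeff : Q.coeff 2 = (k + 1) * M := by
    rw [Polynomial.coeff_mul_C, Polynomial.coeff_expand two_pos, if_pos dvd_rfl,
      Nat.div_self two_pos, Polynomial.coeff_one_add_X_pow, Nat.choose_one_right,
      Nat.cast_add_one]
  have hk : (k + 1 : ℝ) ≠ 0 := by positivity
  refine mul_left_cancel₀ hk ?_
  rw [← hQcoeff, ← hPQ, hPcoeff]
  ring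

variable {ι : Type*} [Fintype ι]

theorem integral_norm_sq_mul_inner_pow (hν : IsIsometryInvariant ν) (b : OrthonormalBasis ι ℝ E)
    (i : ι) {k : ℕ} (hint : Integrable (fun x => ‖x‖ ^ (2 * k + 2)) ν) :
    (2 * k + 1) * ∫ x, ‖x‖ ^ 2 * inner ℝ (b i) x ^ (2 * k) ∂ν =
      (Fintype.card ι + 2 * k) * ∫ x, inner ℝ (b i) x ^ (2 * k + 2) ∂ν := by
  classical
  have hsum : ∫ x, ‖x‖ ^ 2 * inner ℝ (b i) x ^ (2 * k) ∂ν =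
      ∑ j, ∫ x, inner ℝ (b i) x ^ (2 * k) * inner ℝ (b j) x ^ 2 ∂ν := by
    rw [← integral_finsetSum _ fun j _ => integrable_inner_pow_mul_inner_pow hint (b i) (b j)]
    simp only [← Finset.mul_sum, b.sum_sq_inner_right, mul_comm]
  have hoff (j : ι) (hj : j ∈ Finset.univ.erase i) :
      (2 * k + 1) * ∫ x, inner ℝ (b i) x ^ (2 * k) * inner ℝ (b j) x ^ 2 ∂ν =
        ∫ x, inner ℝ (b i) x ^ (2 * k + 2) ∂ν :=
    hν.integral_inner_pow_mul_inner_sq (b.norm_eq_one i) (b.norm_eq_one j)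
      (b.inner_eq_zero (Finset.ne_of_mem_erase hj).symm) hint
  have hcard : ((Finset.univ.erase i).card : ℝ) = Fintype.card ι - 1 := by
    rw [Finset.card_erase_of_mem (Finset.mem_univ i), Finset.card_univ,
      Nat.cast_pred (Fintype.card_pos_iff.2 ⟨i⟩)]
  rw [hsum, ← Finset.add_sum_erase _ _ (Finset.mem_univ i), mul_add, Finset.mul_sum,
    Finset.sum_congr rfl hoff, Finset.sum_const, nsmul_eq_mul, hcard]
  simp only [← pow_add]
  ring

variable [IsProbabilityMeasure ν]

theorem integral_inner_pow_eq_integral_pow_betaMeasure (hν : IsIsometryInvariant ν)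
    (hsphere : ∀ᵐ x ∂ν, ‖x‖ = 1) (b : OrthonormalBasis ι ℝ E) (hι : 2 ≤ Fintype.card ι) (i : ι)
    (k : ℕ) :
    ∫ x, inner ℝ (b i) x ^ (2 * k) ∂ν =
      ∫ y, y ^ k ∂betaMeasure (1 / 2) ((Fintype.card ι - 1) / 2) := by
  have hb := card_sub_one_div_two_pos hι
  have := isProbabilityMeasureBeta one_half_pos hb
  induction k with
  | zero => simp only [mul_zero, pow_zero, integral_const, probReal_univ]
  | succ k ih =>
    have hint : Integrable (fun x : E => ‖x‖ ^ (2 * k + 2)) ν :=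
      (integrable_const 1).congr <| hsphere.mono fun x hx => by simp only [hx, one_pow]
    have hsphere_integral : ∫ x, ‖x‖ ^ 2 * inner ℝ (b i) x ^ (2 * k) ∂ν =
        ∫ x, inner ℝ (b i) x ^ (2 * k) ∂ν :=
      integral_congr_ae <| hsphere.mono fun x hx => by simp only [hx, one_pow, one_mul]
    have hrec := hν.integral_norm_sq_mul_inner_pow b i hint
    have hrec_beta := integral_pow_succ_betaMeasure one_half_pos hb k
    rw [hsphere_integral, ih] at hrec
    have hne : (Fintype.card ι : ℝ) + 2 * k ≠ 0 := by positivity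
    refine mul_left_cancel₀ hne ?_
    rw [mul_add_one]
    linear_combination -2 * hrec_beta - hrec

theorem map_inner_sq_eq_betaMeasure (hν : IsIsometryInvariant ν) (hsphere : ∀ᵐ x ∂ν, ‖x‖ = 1)
    (b : OrthonormalBasis ι ℝ E) (hι : 2 ≤ Fintype.card ι) (i : ι) :
    ν.map (fun x => inner ℝ (b i) x ^ 2) = betaMeasure (1 / 2) ((Fintype.card ι - 1) / 2) := by
  have := isProbabilityMeasureBeta one_half_pos (card_sub_one_div_two_pos hι)
  have hmeas : AEMeasurable (fun x => inner ℝ (b i) x ^ 2) ν :=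
    ((measurable_inner_right (b i)).pow_const 2).aemeasurable
  have := Measure.isProbabilityMeasure_map hmeas
  refine measure_eq_of_forall_integral_pow_eq (R := 1) (R' := 1) ?_ ?_ fun k => ?_
  · rw [ae_map_iff hmeas (measurableSet_le (by fun_prop) (by fun_prop))]
    filter_upwards [hsphere] with x hx
    have hinner : |inner ℝ (b i) x| ≤ 1 := by
      simpa [hx] using abs_real_inner_le_norm (b i) x
    rw [abs_pow]
    exact pow_le_one₀ (abs_nonneg _) hinner
  · filter_upwards [ae_betaMeasure_mem_Ioo _ _] with y hy
    exact abs_le.2 ⟨by linarith [hy.1], hy.2.le⟩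
  · rw [integral_map hmeas (by fun_prop),
      ← hν.integral_inner_pow_eq_integral_pow_betaMeasure hsphere b hι i k]
    simp only [pow_mul]

end IsIsometryInvariant

end IsometryInvariant

section OrthogonalGroup

theorem measurable_matrix_apply {m n α : Type*} [MeasurableSpace α] (i : m) (j : n) :
    Measurable fun A : Matrix m n α => A i j :=
  (measurable_pi_apply j).comp (measurable_pi_apply i)

theorem measurable_toLp_matrix_col {m n α : Type*} [MeasurableSpace α] (j : n) :
    Measurable fun A : Matrix m n α => WithLp.toLp 2 (A.col j) :=
  (WithLp.measurable_toLp 2 (m → α)).comp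
    (measurable_pi_lambda _ fun i => measurable_matrix_apply i j)

theorem measurable_matrix_mul_left {l m n R : Type*} [Fintype m] [NonUnitalNonAssocSemiring R]
    [MeasurableSpace R] [MeasurableAdd₂ R] [MeasurableMul R] (Q : Matrix l m R) :
    Measurable fun A : Matrix m n R => Q * A := by
  refine measurable_pi_lambda _ fun i => measurable_pi_lambda _ fun j => ?_
  simp only [Matrix.mul_apply]
  exact Finset.measurable_sum _ fun k _ => (measurable_matrix_apply k j).const_mul _

variable {n : Type*} [Fintype n] [DecidableEq n] {μ : Measure (Matrix n n ℝ)}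

theorem isIsometryInvariant_map_col
    (hinv : ∀ Q ∈ Matrix.orthogonalGroup n ℝ, μ.map (fun O => Q * O) = μ) (j : n) :
    IsIsometryInvariant (μ.map fun O => WithLp.toLp 2 (O.col j)) := by
  intro e
  let b := (EuclideanSpace.basisFun n ℝ).toBasis
  let Q := LinearMap.toMatrix b b e.toLinearMap
  have hQ : Q ∈ Matrix.orthogonalGroup n ℝ :=
    e.toMatrix_mem_unitaryGroup (EuclideanSpace.basisFun n ℝ) (EuclideanSpace.basisFun n ℝ)
  have hcol (O : Matrix n n ℝ) :
      e (WithLp.toLp 2 (O.col j)) = WithLp.toLp 2 ((Q * O).col j) := by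
    have hrepr := LinearMap.toMatrix_mulVec_repr b b e.toLinearMap (WithLp.toLp 2 (O.col j))
    exact (congrArg (WithLp.toLp 2) hrepr).symm
  refine ⟨e.continuous.measurable, ?_⟩
  rw [Measure.map_map e.continuous.measurable (measurable_toLp_matrix_col j)]
  conv_rhs => rw [← hinv Q hQ, Measure.map_map (measurable_toLp_matrix_col j)
    (measurable_matrix_mul_left Q)]
  congr 1 with O : 1
  exact hcol O

theorem ae_norm_col_eq_one [IsProbabilityMeasure μ]
    (hsupp : μ {O | O ∈ Matrix.orthogonalGroup n ℝ} = 1) (j : n) :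
    ∀ᵐ x ∂μ.map fun O => WithLp.toLp 2 (O.col j), ‖x‖ = 1 := by
  have hsphere : MeasurableSet {x : EuclideanSpace ℝ n | ‖x‖ = 1} :=
    measurableSet_eq_fun measurable_norm measurable_const
  rw [ae_map_iff (measurable_toLp_matrix_col j).aemeasurable hsphere]
  refine (mem_ae_iff_prob_eq_one (measurable_toLp_matrix_col j hsphere)).2
    (le_antisymm prob_le_one ?_)
  rw [← hsupp]
  refine measure_mono fun O hO => ?_
  have hdiag := congr_fun₂ ((Matrix.mem_orthogonalGroup_iff' n ℝ).1 hO) j j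
  change ‖WithLp.toLp 2 (O.col j)‖ = 1
  rw [← sq_eq_sq₀ (norm_nonneg _) zero_le_one, EuclideanSpace.real_norm_sq_eq]
  simpa [Matrix.mul_apply, ← pow_two] using hdiag

theorem map_apply_sq_eq_betaMeasure [IsProbabilityMeasure μ]
    (hsupp : μ {O | O ∈ Matrix.orthogonalGroup n ℝ} = 1)
    (hinv : ∀ Q ∈ Matrix.orthogonalGroup n ℝ, μ.map (fun O => Q * O) = μ)
    (hn : 2 ≤ Fintype.card n) (i j : n) :
    μ.map (fun O => O i j ^ 2) = betaMeasure (1 / 2) ((Fintype.card n - 1) / 2) := by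
  have := Measure.isProbabilityMeasure_map (μ := μ) (measurable_toLp_matrix_col j).aemeasurable
  rw [← (isIsometryInvariant_map_col hinv j).map_inner_sq_eq_betaMeasure
    (ae_norm_col_eq_one hsupp j) (EuclideanSpace.basisFun n ℝ) hn i,
    Measure.map_map ((measurable_inner_right _).pow_const 2) (measurable_toLp_matrix_col j)]
  congr 1 with O : 1
  rw [Function.comp_apply, real_inner_comm, EuclideanSpace.inner_basisFun_real]
  rfl

theorem tendsto_integral_sq_mul_exp_apply [IsProbabilityMeasure μ]
    (hsupp : μ {O | O ∈ Matrix.orthogonalGroup n ℝ} = 1)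
    (hinv : ∀ Q ∈ Matrix.orthogonalGroup n ℝ, μ.map (fun O => Q * O) = μ)
    (hn : 2 ≤ Fintype.card n) (i j : n) :
    Tendsto (fun t : ℝ => t ^ (((Fintype.card n : ℝ) - 1) / 2) *
        (Real.exp (-t) * ∫ O, O i j ^ 2 * Real.exp (t * O i j ^ 2) ∂μ))
      atTop (𝓝 (Real.Gamma ((Fintype.card n : ℝ) / 2) / Real.Gamma (1 / 2))) := by
  have hlim := tendsto_integral_mul_exp_betaMeasure one_half_pos (card_sub_one_div_two_pos hn)
  rw [← map_apply_sq_eq_betaMeasure hsupp hinv hn i j, ← add_div, add_sub_cancel] at hlim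
  refine hlim.congr fun t => ?_
  rw [integral_map ((measurable_matrix_apply i j).pow_const 2).aemeasurable (by fun_prop)]

theorem stmt_10_general [IsProbabilityMeasure μ] {c : ℝ} (hc : -1 < c)
    (hsupp : μ {O | O ∈ Matrix.orthogonalGroup n ℝ} = 1)
    (hinv : ∀ Q ∈ Matrix.orthogonalGroup n ℝ, μ.map (fun O => Q * O) = μ)
    (hn : 2 ≤ Fintype.card n) (i j : n) :
    Tendsto
      (fun s : ℝ =>
        (Real.exp (-c * s) * ∫ O, O i j ^ 2 * Real.exp (s * (1 + c) * O i j ^ 2) ∂μ)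
          / (Real.Gamma ((Fintype.card n : ℝ) / 2) / Real.Gamma (1 / 2) * Real.exp s
              / ((1 + c) ^ (((Fintype.card n : ℝ) - 1) / 2)
                * s ^ (((Fintype.card n : ℝ) - 1) / 2))))
      atTop (𝓝 1) := by
  have hc' : 0 < 1 + c := by linarith
  have hcard : (0 : ℝ) < Fintype.card n := Nat.cast_pos.2 (two_pos.trans_le hn)
  have hΓn : Real.Gamma (Fintype.card n / 2) ≠ 0 := (Real.Gamma_pos_of_pos (half_pos hcard)).ne'
  have hΓ : Real.Gamma (1 / 2) ≠ 0 := (Real.Gamma_pos_of_pos one_half_pos).ne'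
  have hlim := ((tendsto_integral_sq_mul_exp_apply hsupp hinv hn i j).comp
    (tendsto_id.atTop_mul_const hc')).div_const
      (Real.Gamma ((Fintype.card n : ℝ) / 2) / Real.Gamma (1 / 2))
  rw [div_self (div_ne_zero hΓn hΓ)] at hlim
  refine hlim.congr' ((eventually_gt_atTop 0).mono fun s hs => ?_)
  have hexp : Real.exp (-(s * (1 + c))) = Real.exp (-c * s) / Real.exp s := by
    rw [← Real.exp_sub]
    ring_nf
  simp only [Function.comp_apply, id, hexp, Real.mul_rpow hs.le hc'.le]
  field_simp

end OrthogonalGroup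

/-- Laplace asymptotics of the moment `∫_{O_N(ℝ)} O_{1,1}² e^{s(1+c)O_{1,1}²} dO`
with respect to the Haar probability measure on the orthogonal group:
`e^{−cs} ∫ O_{1,1}² e^{s(1+c)O_{1,1}²} dO ∼ (Γ(N/2)/Γ(1/2)) e^s / ((1+c)^{(N−1)/2} s^{(N−1)/2})`
as `s → ∞`. -/
theorem stmt_10 (N : ℕ) (hN : 2 ≤ N) (c : ℝ) (hc : -1 < c)
    (μ : Measure (Matrix (Fin N) (Fin N) ℝ)) [IsProbabilityMeasure μ]
    (hμsupp : μ {O | O ∈ Matrix.orthogonalGroup (Fin N) ℝ} = 1)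
    (hμinv : ∀ Q ∈ Matrix.orthogonalGroup (Fin N) ℝ,
        Measure.map (fun O => Q * O) μ = μ) :
    Tendsto
      (fun s : ℝ =>
        (Real.exp (-c * s)
            * ∫ O, (O ⟨0, by omega⟩ ⟨0, by omega⟩) ^ 2
                * Real.exp (s * (1 + c) * (O ⟨0, by omega⟩ ⟨0, by omega⟩) ^ 2) ∂μ)
          / (Real.Gamma ((N : ℝ) / 2) / Real.Gamma (1 / 2) * Real.exp s
              / ((1 + c) ^ (((N : ℝ) - 1) / 2) * s ^ (((N : ℝ) - 1) / 2))))
      atTop (nhds 1) := by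
  simpa only [Fintype.card_fin] using
    stmt_10_general hc hμsupp hμinv (by rwa [Fintype.card_fin]) ⟨0, by omega⟩ ⟨0, by omega⟩
end

section
/- Let d ≥ 1 be an integer, γ > 0 a real number, and k ≥ 2 an integer with kγ² < 2d. Then ∫_{B(0,1)^k} ∏_{1≤r<l≤k} |u_r − u_l|^{−γ²} du_1⋯du_k < ∞, where B(0,1) is the closed unit ball of ℝ^d and the integration is with respect to Lebesgue measure on (ℝ^d)^k. -/
open MeasureTheory Finset

/-!
Write the product over pairs as `∏ r, (∏ l ≠ r, |u_r - u_l|^{-kγ²/2}) ^ (1/k)`, each pair being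
shared by the two stars centred at its ends. Hölder's inequality with `k` equal exponents reduces
the claim to a single star, whose factors are independent once `u_r` is fixed: integrating out the
leaves leaves a power of `sup_x ∫_B |x - y|^{-kγ²/2} dy`, finite because `kγ²/2 < d`.
-/

open scoped ENNReal

section Holder

variable {ι : Type*} [Fintype ι] [LinearOrder ι] [LocallyFiniteOrderTop ι]
  [LocallyFiniteOrderBot ι]

theorem prod_prod_Ioi_eq_prod_star_rpow {a : ι → ι → ℝ≥0∞} (ha : ∀ i j, a i j = a j i) :
    ∏ i, ∏ j ∈ Ioi i, a i j =
      ∏ i, (∏ j ∈ {i}ᶜ, a i j ^ (Fintype.card ι / 2 : ℝ)) ^ (Fintype.card ι : ℝ)⁻¹ := by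
  have half_mul_half (x : ℝ≥0∞) : x ^ (2⁻¹ : ℝ) * x ^ (2⁻¹ : ℝ) = x := by
    rw [← ENNReal.rpow_add_of_nonneg _ _ (by norm_num) (by norm_num)]
    norm_num
  have star_rpow (i : ι) :
      (∏ j ∈ {i}ᶜ, a i j ^ (Fintype.card ι / 2 : ℝ)) ^ (Fintype.card ι : ℝ)⁻¹ =
        ∏ j ∈ {i}ᶜ, a j i ^ (2⁻¹ : ℝ) := by
    have : Nonempty ι := ⟨i⟩
    rw [← ENNReal.prod_rpow_of_nonneg (by positivity)]
    refine prod_congr rfl fun j _ ↦ ?_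
    rw [← ENNReal.rpow_mul, ha i j]
    congr 1
    field_simp
  simp_rw [star_rpow]
  rw [← prod_prod_Ioi_mul_eq_prod_prod_off_diag fun i j ↦ a i j ^ (2⁻¹ : ℝ)]
  exact prod_congr rfl fun i _ ↦ prod_congr rfl fun j _ ↦ by rw [ha j i, half_mul_half]

theorem lintegral_prod_prod_Ioi_le_prod_lintegral_star [Nonempty ι] {Ω : Type*} [MeasurableSpace Ω]
    {μ : Measure Ω} {f : ι → ι → Ω → ℝ≥0∞} (hf : ∀ i j, AEMeasurable (f i j) μ)
    (hf_symm : ∀ i j, f i j = f j i) :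
    ∫⁻ ω, ∏ i, ∏ j ∈ Ioi i, f i j ω ∂μ ≤
      ∏ i, (∫⁻ ω, ∏ j ∈ {i}ᶜ, f i j ω ^ (Fintype.card ι / 2 : ℝ) ∂μ) ^ (Fintype.card ι : ℝ)⁻¹ := by
  simp_rw [fun ω ↦ prod_prod_Ioi_eq_prod_star_rpow (a := fun i j ↦ f i j ω)
    fun i j ↦ congrFun (hf_symm i j) ω]
  refine ENNReal.lintegral_prod_norm_pow_le univ (fun i _ ↦ ?_) (by simp) fun _ _ ↦ by positivity
  fun_prop

end Holder

section Star

variable {X : Type*} [MeasurableSpace X] {K : X → X → ℝ≥0∞}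

section

variable {ι : Type*} [DecidableEq ι] {ν : ι → Measure X} [∀ i, SigmaFinite (ν i)] {C : ι → ℝ≥0∞}

theorem lmarginal_star_le (hK : Measurable K.uncurry) (hC : ∀ i x, ∫⁻ y, K x y ∂ν i ≤ C i)
    {r : ι} {s : Finset ι} (hr : r ∉ s) (u : ι → X) :
    (∫⋯∫⁻_s, (fun v ↦ ∏ l ∈ s, K (v r) (v l)) ∂ν) u ≤ ∏ l ∈ s, C l := by
  induction s using Finset.induction with
  | empty => simp
  | insert i s hi ih =>
    obtain ⟨hri, hrs⟩ : r ≠ i ∧ r ∉ s := by simpa using hr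
    have integrate_leaf (v : ι → X) :
        ∫⁻ y, ∏ l ∈ insert i s, K (Function.update v i y r) (Function.update v i y l) ∂ν i ≤
          C i * ∏ l ∈ s, K (v r) (v l) := by
      have split_leaf (y : X) :
          ∏ l ∈ insert i s, K (Function.update v i y r) (Function.update v i y l) =
            K (v r) y * ∏ l ∈ s, K (v r) (v l) := by
        rw [prod_insert hi, Function.update_self, Function.update_of_ne hri]
        congr 1
        exact prod_congr rfl fun l hl ↦ by rw [Function.update_of_ne (ne_of_mem_of_not_mem hl hi)]
      simp_rw [split_leaf]
      rw [lintegral_mul_const _ (by fun_prop)]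
      exact mul_le_mul_left (hC i _) _
    calc (∫⋯∫⁻_insert i s, (fun v ↦ ∏ l ∈ insert i s, K (v r) (v l)) ∂ν) u
        = (∫⋯∫⁻_s, (fun v ↦ ∫⁻ y, ∏ l ∈ insert i s,
            K (Function.update v i y r) (Function.update v i y l) ∂ν i) ∂ν) u := by
          rw [lmarginal_insert' _ (by fun_prop) hi]
      _ ≤ (∫⋯∫⁻_s, (fun v ↦ C i * ∏ l ∈ s, K (v r) (v l)) ∂ν) u :=
          lmarginal_mono integrate_leaf u
      _ = C i * (∫⋯∫⁻_s, (fun v ↦ ∏ l ∈ s, K (v r) (v l)) ∂ν) u :=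
          lintegral_const_mul _ (by fun_prop)
      _ ≤ ∏ l ∈ insert i s, C l := by
          rw [prod_insert hi]
          gcongr
          exact ih hrs

theorem lintegral_pi_star_le [Fintype ι] (hK : Measurable K.uncurry)
    (hC : ∀ i x, ∫⁻ y, K x y ∂ν i ≤ C i) (r : ι) :
    ∫⁻ u, ∏ l ∈ {r}ᶜ, K (u r) (u l) ∂Measure.pi ν ≤ (∏ l ∈ {r}ᶜ, C l) * ν r Set.univ := by
  obtain hX | ⟨⟨x⟩⟩ := isEmpty_or_nonempty X
  · have : IsEmpty (ι → X) := ⟨fun u ↦ isEmptyElim (u r)⟩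
    simp
  calc ∫⁻ u, ∏ l ∈ {r}ᶜ, K (u r) (u l) ∂Measure.pi ν
      = ∫⁻ y, (∫⋯∫⁻_{r}ᶜ, (fun v ↦ ∏ l ∈ {r}ᶜ, K (v r) (v l)) ∂ν)
          (Function.update (fun _ ↦ x) r y) ∂ν r := by
        rw [lintegral_eq_lmarginal_univ fun _ ↦ x, lmarginal_erase _ (by fun_prop) (mem_univ r),
          ← compl_singleton]
    _ ≤ ∫⁻ _, ∏ l ∈ {r}ᶜ, C l ∂ν r :=
        lintegral_mono fun _ ↦ lmarginal_star_le hK hC (by simp) _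
    _ = (∏ l ∈ {r}ᶜ, C l) * ν r Set.univ := lintegral_const _

end

theorem lintegral_pi_prod_prod_Ioi_lt_top {ι : Type*} [Fintype ι] [LinearOrder ι]
    [LocallyFiniteOrderTop ι] [LocallyFiniteOrderBot ι] {ν : ι → Measure X}
    [∀ i, IsFiniteMeasure (ν i)] (hK : Measurable K.uncurry) (hK_symm : ∀ x y, K x y = K y x)
    (hKν : ∀ i, ⨆ x, ∫⁻ y, K x y ^ (Fintype.card ι / 2 : ℝ) ∂ν i < ∞) :
    ∫⁻ u, ∏ i, ∏ j ∈ Ioi i, K (u i) (u j) ∂Measure.pi ν < ∞ := by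
  cases isEmpty_or_nonempty ι
  · simp
  have star_lt_top (i : ι) :
      ∫⁻ u, ∏ j ∈ {i}ᶜ, K (u i) (u j) ^ (Fintype.card ι / 2 : ℝ) ∂Measure.pi ν < ∞ :=
    (lintegral_pi_star_le (hK.pow_const _) (fun _ ↦ le_iSup _) i).trans_lt <|
      ENNReal.mul_lt_top (ENNReal.prod_lt_top fun j _ ↦ hKν j) (measure_lt_top _ _)
  calc ∫⁻ u, ∏ i, ∏ j ∈ Ioi i, K (u i) (u j) ∂Measure.pi ν
      ≤ ∏ i, (∫⁻ u, ∏ j ∈ {i}ᶜ, K (u i) (u j) ^ (Fintype.card ι / 2 : ℝ) ∂Measure.pi ν) ^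
          (Fintype.card ι : ℝ)⁻¹ :=
        lintegral_prod_prod_Ioi_le_prod_lintegral_star (f := fun i j (u : ι → X) ↦ K (u i) (u j))
          (fun i j ↦ by fun_prop) fun i j ↦ funext fun u ↦ hK_symm (u i) (u j)
    _ < ∞ := ENNReal.prod_lt_top fun i _ ↦
        ENNReal.rpow_lt_top_of_nonneg (by positivity) (star_lt_top i).ne

end Star

section Riesz

variable {E : Type*} [NormedAddCommGroup E]

/-- The Riesz kernel `|x - y|^{-s}` as an extended nonnegative function. For `s > 0` it takes the
value `0` rather than `∞` on the diagonal, as `0 ^ (-s) = 0` in the reals. -/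
noncomputable def rieszKernel (s : ℝ) (x y : E) : ℝ≥0∞ :=
  ENNReal.ofReal (‖x - y‖ ^ (-s))

theorem rieszKernel_comm (s : ℝ) (x y : E) : rieszKernel s x y = rieszKernel s y x := by
  rw [rieszKernel, norm_sub_rev, rieszKernel]

theorem rieszKernel_rpow (s : ℝ) {t : ℝ} (ht : 0 ≤ t) (x y : E) :
    rieszKernel s x y ^ t = rieszKernel (s * t) x y := by
  rw [rieszKernel, ENNReal.ofReal_rpow_of_nonneg (by positivity) ht,
    ← Real.rpow_mul (norm_nonneg _), neg_mul, rieszKernel]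

variable [MeasurableSpace E] [BorelSpace E]

theorem lintegral_ball_norm_rpow_neg_lt_top [NormedSpace ℝ E] [FiniteDimensional ℝ E]
    (μ : Measure E) [μ.IsAddHaarMeasure] {s : ℝ} (hs : s < Module.finrank ℝ E) (R : ℝ) :
    ∫⁻ w in Metric.ball (0 : E) R, ENNReal.ofReal (‖w‖ ^ (-s)) ∂μ < ∞ := by
  obtain _ | _ := subsingleton_or_nontrivial E
  · simpa [Subsingleton.elim _ (0 : E)] using
      ENNReal.mul_lt_top ENNReal.ofReal_lt_top measure_ball_lt_top
  refine (integrableOn_ball_of_norm_le_rpow (C := 1) Module.finrank_pos hs (.of_forall fun w ↦ ?_)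
    (Measurable.aestronglyMeasurable (by fun_prop))).lintegral_lt_top
  rw [one_mul, Real.norm_of_nonneg (by positivity)]

theorem measurable_rieszKernel [SecondCountableTopology E] (s : ℝ) :
    Measurable (rieszKernel s : E → E → ℝ≥0∞).uncurry := by
  unfold rieszKernel Function.uncurry
  fun_prop

theorem setLIntegral_rieszKernel_le (μ : Measure E) [μ.IsAddLeftInvariant]
    [μ.IsNegInvariant] {s : ℝ} (hs : 0 ≤ s) (A : Set E) (x : E) :
    ∫⁻ y in A, rieszKernel s x y ∂μ ≤
      ∫⁻ w in Metric.ball (0 : E) 1, ENNReal.ofReal (‖w‖ ^ (-s)) ∂μ + μ A := by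
  set near : E → ℝ≥0∞ := (Metric.ball 0 1).indicator fun w ↦ ENNReal.ofReal (‖w‖ ^ (-s))
  have kernel_le (y : E) : rieszKernel s x y ≤ near (x - y) + 1 := by
    by_cases hy : x - y ∈ Metric.ball 0 1
    · simp [near, hy, rieszKernel]
    · rw [mem_ball_zero_iff, not_lt] at hy
      exact le_add_left (ENNReal.ofReal_le_one.2 <|
        Real.rpow_le_one_of_one_le_of_nonpos hy (neg_nonpos.2 hs))
  calc ∫⁻ y in A, rieszKernel s x y ∂μ
      ≤ ∫⁻ y in A, (near (x - y) + 1) ∂μ := lintegral_mono kernel_le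
    _ = ∫⁻ y in A, near (x - y) ∂μ + μ A := by
      rw [lintegral_add_right _ measurable_const, setLIntegral_one]
    _ ≤ ∫⁻ y, near (x - y) ∂μ + μ A := by
      gcongr
      exact Measure.restrict_le_self
    _ = ∫⁻ w in Metric.ball (0 : E) 1, ENNReal.ofReal (‖w‖ ^ (-s)) ∂μ + μ A := by
      rw [lintegral_sub_left_eq_self near x, lintegral_indicator measurableSet_ball]

end Riesz

theorem stmt_13_general {E : Type*} [NormedAddCommGroup E] [NormedSpace ℝ E]
    [FiniteDimensional ℝ E] [MeasurableSpace E] [BorelSpace E] (μ : Measure E) [μ.IsAddHaarMeasure]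
    {ι : Type*} [Fintype ι] [LinearOrder ι] [LocallyFiniteOrderTop ι] [LocallyFiniteOrderBot ι]
    {A : ι → Set E} (hA : ∀ i, μ (A i) ≠ ∞) {p : ℝ} (hp₀ : 0 ≤ p)
    (hp : Fintype.card ι * p < 2 * Module.finrank ℝ E) :
    ∫⁻ u in Set.univ.pi A, ENNReal.ofReal (∏ r, ∏ l with r < l, ‖u r - u l‖ ^ (-p))
      ∂Measure.pi (fun _ : ι ↦ μ) < ∞ := by
  have ofReal_prod (u : ι → E) :
      ENNReal.ofReal (∏ r, ∏ l with r < l, ‖u r - u l‖ ^ (-p)) =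
        ∏ r, ∏ l ∈ Ioi r, rieszKernel p (u r) (u l) := by
    rw [ENNReal.ofReal_prod_of_nonneg fun _ _ ↦ by positivity]
    refine prod_congr rfl fun r _ ↦ ?_
    rw [ENNReal.ofReal_prod_of_nonneg fun _ _ ↦ by positivity, filter_lt_eq_Ioi]
    rfl
  have (i : ι) : IsFiniteMeasure (μ.restrict (A i)) := isFiniteMeasure_restrict.2 (hA i)
  have := FiniteDimensional.proper_real E
  have near_lt_top := lintegral_ball_norm_rpow_neg_lt_top μ (s := p * (Fintype.card ι / 2))
    (by linarith) 1
  simp_rw [ofReal_prod]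
  rw [Measure.restrict_pi_pi]
  refine lintegral_pi_prod_prod_Ioi_lt_top (measurable_rieszKernel p) (rieszKernel_comm p)
    fun i ↦ (iSup_le fun x ↦ ?_).trans_lt (ENNReal.add_lt_top.2 ⟨near_lt_top, (hA i).lt_top⟩)
  simp_rw [rieszKernel_rpow p (t := Fintype.card ι / 2) (by positivity)]
  exact setLIntegral_rieszKernel_le μ (by positivity) (A i) x

/-- Finiteness of the `k`-point Riesz-type integral over unit balls:
if `k γ² < 2d` then `∫_{B(0,1)^k} ∏_{r<l} |u_r − u_l|^{−γ²} du < ∞`. -/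
theorem stmt_13 (d : ℕ) (hd : 1 ≤ d) (γ : ℝ) (hγ : 0 < γ) (k : ℕ) (hk : 2 ≤ k)
    (hkγ : k * γ ^ 2 < 2 * d) :
    (∫⁻ u : Fin k → EuclideanSpace ℝ (Fin d) in
        Set.univ.pi fun _ => Metric.closedBall (0 : EuclideanSpace ℝ (Fin d)) 1,
        ENNReal.ofReal
          (∏ r, ∏ l ∈ Finset.univ.filter fun l => r < l,
            ‖u r - u l‖ ^ (-(γ ^ 2)))) < ⊤ :=
  stmt_13_general volume (fun _ ↦ measure_closedBall_lt_top.ne) (sq_nonneg γ) (by simpa using hkγ)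
end
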